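/- arXiv:1607.07174 — 2 statements merged into one kernel-verified Lean document; each statement's English description precedes it below -/
import Mathlib

section
/- Let C be a class of finite simple graphs of bounded expansion. Then for each positive integer k there exists a constant c_k (depending only on k and C) such that every graph G in C satisfies f_k(G) ≤ c_k. -/
open scoped Classical
open scoped Function

namespace InducedArboricity

/-- The edges of the subgraph of `G` induced by vertex set `S`, viewed as edges of `G`. -/
def forestEdges {V : Type*} (G : SimpleGraph V) (S : Set V) : Set (Sym2 V) :=
  {e | e ∈ G.edgeSet ∧ ∀ x ∈ e, x ∈ S}

/-- The number of edges of the connected component of `v` in `H`. -/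
noncomputable def compEdgeCount {W : Type*} (H : SimpleGraph W) (v : W) : ℕ :=
  {e | e ∈ H.edgeSet ∧ ∀ x ∈ e, H.Reachable v x}.ncard

/-- `S` induces a `k`-strong forest in `G`: the induced subgraph is acyclic and each of its
connected components has at least `k` edges. -/
def IsStrongForest {V : Type*} (G : SimpleGraph V) (k : ℕ) (S : Set V) : Prop :=
  (G.induce S).IsAcyclic ∧ ∀ v : S, k ≤ compEdgeCount (G.induce S) v

/-- An edge `e` of `G` is `k`-valid if it lies in some `k`-strong forest of `G`. -/
def KValid {V : Type*} (G : SimpleGraph V) (k : ℕ) (e : Sym2 V) : Prop :=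
  ∃ S : Set V, IsStrongForest G k S ∧ e ∈ forestEdges G S

/-- The `k`-strong induced arboricity: the least number of `k`-strong forests of `G`
covering all `k`-valid edges of `G`. -/
noncomputable def fStrong {V : Type*} (G : SimpleGraph V) (k : ℕ) : ℕ :=
  sInf {N | ∃ F : Fin N → Set V,
    (∀ i, IsStrongForest G k (F i)) ∧
    ∀ e : Sym2 V, KValid G k e → ∃ i, e ∈ forestEdges G (F i)}

/-- `G` is a `d`-shallow minor of `H`. -/
def IsShallowMinor {V W : Type*} (d : ℕ) (G : SimpleGraph V) (H : SimpleGraph W) : Prop :=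
  ∃ B : V → Set W,
    Pairwise (Disjoint on B) ∧
    (∀ v, ∃ c : B v, ∀ y : B v,
      (H.induce (B v)).Reachable c y ∧ (H.induce (B v)).dist c y ≤ d) ∧
    (∀ u v, G.Adj u v → ∃ x ∈ B u, ∃ y ∈ B v, H.Adj x y)

/-- A class of finite simple graphs, one set of graphs for each number of vertices. -/
def GraphClass : Type :=
  ∀ n : ℕ, Set (SimpleGraph (Fin n))

/-- A class of graphs has bounded expansion if for every `d` there is a constant `a` such that
every `d`-shallow minor of a member of the class has at most `a` times as many edges
as vertices. -/
def BoundedExpansion (C : GraphClass) : Prop :=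
  ∀ d : ℕ, ∃ a : ℕ, ∀ (m : ℕ) (G : SimpleGraph (Fin m)),
    (∃ n : ℕ, ∃ H ∈ C n, IsShallowMinor d G H) → G.edgeSet.ncard ≤ a * m

/-- A class of graphs is nowhere dense if for every `d` some graph is not a `d`-shallow minor
of any member of the class. -/
def NowhereDense (C : GraphClass) : Prop :=
  ∀ d : ℕ, ∃ (m : ℕ) (G : SimpleGraph (Fin m)), ¬ ∃ n : ℕ, ∃ H ∈ C n, IsShallowMinor d G H

/-- The closed neighborhood of `v` in `G`. -/
def closedNbr {V : Type*} (G : SimpleGraph V) (v : V) : Set V :=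
  insert v (G.neighborSet v)

/-- The sum of the labels over the closed neighborhood of `v`. -/
noncomputable def closedNbrSum {V : Type*} [Fintype V] (G : SimpleGraph V)
    (f : V → ℕ) (v : V) : ℕ :=
  ∑ x : V, if x ∈ closedNbr G v then f x else 0

/-- A labeling is distinguishing if adjacent vertices with different closed neighborhoods
receive different label sums over their closed neighborhoods. -/
def Distinguishing {V : Type*} [Fintype V] (G : SimpleGraph V) (f : V → ℕ) : Prop :=
  ∀ u v : V, G.Adj u v → closedNbr G u ≠ closedNbr G v →
    closedNbrSum G f u ≠ closedNbrSum G f v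

/-- The adjacent closed vertex-distinguishing number of `G`. -/
noncomputable def disNumber {V : Type*} [Fintype V] (G : SimpleGraph V) : ℕ :=
  sInf {L | 1 ≤ L ∧ ∃ f : V → ℕ, (∀ v, 1 ≤ f v ∧ f v ≤ L) ∧ Distinguishing G f}

/-- A proper coloring in which any two color classes together induce a forest. -/
def IsAcyclicColoring {V : Type*} (G : SimpleGraph V) {m : ℕ} (c : V → Fin m) : Prop :=
  (∀ u v : V, G.Adj u v → c u ≠ c v) ∧
  ∀ i j : Fin m, (G.induce {v | c v = i ∨ c v = j}).IsAcyclic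

/-- The acyclic chromatic number of `G`. -/
noncomputable def chiAcyc {V : Type*} (G : SimpleGraph V) : ℕ :=
  sInf {m | ∃ c : V → Fin m, IsAcyclicColoring G c}

/-- The edge arboricity of `G`: the least number of (not necessarily induced) forests
covering all edges of `G`. -/
noncomputable def arboricity {V : Type*} (G : SimpleGraph V) : ℕ :=
  sInf {N | ∃ F : Fin N → SimpleGraph V,
    (∀ i, F i ≤ G ∧ (F i).IsAcyclic) ∧
    ∀ e ∈ G.edgeSet, ∃ i, e ∈ (F i).edgeSet}

/-- `G` admits a tree decomposition of width at most `t`. -/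
def HasTreewidthAtMost {V : Type*} (G : SimpleGraph V) (t : ℕ) : Prop :=
  ∃ (ι : Type) (T : SimpleGraph ι) (B : ι → Finset V),
    T.IsTree ∧
    (∀ e ∈ G.edgeSet, ∃ i, ∀ x ∈ e, x ∈ B i) ∧
    (∀ v : V, (T.induce {i | v ∈ B i}).Connected) ∧
    (∀ i, (B i).card ≤ t + 1)

/-- The tree-width of `G`. -/
noncomputable def treewidth {V : Type*} (G : SimpleGraph V) : ℕ :=
  sInf {t | HasTreewidthAtMost G t}

/-- `G` has tree-depth at most `d`: there is a "forest order" on the vertices (the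
ancestor order of a rooted spanning forest) in which ancestor sets are chains of at most
`d` vertices and endpoints of edges of `G` are comparable.  Equivalently, every connected
component of `G` is a subgraph of the transitive closure of a rooted tree of depth `d`. -/
def HasTreedepthAtMost {V : Type*} (G : SimpleGraph V) (d : ℕ) : Prop :=
  ∃ le : V → V → Prop, IsPartialOrder V le ∧
    (∀ v : V, IsChain le {u | le u v}) ∧
    (∀ u v : V, G.Adj u v → le u v ∨ le v u) ∧
    (∀ v : V, {u | le u v}.ncard ≤ d)

/-- The tree-depth of `G`. -/
noncomputable def treedepth {V : Type*} (G : SimpleGraph V) : ℕ :=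
  sInf {d | HasTreedepthAtMost G d}

/-- `G` is a minor of `H`, witnessed by disjoint connected branch sets. -/
def IsMinorOf {V W : Type*} (G : SimpleGraph V) (H : SimpleGraph W) : Prop :=
  ∃ B : V → Set W,
    Pairwise (Disjoint on B) ∧
    (∀ v, (B v).Nonempty) ∧
    (∀ v, (H.induce (B v)).Connected) ∧
    (∀ u v, G.Adj u v → ∃ x ∈ B u, ∃ y ∈ B v, H.Adj x y)

/-- A class of graphs closed under taking minors. -/
def MinorClosed (C : GraphClass) : Prop :=
  ∀ (m n : ℕ) (G : SimpleGraph (Fin m)) (H : SimpleGraph (Fin n)),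
    H ∈ C n → IsMinorOf G H → G ∈ C m

/-- Planarity, via Wagner's characterization: no `K₅` and no `K₃,₃` minor. -/
def IsPlanar {V : Type*} (G : SimpleGraph V) : Prop :=
  ¬ IsMinorOf (SimpleGraph.completeGraph (Fin 5)) G ∧
  ¬ IsMinorOf (completeBipartiteGraph (Fin 3) (Fin 3)) G


/-! ### Basic notions -/

/-- Reachability inside the vertex set `T`. -/
def RT {V : Type*} (G : SimpleGraph V) (T : Set V) : V → V → Prop :=
  Relation.ReflTransGen (fun a b => G.Adj a b ∧ a ∈ T ∧ b ∈ T)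

/-- The set `T` induces a connected (or empty) subgraph. -/
def Conn {V : Type*} (G : SimpleGraph V) (T : Set V) : Prop :=
  ∀ x ∈ T, ∀ y ∈ T, RT G T x y

section Basic

variable {V : Type*} {G : SimpleGraph V}

lemma RT.refl {T : Set V} (x : V) : RT G T x x := Relation.ReflTransGen.refl

lemma RT.trans {T : Set V} {x y z : V} (h : RT G T x y) (h' : RT G T y z) : RT G T x z :=
  Relation.ReflTransGen.trans h h'

lemma RT.mono {S T : Set V} (hST : S ⊆ T) {x y : V} (h : RT G S x y) : RT G T x y := by
  induction h with
  | refl => exact RT.refl _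
  | tail _ hbc ih => exact ih.trans (.single ⟨hbc.1, hST hbc.2.1, hST hbc.2.2⟩)

lemma RT.symm {T : Set V} {x y : V} (h : RT G T x y) : RT G T y x := by
  induction h with
  | refl => exact RT.refl _
  | tail _ hbc ih =>
    exact Relation.ReflTransGen.head ⟨hbc.1.symm, hbc.2.2, hbc.2.1⟩ ih

lemma RT.single {T : Set V} {x y : V} (h : G.Adj x y) (hx : x ∈ T) (hy : y ∈ T) : RT G T x y :=
  Relation.ReflTransGen.single ⟨h, hx, hy⟩

lemma RT.mem {T : Set V} {x y : V} (h : RT G T x y) (hx : x ∈ T) : y ∈ T := by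
  induction h with
  | refl => exact hx
  | tail _ hbc _ => exact hbc.2.2

lemma RT.eq_or_mem {T : Set V} {x y : V} (h : RT G T x y) : x = y ∨ (x ∈ T ∧ y ∈ T) := by
  rcases Relation.ReflTransGen.cases_head h with h | ⟨c, hc, _⟩
  · exact Or.inl h
  · exact Or.inr ⟨hc.2.1, RT.mem h hc.2.1⟩

/-- The component of `a` in `T` is connected. -/
lemma conn_comp (T : Set V) (a : V) : Conn G {z | RT G T a z} := by
  have key : ∀ x, RT G T a x → RT G {z | RT G T a z} a x := by
    intro x hx
    induction hx with
    | refl => exact RT.refl _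
    | @tail b c hab hbc ih =>
      exact ih.trans (RT.single hbc.1 hab (Relation.ReflTransGen.tail hab hbc))
  intro x hx y hy
  exact (key x hx).symm.trans (key y hy)

lemma conn_of_center {T : Set V} (r : V) (h : ∀ x ∈ T, RT G T r x) : Conn G T :=
  fun x hx y hy => (h x hx).symm.trans (h y hy)

lemma RT.of_walk {T : Set V} {x y : V} (w : G.Walk x y) (hw : ∀ z ∈ w.support, z ∈ T) :
    RT G T x y := by
  induction w with
  | nil => exact RT.refl _
  | @cons a b c h p ih =>
    have h1 : a ∈ T := hw _ (by simp)
    have h2 : b ∈ T := hw _ (by simp)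
    exact (RT.single h h1 h2).trans (ih (fun z hz => hw z (by simp [hz])))

lemma RT.reachable {T : Set V} {x y : V} (h : RT G T x y) (hx : x ∈ T) (hy : y ∈ T) :
    (G.induce T).Reachable ⟨x, hx⟩ ⟨y, hy⟩ := by
  induction h with
  | refl => exact SimpleGraph.Reachable.refl _
  | @tail b c hab hbc ih =>
    refine (ih hbc.2.1).trans (SimpleGraph.Adj.reachable ?_)
    simpa using hbc.1

lemma RT.of_reachable {T : Set V} {x y : T} (h : (G.induce T).Reachable x y) :
    RT G T x y := by
  obtain ⟨w⟩ := h
  induction w with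
  | nil => exact RT.refl _
  | @cons a b c h p ih =>
    exact (RT.single (by simpa using h) a.2 b.2).trans ih

lemma acyc_iff (S : Set V) : (G.induce S).IsAcyclic ↔
    ∀ (v : V) (c : G.Walk v v), c.IsCycle → ¬ ∀ x ∈ c.support, x ∈ S := by
  constructor
  · intro h v c hc hS
    have h1 := SimpleGraph.Walk.map_induce c hS
    apply h (c.induce S hS)
    rw [← SimpleGraph.Walk.isCycle_map_iff_of_injective
      (f := (SimpleGraph.Embedding.induce (G := G) S).toHom)
      (SimpleGraph.Embedding.induce (G := G) S).injective]
    rw [h1]; exact hc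
  · intro h v c hc
    refine h ((SimpleGraph.Embedding.induce (G := G) S).toHom v) (c.map (SimpleGraph.Embedding.induce (G := G) S).toHom) ?_ ?_
    · exact (SimpleGraph.Walk.isCycle_map_iff_of_injective
        (SimpleGraph.Embedding.induce (G := G) S).injective).2 hc
    · intro x hx
      rw [SimpleGraph.Walk.support_map] at hx
      obtain ⟨y, _, rfl⟩ := List.mem_map.1 hx
      exact y.2

lemma acyc_mono {S T : Set V} (h : S ⊆ T) (hT : (G.induce T).IsAcyclic) :
    (G.induce S).IsAcyclic := by
  rw [acyc_iff] at hT ⊢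
  exact fun v c hc hS => hT v c hc (fun x hx => h (hS x hx))

lemma acyc_union_aux {ι : Type*} {S : ι → Set V} {Z : Set V}
    (hZS : ∀ z ∈ Z, ∀ i, z ∈ S i)
    (hsep : ∀ i j, i ≠ j → ∀ x ∈ S i, x ∉ Z → ∀ y ∈ S j, y ∉ Z → x ≠ y ∧ ¬ G.Adj x y)
    {a b : V} (p : G.Walk a b) (hp : p.IsPath) (hU : ∀ x ∈ p.support, ∃ i, x ∈ S i)
    (hpZ : ∀ x ∈ p.support, x ∈ Z → x = b) (i : ι) (hai : a ∈ S i) (haZ : a ∉ Z) :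
    ∀ x ∈ p.support, x ∈ S i := by
  induction p with
  | nil => intro x hx; simp at hx; rwa [hx]
  | @cons a c b h p ih =>
    have hp' := (SimpleGraph.Walk.cons_isPath_iff _ _).1 hp
    intro x hx
    rw [SimpleGraph.Walk.support_cons, List.mem_cons] at hx
    rcases hx with rfl | hx
    · exact hai
    by_cases hcZ : c ∈ Z
    · have hcb : c = b := hpZ c (by simp) hcZ
      subst hcb
      have : p = .nil := by
        exact (SimpleGraph.Walk.isPath_iff_nil.1 hp'.1).eq_nil
      subst this
      simp at hx
      subst hx
      exact hZS _ hcZ i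
    · obtain ⟨j, hj⟩ := hU c (by simp)
      have hij : j = i := by
        by_contra hne
        exact (hsep i j (Ne.symm hne) a hai haZ c hj hcZ).2 h
      subst hij
      exact ih hp'.1 (fun x hx => hU x (by simp [hx])) (fun x hx => hpZ x (by simp [hx]))
        hj hcZ x hx

/-- A union of acyclic sets which pairwise meet and touch only in at most one common vertex
is acyclic. -/
lemma acyc_union {ι : Type*} {S : ι → Set V} {Z : Set V} (hZ : Z.Subsingleton)
    (hZS : ∀ z ∈ Z, ∀ i, z ∈ S i)
    (hac : ∀ i, (G.induce (S i)).IsAcyclic)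
    (hsep : ∀ i j, i ≠ j → ∀ x ∈ S i, x ∉ Z → ∀ y ∈ S j, y ∉ Z → x ≠ y ∧ ¬ G.Adj x y) :
    (G.induce (⋃ i, S i)).IsAcyclic := by
  rw [acyc_iff]
  -- a cycle which meets `Z` only in its base vertex
  have main : ∀ (v : V) (c : G.Walk v v), c.IsCycle → (∀ x ∈ c.support, x ∈ Z → x = v) →
      ¬ ∀ x ∈ c.support, x ∈ ⋃ i, S i := by
    intro v c hc hcZ hU
    cases c with
    | nil => exact hc.ne_nil rfl
    | @cons _ a _ h p =>
      have hc' := (SimpleGraph.Walk.cons_isCycle_iff _ _).1 hc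
      have haZ : a ∉ Z := fun hh => h.ne (hcZ a (by simp) hh).symm
      have hU' : ∀ x ∈ p.support, ∃ i, x ∈ S i := by
        intro x hx
        simpa using hU x (by simp [hx])
      obtain ⟨i, hi⟩ := hU' a (by simp)
      have := acyc_union_aux hZS hsep p hc'.1 hU' (fun x hx => hcZ x (by simp [hx])) i hi haZ
      refine (acyc_iff _).1 (hac i) v _ hc ?_
      intro x hx
      rw [SimpleGraph.Walk.support_cons, List.mem_cons] at hx
      rcases hx with rfl | hx
      · exact this _ p.end_mem_support
      · exact this _ hx
  intro v c hc hU
  by_cases hz : ∃ z ∈ c.support, z ∈ Z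
  · obtain ⟨z, hzc, hzZ⟩ := hz
    refine main z (c.rotate z hzc) (hc.rotate hzc) (fun x _ hx => hZ hx hzZ) ?_
    intro x hx
    exact hU x (by simpa using hx)
  · push Not at hz
    exact main v c hc (fun x hx hxZ => absurd hxZ (hz x hx)) hU

/-- A criterion for being a `k`-strong forest. -/
lemma isStrongForest_of {V : Type*} [Finite V] {G : SimpleGraph V} {k : ℕ} {S : Set V}
    (hac : (G.induce S).IsAcyclic)
    (h : ∀ v ∈ S, ∃ T ⊆ S, v ∈ T ∧ Conn G T ∧ k + 1 ≤ T.ncard) : IsStrongForest G k S := by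
  refine ⟨hac, ?_⟩
  rintro ⟨v, hv⟩
  obtain ⟨T, hTS, hvT, hT, hcard⟩ := h v hv
  have hconn : (G.induce T).Connected := by
    have : Nonempty T := ⟨⟨v, hvT⟩⟩
    exact ⟨fun x y => RT.reachable (hT x x.2 y y.2) x.2 y.2⟩
  have h1 := hconn.card_vert_le_card_edgeSet_add_one
  rw [Nat.card_coe_set_eq, Nat.card_coe_set_eq] at h1
  have h2 : k ≤ (G.induce T).edgeSet.ncard := by omega
  refine h2.trans ?_
  unfold compEdgeCount
  let φ : T → S := fun x => ⟨x.1, hTS x.2⟩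
  have hφ : Function.Injective φ := by
    intro x y hxy
    have := congrArg Subtype.val hxy
    exact Subtype.ext this
  refine Set.ncard_le_ncard_of_injOn (Sym2.map φ) ?_ ((Sym2.map.injective hφ).injOn)
    (Set.toFinite _)
  intro e he
  induction e with
  | h x y =>
    simp only [SimpleGraph.mem_edgeSet, SimpleGraph.comap_adj] at he
    refine ⟨by simpa using he, ?_⟩
    intro z hz
    have hz' : ∃ w : T, z = φ w := by
      simp only [Sym2.map_mk, Sym2.mem_iff] at hz
      rcases hz with rfl | rfl
      · exact ⟨x, rfl⟩
      · exact ⟨y, rfl⟩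
    obtain ⟨w, rfl⟩ := hz'
    exact RT.reachable ((hT v hvT w w.2).mono hTS) hv (hTS w.2)

lemma fStrong_le {V : Type*} {G : SimpleGraph V} {k : ℕ} {ι : Type} [Fintype ι]
    (F : ι → Set V) (hF : ∀ i, IsStrongForest G k (F i))
    (hcov : ∀ e, KValid G k e → ∃ i, e ∈ forestEdges G (F i)) :
    fStrong G k ≤ Fintype.card ι := by
  apply Nat.sInf_le
  refine ⟨fun i => F ((Fintype.equivFin ι).symm i), fun i => hF _, ?_⟩
  intro e he
  obtain ⟨i, hi⟩ := hcov e he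
  exact ⟨Fintype.equivFin ι i, by simpa using hi⟩

end Basic

/-! ### Valid edges lie in small induced trees -/

section Valid

variable {V : Type*} {G : SimpleGraph V}

lemma conn_insert {T : Set V} (hT : Conn G T) {x z : V} (hx : x ∈ T) (hxz : G.Adj x z) :
    Conn G (insert z T) := by
  apply conn_of_center x
  intro y hy
  rcases hy with rfl | hy
  · exact RT.single hxz (Or.inr hx) (Or.inl rfl)
  · exact (hT x hx y hy).mono (Set.subset_insert _ _)

lemma grow_tree [Finite V] {S : Set V} {u v : V} (huv : G.Adj u v) (hu : u ∈ S) (hv : v ∈ S)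
    (m : ℕ) (hm : 2 ≤ m) :
    m ≤ {z | RT G S u z}.ncard →
      ∃ T ⊆ {z | RT G S u z}, u ∈ T ∧ v ∈ T ∧ Conn G T ∧ T.ncard = m := by
  induction m, hm using Nat.le_induction with
  | base =>
    intro _
    refine ⟨{u, v}, ?_, by simp, by simp, ?_, Set.ncard_pair huv.ne⟩
    · rintro z (rfl | rfl)
      · exact RT.refl _
      · exact RT.single huv hu hv
    · apply conn_of_center u
      rintro z (rfl | rfl)
      · exact RT.refl _
      · exact RT.single huv (by simp) (by simp)
  | succ m hm ih =>
    intro hcard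
    obtain ⟨T, hTC, huT, hvT, hT, hTm⟩ := ih (by omega)
    have : ∃ x ∈ T, ∃ z, z ∉ T ∧ z ∈ S ∧ G.Adj x z := by
      by_contra hcon
      push Not at hcon
      have hsub : {z | RT G S u z} ⊆ T := by
        intro z hz
        induction hz with
        | refl => exact huT
        | @tail b c _ hbc ih =>
          by_contra hc
          exact hcon b ih c hc hbc.2.2 hbc.1
      have := Set.ncard_le_ncard hsub (Set.toFinite _)
      omega
    obtain ⟨x, hx, z, hz, hzS, hxz⟩ := this
    refine ⟨insert z T, ?_, Or.inr huT, Or.inr hvT, conn_insert hT hx hxz, ?_⟩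
    · rintro y (rfl | hy)
      · exact RT.trans (hTC hx) (RT.single hxz (RT.mem (hTC hx) hu) hzS)
      · exact hTC hy
    · rw [Set.ncard_insert_of_notMem hz, hTm]

lemma kvalid_tree [Finite V] {k : ℕ} (hk : 1 ≤ k) {e : Sym2 V} (he : KValid G k e) :
    ∃ u v, e = s(u, v) ∧ G.Adj u v ∧ ∃ T : Set V, u ∈ T ∧ v ∈ T ∧ Conn G T ∧
      (G.induce T).IsAcyclic ∧ T.ncard = k + 1 := by
  obtain ⟨S, ⟨hac, hS⟩, heE, heS⟩ := he
  induction e with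
  | h u v =>
    have huv : G.Adj u v := by simpa using heE
    have hu : u ∈ S := heS u (by simp)
    have hv : v ∈ S := heS v (by simp)
    refine ⟨u, v, rfl, huv, ?_⟩
    set C : Set V := {z | RT G S u z} with hC
    have hCS : C ⊆ S := fun z hz => RT.mem hz hu
    have huC : u ∈ C := RT.refl _
    have hCc : Conn G C := conn_comp S u
    have hcard : k + 1 ≤ C.ncard := by
      have hconn : (G.induce C).IsTree := by
        have : Nonempty C := ⟨⟨u, huC⟩⟩
        exact ⟨⟨fun x y => RT.reachable (hCc x x.2 y y.2) x.2 y.2⟩, acyc_mono hCS hac⟩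
      have : Fintype C := Fintype.ofFinite _
      have : Fintype (G.induce C).edgeSet := Fintype.ofFinite _
      have h1 := hconn.card_edgeFinset
      have h2 : (G.induce C).edgeSet.ncard + 1 = C.ncard := by
        rw [Set.ncard_eq_toFinset_card', ← Nat.card_coe_set_eq, Nat.card_eq_fintype_card, ← h1]
        rfl
      have h3 := hS ⟨u, hu⟩
      unfold compEdgeCount at h3
      let φ : C → S := fun x => ⟨x.1, hCS x.2⟩
      have h4 : {e | e ∈ (G.induce S).edgeSet ∧ ∀ x ∈ e, (G.induce S).Reachable ⟨u, hu⟩ x} ⊆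
          (Sym2.map φ) '' (G.induce C).edgeSet := by
        intro e he
        induction e with
        | h x y =>
          have hx : x.1 ∈ C := RT.of_reachable (he.2 x (by simp))
          have hy : y.1 ∈ C := RT.of_reachable (he.2 y (by simp))
          refine ⟨s(⟨x.1, hx⟩, ⟨y.1, hy⟩), ?_, ?_⟩
          · simpa using he.1
          · simp [φ]
      have h5 := (Set.ncard_le_ncard h4 (Set.toFinite _)).trans
        (Set.ncard_image_le (Set.toFinite _))
      omega
    obtain ⟨T, hTC, huT, hvT, hT, hTm⟩ := grow_tree huv hu hv (k + 1) (by omega) hcard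
    exact ⟨T, huT, hvT, hT, acyc_mono (hTC.trans hCS) hac, hTm⟩

end Valid

/-! ### Covering valid edges in graphs with a bounded elimination order -/

/-- An elimination (tree) order on the part `W` of `G`, together with a coloring that is
injective on the chains below each vertex. -/
structure TreeOrd {V : Type*} (G : SimpleGraph V) (W : Set V) (q : ℕ) (col : V → Fin q)
    (le : V → V → Prop) : Prop where
  refl : ∀ x, le x x
  trans : ∀ x y z, le x y → le y z → le x z
  antisymm : ∀ x y, le x y → le y x → x = y
  chain : ∀ x y z, le x z → le y z → le x y ∨ le y x
  adj : ∀ x ∈ W, ∀ y ∈ W, G.Adj x y → le x y ∨ le y x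
  col_inj : ∀ x y z, le x z → le y z → col x = col y → x = y
  min : ∀ T ⊆ W, Conn G T → T.Nonempty → ∃ r ∈ T, ∀ x ∈ T, le r x

section TreeDepth

variable {V : Type*} (G : SimpleGraph V) (W : Set V) (q : ℕ) (col : V → Fin q)
    (le : V → V → Prop) (k : ℕ)

/-- `Q` is an induced tree attached to `r`, otherwise contained in the subtree at `y`. -/
def Piece (r y : V) (Q : Set V) : Prop :=
  r ∈ Q ∧ Q ⊆ W ∧ Conn G Q ∧ (G.induce Q).IsAcyclic ∧ (∀ x ∈ Q, x ≠ r → le y x) ∧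
    ∃ x ∈ Q, x ≠ r

/-- `y` lies above `r` and there is a piece attached to `r` within the subtree at `y`. -/
def Act (r y : V) : Prop := le r y ∧ r ≠ y ∧ ∃ Q, Piece G W le r y Q

/-- The active vertices of color `i` for `r`. -/
def ActSet (r : V) (i : Fin q) : Set V := {y | Act G W le r y ∧ col y = i}

/-- A step to an active vertex whose color class is small. -/
def Step (r y : V) : Prop := Act G W le r y ∧ (ActSet G W q col le r (col y)).ncard < k

/-- Vertices reachable by at most `s` steps. -/
def Dst : ℕ → V → Set V
  | 0, z => {z}
  | s + 1, z => {z} ∪ ⋃ y ∈ {y | Step G W q col le k z y}, Dst s y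

/-- Bound on the number of vertices reachable by few steps. -/
def dstBound (q k : ℕ) : ℕ → ℕ
  | 0 => 1
  | s + 1 => 1 + (q * k) * dstBound q k s

variable {G W q col le k}

lemma dst_self (s : ℕ) (z : V) : z ∈ Dst G W q col le k s z := by
  cases s with
  | zero => exact rfl
  | succ s => exact Or.inl rfl

lemma dst_succ {s : ℕ} {r z v : V} (h : Step G W q col le k r z)
    (hv : v ∈ Dst G W q col le k s z) : v ∈ Dst G W q col le k (s + 1) r := by
  refine Or.inr ?_
  simp only [Set.mem_iUnion]
  exact ⟨z, h, hv⟩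

lemma dst_mono_succ (s : ℕ) : ∀ z, Dst G W q col le k s z ⊆ Dst G W q col le k (s + 1) z := by
  induction s with
  | zero => rintro z x rfl; exact Or.inl rfl
  | succ s ih =>
    rintro z x (h | h)
    · exact Or.inl h
    · simp only [Set.mem_iUnion] at h
      obtain ⟨y, hy, hx⟩ := h
      exact dst_succ hy (ih y hx)

lemma dst_mono {s t : ℕ} (h : s ≤ t) (z : V) :
    Dst G W q col le k s z ⊆ Dst G W q col le k t z := by
  induction t, h using Nat.le_induction with
  | base => exact subset_rfl
  | succ t _ ih => exact ih.trans (dst_mono_succ t z)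

lemma step_card [Finite V] (r : V) : {y | Step G W q col le k r y}.ncard ≤ q * k := by
  have hsub : {y | Step G W q col le k r y} ⊆
      ⋃ i : Fin q, {y | Step G W q col le k r y ∧ col y = i} := by
    intro y hy
    simp only [Set.mem_iUnion]
    exact ⟨col y, hy, rfl⟩
  refine (Set.ncard_le_ncard hsub (Set.toFinite _)).trans ?_
  have : Fintype V := Fintype.ofFinite V
  have hU : (⋃ i : Fin q, {y | Step G W q col le k r y ∧ col y = i}) =
      ↑((Finset.univ : Finset (Fin q)).biUnion
        (fun i => {y | Step G W q col le k r y ∧ col y = i}.toFinset)) := by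
    ext x; simp
  rw [hU, Set.ncard_coe_finset]
  refine Finset.card_biUnion_le.trans ?_
  simp only [← Set.ncard_eq_toFinset_card']
  calc ∑ i : Fin q, {y | Step G W q col le k r y ∧ col y = i}.ncard
      ≤ ∑ i : Fin q, k := by
        apply Finset.sum_le_sum
        intro i _
        by_cases h : ∃ y, Step G W q col le k r y ∧ col y = i
        · obtain ⟨y, hy, hi⟩ := h
          have : {y | Step G W q col le k r y ∧ col y = i} ⊆ ActSet G W q col le r i :=
            fun x hx => ⟨hx.1.1, hx.2⟩
          refine (Set.ncard_le_ncard this (Set.toFinite _)).trans ?_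
          have h2 := hy.2
          rw [hi] at h2
          exact h2.le
        · have : {y | Step G W q col le k r y ∧ col y = i} = ∅ := by
            ext y
            simp only [Set.mem_ofPred_eq, Set.mem_empty_iff_false, iff_false]
            exact fun hy => h ⟨y, hy⟩
          rw [this]; simp
    _ = q * k := by simp

lemma dst_card [Finite V] (s : ℕ) : ∀ z, (Dst G W q col le k s z).ncard ≤ dstBound q k s := by
  have : Fintype V := Fintype.ofFinite V
  induction s with
  | zero => intro z; simp [Dst, dstBound]
  | succ s ih =>
    intro z
    simp only [Dst, dstBound]
    refine (Set.ncard_union_le _ _).trans ?_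
    rw [Set.ncard_singleton]
    gcongr
    have h1 : (⋃ y ∈ {y | Step G W q col le k z y}, Dst G W q col le k s y) =
        ↑((Finset.univ.filter (fun y => Step G W q col le k z y)).biUnion
          (fun y => (Dst G W q col le k s y).toFinset)) := by
      ext x; simp
    rw [h1, Set.ncard_coe_finset]
    refine (Finset.card_biUnion_le_card_mul _ _ (dstBound q k s) ?_).trans ?_
    · intro y _
      rw [← Set.ncard_eq_toFinset_card']
      exact ih y
    · gcongr
      have h2 := step_card (G := G) (W := W) (col := col) (le := le) (k := k) z
      rw [Set.ncard_eq_toFinset_card'] at h2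
      simpa using h2

lemma sep_of_col (hO : TreeOrd G W q col le) {y y' x x' : V} (hc : col y = col y') (hne : y ≠ y') (hx : le y x)
    (hx' : le y' x') (hxW : x ∈ W) (hxW' : x' ∈ W) : x ≠ x' ∧ ¬ G.Adj x x' := by
  constructor
  · rintro rfl
    exact hne (hO.col_inj _ _ _ hx hx' hc)
  · intro h
    rcases hO.adj x hxW x' hxW' h with h | h
    · exact hne (hO.col_inj _ _ _ (hO.trans _ _ _ hx h) hx' hc)
    · exact hne (hO.col_inj _ _ _ hx (hO.trans _ _ _ hx' h) hc)

lemma exists_piece (hO : TreeOrd G W q col le) {T : Set V} (hT : Conn G T) (hTW : T ⊆ W) (hac : (G.induce T).IsAcyclic)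
    {ρ u v y : V} (hρT : ρ ∈ T) (hu : u ∈ T) (hv : v ∈ T)
    (huv : G.Adj u v) (hρy : le ρ y) (hne : y ≠ ρ) (hyv : le y v) :
    ∃ r ∈ T, le r y ∧ r ≠ y ∧ ∃ Q, Piece G W le r y Q ∧ u ∈ Q ∧ v ∈ Q := by
  set P : Set V := {z | z ∈ T ∧ le y z} with hP
  have hvP : v ∈ P := ⟨hv, hyv⟩
  have hρP : ρ ∉ P := fun h => hne (hO.antisymm _ _ h.2 hρy)
  set D : Set V := {z | RT G P v z} with hD
  have hDP : D ⊆ P := fun z hz => RT.mem hz hvP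
  have hvD : v ∈ D := RT.refl _
  have hDc : Conn G D := conn_comp P v
  have key : ∃ r ∈ T, r ∉ P ∧ (∃ z ∈ D, G.Adj z r) ∧ (u = r ∨ u ∈ D) := by
    by_cases huP : u ∈ P
    · have huD : u ∈ D := RT.single huv.symm hvP huP
      by_contra hcon
      push Not at hcon
      apply hρP
      have : RT G T v ρ := hT v hv ρ hρT
      apply hDP
      clear hρP hρy hne
      induction this with
      | refl => exact hvD
      | @tail b c _ hbc ih =>
        by_contra hc
        refine (hcon c hbc.2.2 ?_ ⟨b, ih hbc.2.1, hbc.1⟩).2 huD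
        intro hcP
        exact hc (RT.trans (ih hbc.2.1) (RT.single hbc.1 (hDP (ih hbc.2.1)) hcP))
    · exact ⟨u, hu, huP, ⟨v, hvD, huv.symm⟩, Or.inl rfl⟩
  obtain ⟨r, hrT, hrP, ⟨z, hzD, hzr⟩, hur⟩ := key
  have hyr : ¬ le y r := fun h => hrP ⟨hrT, h⟩
  have hyz : le y z := (hDP hzD).2
  have hrz : le r z := by
    rcases hO.adj z (hTW (hDP hzD).1) r (hTW hrT) hzr with h | h
    · exact absurd (hO.trans _ _ _ hyz h) hyr
    · exact h
  have hry : le r y := by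
    rcases hO.chain _ _ _ hrz hyz with h | h
    · exact h
    · exact absurd h hyr
  have hrD : r ∉ D := fun h => hrP (hDP h)
  have hsub : insert r D ⊆ T := by
    rintro x (rfl | hx)
    · exact hrT
    · exact (hDP hx).1
  refine ⟨r, hrT, hry, ?_, insert r D, ⟨Or.inl rfl, hsub.trans hTW, conn_insert hDc hzD hzr,
    acyc_mono hsub hac, ?_, v, Or.inr hvD, ?_⟩, ?_, Or.inr hvD⟩
  · rintro rfl; exact hyr (hO.refl _)
  · rintro x (rfl | hx) hxr
    · exact absurd rfl hxr
    · exact (hDP hx).2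
  · rintro rfl; exact hrD hvD
  · rcases hur with rfl | h
    · exact Or.inl rfl
    · exact Or.inr h

lemma chain_card (hO : TreeOrd G W q col le) [Finite V] (v : V) : {u | le u v}.ncard ≤ q := by
  have h : Set.InjOn col {u | le u v} := fun x hx y hy hxy => hO.col_inj _ _ _ hx hy hxy
  have h1 := Set.ncard_le_ncard_of_injOn (t := (Set.univ : Set (Fin q))) col
    (fun _ _ => Set.mem_univ _) h (Set.toFinite _)
  simpa using h1

lemma climb (hO : TreeOrd G W q col le) [Finite V] {T : Set V} (hT : Conn G T) (hTW : T ⊆ W)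
    (hac : (G.induce T).IsAcyclic)
    {ρ u v : V} (hρT : ρ ∈ T) (hρ : ∀ x ∈ T, le ρ x) (hu : u ∈ T) (hv : v ∈ T)
    (huv : G.Adj u v) (m : ℕ) :
    ∀ z, {x | le x z}.ncard = m → le ρ z → le z v → ∀ s, v ∈ Dst G W q col le k s z → s + m ≤ q →
      (v ∈ Dst G W q col le k q ρ) ∨ ∃ r y Q, le r y ∧ r ≠ y ∧ Piece G W le r y Q ∧ u ∈ Q ∧ v ∈ Q ∧
        k ≤ (ActSet G W q col le r (col y)).ncard ∧ v ∈ Dst G W q col le k q y := by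
  induction m using Nat.strong_induction_on with
  | _ m ih =>
    intro z hz hρz hzv s hs hsm
    have hs' : v ∈ Dst G W q col le k q z := dst_mono (by omega) z hs
    by_cases hzρ : z = ρ
    · left; rw [← hzρ]; exact hs'
    obtain ⟨r, hrT, hrz, hne, Q, hQ, huQ, hvQ⟩ :=
      exists_piece hO hT hTW hac hρT hu hv huv hρz hzρ hzv
    by_cases hk : k ≤ (ActSet G W q col le r (col z)).ncard
    · exact Or.inr ⟨r, z, Q, hrz, hne, hQ, huQ, hvQ, hk, hs'⟩
    · have hstep : Step G W q col le k r z := ⟨⟨hrz, hne, Q, hQ⟩, by omega⟩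
      have hlt : {x | le x r}.ncard < m := by
        rw [← hz]
        apply Set.ncard_lt_ncard _ (Set.toFinite _)
        refine ⟨fun x hx => hO.trans _ _ _ hx hrz, fun h => ?_⟩
        exact hne (hO.antisymm _ _ hrz (h (hO.refl z)))
      exact ih _ hlt r rfl (hρ r hrT) (hO.trans _ _ _ hrz hzv) (s + 1) (dst_succ hstep hs)
        (by omega)

lemma enum_cover {α β : Type*} (E : Set α) (hE : E.Finite) (M : ℕ) (hM : E.ncard ≤ M)
    (P : β → Prop) (cov : α → β → Prop) (h : ∀ a ∈ E, ∃ b, P b ∧ cov a b) (h0 : ∃ b, P b) :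
    ∃ g : Fin M → β, (∀ t, P (g t)) ∧ ∀ a ∈ E, ∃ t, cov a (g t) := by
  obtain ⟨b0, hb0⟩ := h0
  have : Fintype E := hE.fintype
  have hc : Fintype.card E ≤ Fintype.card (Fin M) := by
    rw [Fintype.card_fin, ← Nat.card_eq_fintype_card, Nat.card_coe_set_eq]; exact hM
  obtain ⟨ι⟩ := Function.Embedding.nonempty_of_card_le hc
  choose f hf using h
  refine ⟨fun t => if ht : ∃ a : E, ι a = t then f ht.choose.1 ht.choose.2 else b0, ?_, ?_⟩
  · intro t
    by_cases ht : ∃ a : E, ι a = t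
    · simp only [ht, dif_pos]; exact (hf _ _).1
    · simp only [ht, dif_neg, not_false_eq_true]; exact hb0
  · intro a ha
    refine ⟨ι ⟨a, ha⟩, ?_⟩
    have ht : ∃ b : E, ι b = ι ⟨a, ha⟩ := ⟨_, rfl⟩
    have h2 : ht.choose = ⟨a, ha⟩ := ι.injective ht.choose_spec
    beta_reduce
    rw [dif_pos ht]
    have h3 : ∀ b : E, b = ⟨a, ha⟩ → cov a (f b.1 b.2) := by
      rintro b rfl; exact (hf _ _).2
    exact h3 _ h2

lemma edge_card (hO : TreeOrd G W q col le) [Finite V] (z : V) :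
    {p : V × V | p.2 ∈ Dst G W q col le k q z ∧ le p.1 p.2}.ncard ≤ dstBound q k q * q := by
  have h1 := Set.ncard_le_ncard_of_injOn
    (s := {p : V × V | p.2 ∈ Dst G W q col le k q z ∧ le p.1 p.2})
    (t := (Dst G W q col le k q z) ×ˢ (Set.univ : Set (Fin q)))
    (fun p => (p.2, col p.1)) (fun p hp => ⟨hp.1, Set.mem_univ _⟩) ?_ (Set.toFinite _)
  · rw [Set.ncard_prod] at h1
    refine h1.trans ?_
    gcongr
    · exact dst_card q z
    · simp
  · rintro ⟨a, b⟩ h ⟨a', b'⟩ h' heq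
    simp only [Prod.mk.injEq] at heq
    obtain ⟨rfl, hc⟩ := heq
    have := hO.col_inj _ _ _ h.2 h'.2 hc
    simp at this
    rw [this]

lemma conn_iUnion_center {ι : Type*} {S : ι → Set V} {r : V} (hS : ∀ i, Conn G (S i))
    (hr : ∀ i, r ∈ S i) : Conn G (⋃ i, S i) := by
  apply conn_of_center r
  intro x hx
  obtain ⟨i, hi⟩ := Set.mem_iUnion.1 hx
  exact (hS i r (hr i) x hi).mono (Set.subset_iUnion _ _)

lemma cover_good (hO : TreeOrd G W q col le) [Finite V] (g : V → V → Set V)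
    (hg : ∀ r y, Act G W le r y → Piece G W le r y (g r y)) (i j : Fin q) :
    IsStrongForest G k (⋃ r : {r : V // col r = j},
      ⋃ y : {y : V // Act G W le r y ∧ col y = i ∧ k ≤ (ActSet G W q col le r i).ncard},
        g r y) := by
  have hsubW : ∀ r y, Act G W le r y → ∀ x ∈ g r y, x ∈ W ∧ le r x := by
    intro r y h x hx
    refine ⟨(hg r y h).2.1 hx, ?_⟩
    by_cases hxr : x = r
    · rw [hxr]; exact hO.refl _
    · exact hO.trans _ _ _ h.1 ((hg r y h).2.2.2.2.1 x hx hxr)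
  apply isStrongForest_of
  · apply acyc_union (Z := ∅) (by simp) (by simp)
    · rintro ⟨r, hr⟩
      apply acyc_union (Z := {r}) (by simp)
      · rintro z hz ⟨y, hy⟩
        rw [Set.mem_singleton_iff] at hz
        subst hz
        exact (hg _ _ hy.1).1
      · rintro ⟨y, hy⟩
        exact (hg _ _ hy.1).2.2.2.1
      · rintro ⟨y, hy⟩ ⟨y', hy'⟩ hne x hx hxr x' hx' hxr'
        refine sep_of_col hO (y := y) (y' := y') (hy.2.1.trans hy'.2.1.symm) ?_ ?_ ?_ ?_ ?_
        · intro h; exact hne (Subtype.ext h)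
        · exact (hg _ _ hy.1).2.2.2.2.1 x hx hxr
        · exact (hg _ _ hy'.1).2.2.2.2.1 x' hx' hxr'
        · exact (hg _ _ hy.1).2.1 hx
        · exact (hg _ _ hy'.1).2.1 hx'
    · rintro ⟨r, hr⟩ ⟨r', hr'⟩ hne x hx _ x' hx' _
      simp only [Set.mem_iUnion] at hx hx'
      obtain ⟨⟨y, hy⟩, hx⟩ := hx
      obtain ⟨⟨y', hy'⟩, hx'⟩ := hx'
      obtain ⟨h1, h2⟩ := hsubW _ _ hy.1 x hx
      obtain ⟨h1', h2'⟩ := hsubW _ _ hy'.1 x' hx'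
      exact sep_of_col hO (hr.trans hr'.symm) (fun h => hne (Subtype.ext h)) h2 h2' h1 h1'
  · intro v hv
    rw [Set.mem_iUnion] at hv
    obtain ⟨r, hv⟩ := hv
    refine ⟨_, Set.subset_iUnion _ r, hv, ?_, ?_⟩
    · apply conn_iUnion_center (r := r.1)
      · intro y; exact (hg _ _ y.2.1).2.2.1
      · intro y; exact (hg _ _ y.2.1).1
    · obtain ⟨y0, hy0⟩ := Set.mem_iUnion.1 hv
      have hk := y0.2.2.2
      set X : Set V := ⋃ y : {y : V // Act G W le r y ∧ col y = i ∧
        k ≤ (ActSet G W q col le r i).ncard}, g r y with hX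
      have hrX : r.1 ∈ X := Set.mem_iUnion.2 ⟨y0, (hg _ _ y0.2.1).1⟩
      have hch : ∀ y, ∃ x, y ∈ ActSet G W q col le r i → x ∈ g r y ∧ x ≠ r.1 := by
        intro y
        by_cases hy : y ∈ ActSet G W q col le r i
        · obtain ⟨x, hx, hxr⟩ := (hg _ _ hy.1).2.2.2.2.2
          exact ⟨x, fun _ => ⟨hx, hxr⟩⟩
        · exact ⟨y, fun h => absurd h hy⟩
      choose h hh using hch
      have hle : (ActSet G W q col le r i).ncard ≤ (X \ {r.1}).ncard := by
        refine Set.ncard_le_ncard_of_injOn h ?_ ?_ (Set.toFinite _)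
        · intro y hy
          exact ⟨Set.mem_iUnion.2 ⟨⟨y, hy.1, hy.2, hk⟩, (hh y hy).1⟩, (hh y hy).2⟩
        · intro y hy y' hy' heq
          have h1 := (hg _ _ hy.1).2.2.2.2.1 _ (hh y hy).1 (hh y hy).2
          have h2 := (hg _ _ hy'.1).2.2.2.2.1 _ (hh y' hy').1 (hh y' hy').2
          rw [← heq] at h2
          exact hO.col_inj _ _ _ h1 h2 (hy.2.trans hy'.2.symm)
      have := Set.ncard_sdiff_singleton_add_one hrX (Set.toFinite _)
      omega

lemma cover_bad (hO : TreeOrd G W q col le) [Finite V] (g : V → Set V)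
    (hg : ∀ r, (∀ x ∈ g r, le r x) ∧ g r ⊆ W ∧ Conn G (g r) ∧ (G.induce (g r)).IsAcyclic ∧
      ((g r).Nonempty → k + 1 ≤ (g r).ncard)) (c : Fin q) :
    IsStrongForest G k (⋃ r : {r : V // col r = c}, g r) := by
  apply isStrongForest_of
  · apply acyc_union (Z := ∅) (by simp) (by simp)
    · intro r; exact (hg r).2.2.2.1
    · rintro ⟨r, hr⟩ ⟨r', hr'⟩ hne x hx _ x' hx' _
      exact sep_of_col hO (hr.trans hr'.symm) (fun h => hne (Subtype.ext h))
        ((hg r).1 x hx) ((hg r').1 x' hx') ((hg r).2.1 hx) ((hg r').2.1 hx')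
  · intro v hv
    rw [Set.mem_iUnion] at hv
    obtain ⟨r, hv⟩ := hv
    exact ⟨_, Set.subset_iUnion _ r, hv, (hg r).2.2.1, (hg r).2.2.2.2 ⟨v, hv⟩⟩

/-- Index type for the forests. -/
abbrev IdxA (q k : ℕ) : Type :=
  (Fin q × Fin q × Fin (dstBound q k q * q)) ⊕ (Fin q × Fin (dstBound q k q * q))

theorem treeOrd_cover (hO : TreeOrd G W q col le) [Finite V] : ∃ F : IdxA q k → Set V, (∀ i, IsStrongForest G k (F i)) ∧
    ∀ (u v : V) (T : Set V), G.Adj u v → u ∈ T → v ∈ T → T ⊆ W → Conn G T →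
      (G.induce T).IsAcyclic → k + 1 ≤ T.ncard → ∃ i, u ∈ F i ∧ v ∈ F i := by
  have hgood : ∀ r y, ∃ g : Fin (dstBound q k q * q) → Set V, Act G W le r y →
      (∀ t, Piece G W le r y (g t)) ∧ ∀ u v Q, Piece G W le r y Q → u ∈ Q → v ∈ Q →
        v ∈ Dst G W q col le k q y → le u v → ∃ t, u ∈ g t ∧ v ∈ g t := by
    intro r y
    by_cases hact : Act G W le r y
    · obtain ⟨g, hg1, hg2⟩ := enum_cover
        {p : V × V | (p.2 ∈ Dst G W q col le k q y ∧ le p.1 p.2) ∧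
          ∃ Q, Piece G W le r y Q ∧ p.1 ∈ Q ∧ p.2 ∈ Q} (Set.toFinite _) (dstBound q k q * q)
        ((Set.ncard_le_ncard (fun p hp => hp.1) (Set.toFinite _)).trans (edge_card hO y))
        (Piece G W le r y) (fun p Q => p.1 ∈ Q ∧ p.2 ∈ Q) (fun p hp => hp.2) hact.2.2
      exact ⟨g, fun _ => ⟨hg1, fun u v Q hQ hu hv hD hle =>
        hg2 (u, v) ⟨⟨hD, hle⟩, Q, hQ, hu, hv⟩⟩⟩
    · exact ⟨fun _ => ∅, fun h => absurd h hact⟩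
  choose g hg using hgood
  have hbad : ∀ r, ∃ g : Fin (dstBound q k q * q) → Set V,
      (∀ t, (∀ x ∈ g t, le r x) ∧ g t ⊆ W ∧ Conn G (g t) ∧ (G.induce (g t)).IsAcyclic ∧
      ((g t).Nonempty → k + 1 ≤ (g t).ncard)) ∧
      ∀ u v T, ((∀ x ∈ T, le r x) ∧ T ⊆ W ∧ Conn G T ∧ (G.induce T).IsAcyclic ∧
      (T.Nonempty → k + 1 ≤ T.ncard)) → u ∈ T → v ∈ T →
        v ∈ Dst G W q col le k q r → le u v → ∃ t, u ∈ g t ∧ v ∈ g t := by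
    intro r
    obtain ⟨g, hg1, hg2⟩ := enum_cover
        {p : V × V | (p.2 ∈ Dst G W q col le k q r ∧ le p.1 p.2) ∧
          ∃ T, ((∀ x ∈ T, le r x) ∧ T ⊆ W ∧ Conn G T ∧ (G.induce T).IsAcyclic ∧
      (T.Nonempty → k + 1 ≤ T.ncard)) ∧ p.1 ∈ T ∧ p.2 ∈ T} (Set.toFinite _)
        (dstBound q k q * q)
        ((Set.ncard_le_ncard (fun p hp => hp.1) (Set.toFinite _)).trans (edge_card hO r))
        (fun T => (∀ x ∈ T, le r x) ∧ T ⊆ W ∧ Conn G T ∧ (G.induce T).IsAcyclic ∧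
          (T.Nonempty → k + 1 ≤ T.ncard)) (fun p Q => p.1 ∈ Q ∧ p.2 ∈ Q) (fun p hp => hp.2)
        ⟨∅, by simp, by simp, fun x hx => absurd hx (by simp), 
          SimpleGraph.IsAcyclic.of_subsingleton, by simp⟩
    exact ⟨g, hg1, fun u v T hT hu hv hD hle => hg2 (u, v) ⟨⟨hD, hle⟩, T, hT, hu, hv⟩⟩
  choose b hb1 hb2 using hbad
  let F : IdxA q k → Set V := fun x => match x with
    | Sum.inl (i, j, t) => ⋃ r : {r : V // col r = j},
      ⋃ y : {y : V // Act G W le r y ∧ col y = i ∧ k ≤ (ActSet G W q col le r i).ncard},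
        g r y t
    | Sum.inr (c, t) => ⋃ r : {r : V // col r = c}, b r t
  refine ⟨F, ?_, ?_⟩
  · rintro (⟨i, j, t⟩ | ⟨c, t⟩)
    · exact cover_good hO (fun r y => g r y t) (fun r y h => (hg r y h).1 t) i j
    · exact cover_bad hO (fun r => b r t) (fun r => hb1 r t) c
  · have main : ∀ (u v : V) (T : Set V), G.Adj u v → u ∈ T → v ∈ T → T ⊆ W → Conn G T →
      (G.induce T).IsAcyclic → k + 1 ≤ T.ncard → le u v → ∃ i, u ∈ F i ∧ v ∈ F i := by
      intro u v T huv hu hv hTW hT hac hcard hle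
      obtain ⟨ρ, hρT, hρ⟩ := hO.min T hTW hT ⟨u, hu⟩
      rcases climb (k := k) hO hT hTW hac hρT hρ hu hv huv _ v rfl (hρ v hv) (hO.refl v) 0
        (dst_self 0 v) (by simpa using chain_card hO v) with h | h
      · obtain ⟨t, ht1, ht2⟩ := hb2 ρ u v T ⟨hρ, hTW, hT, hac, fun _ => hcard⟩ hu hv h hle
        exact ⟨Sum.inr (col ρ, t), Set.mem_iUnion.2 ⟨⟨ρ, rfl⟩, ht1⟩,
          Set.mem_iUnion.2 ⟨⟨ρ, rfl⟩, ht2⟩⟩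
      · obtain ⟨r, y, Q, hry, hne, hQ, huQ, hvQ, hk, hD⟩ := h
        have hact : Act G W le r y := ⟨hry, hne, Q, hQ⟩
        obtain ⟨t, ht1, ht2⟩ := (hg r y hact).2 u v Q hQ huQ hvQ hD hle
        exact ⟨Sum.inl (col y, col r, t),
          Set.mem_iUnion.2 ⟨⟨r, rfl⟩, Set.mem_iUnion.2 ⟨⟨y, hact, rfl, hk⟩, ht1⟩⟩,
          Set.mem_iUnion.2 ⟨⟨r, rfl⟩, Set.mem_iUnion.2 ⟨⟨y, hact, rfl, hk⟩, ht2⟩⟩⟩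
    intro u v T huv hu hv hTW hT hac hcard
    rcases hO.adj u (hTW hu) v (hTW hv) huv with h | h
    · exact main u v T huv hu hv hTW hT hac hcard h
    · obtain ⟨i, h1, h2⟩ := main v u T huv.symm hv hu hTW hT hac hcard h
      exact ⟨i, h2, h1⟩

end TreeDepth

/-! ### Short walks inside a vertex set -/

/-- There is a walk of length at most `n` from `x` to `y` inside `T`. -/
def SW {V : Type*} (G : SimpleGraph V) (T : Set V) : ℕ → V → V → Prop
  | 0, x, y => x ∈ T ∧ x = y
  | n + 1, x, y => x ∈ T ∧ (x = y ∨ ∃ z, G.Adj x z ∧ SW G T n z y)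

section ShortWalks

variable {V : Type*} {G : SimpleGraph V}

lemma SW.left {T : Set V} {n : ℕ} {x y : V} (h : SW G T n x y) : x ∈ T := by
  cases n <;> exact h.1

lemma SW.refl {T : Set V} (n : ℕ) {x : V} (h : x ∈ T) : SW G T n x x := by
  cases n
  · exact ⟨h, rfl⟩
  · exact ⟨h, Or.inl rfl⟩

lemma SW.cons {T : Set V} {n : ℕ} {x z y : V} (hx : x ∈ T) (ha : G.Adj x z)
    (h : SW G T n z y) : SW G T (n + 1) x y := ⟨hx, Or.inr ⟨z, ha, h⟩⟩

/-- Induction principle for short walks. -/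
lemma SW.ind {T : Set V} {y : V} {P : ℕ → V → Prop}
    (h0 : ∀ n, y ∈ T → P n y)
    (h1 : ∀ n x z, x ∈ T → G.Adj x z → SW G T n z y → P n z → P (n + 1) x) :
    ∀ n x, SW G T n x y → P n x := by
  intro n
  induction n with
  | zero => rintro x ⟨hx, rfl⟩; exact h0 _ hx
  | succ n ih =>
    rintro x ⟨hx, rfl | ⟨z, ha, hz⟩⟩
    · exact h0 _ hx
    · exact h1 n x z hx ha hz (ih z hz)

lemma SW.right {T : Set V} {n : ℕ} {x y : V} (h : SW G T n x y) : y ∈ T :=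
  SW.ind (P := fun _ _ => y ∈ T) (fun _ h => h) (fun _ _ _ _ _ _ h => h) n x h

lemma SW.mono_set {S T : Set V} (hST : S ⊆ T) {n : ℕ} {x y : V} (h : SW G S n x y) :
    SW G T n x y :=
  SW.ind (P := fun n x => SW G T n x y) (fun n h => SW.refl n (hST h))
    (fun _ _ _ hx ha _ h => SW.cons (hST hx) ha h) n x h

lemma SW.succ {T : Set V} {n : ℕ} {x y : V} (h : SW G T n x y) : SW G T (n + 1) x y :=
  SW.ind (P := fun n x => SW G T (n + 1) x y) (fun n h => SW.refl _ h)
    (fun _ _ _ hx ha _ h => SW.cons hx ha h) n x h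

lemma SW.mono {T : Set V} {n m : ℕ} (hnm : n ≤ m) {x y : V} (h : SW G T n x y) :
    SW G T m x y := by
  induction m, hnm using Nat.le_induction with
  | base => exact h
  | succ m _ ih => exact ih.succ

lemma SW.trans {T : Set V} {n m : ℕ} {x y z : V} (h : SW G T n x y) (h' : SW G T m y z) :
    SW G T (n + m) x z :=
  SW.ind (P := fun n x => SW G T (n + m) x z) (fun n _ => h'.mono (by omega))
    (fun n x w hx ha _ h => by
      have := SW.cons hx ha h
      exact this.mono (by omega)) n x h

lemma SW.snoc {T : Set V} {n : ℕ} {x y z : V} (h : SW G T n x y) (ha : G.Adj y z) (hz : z ∈ T) :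
    SW G T (n + 1) x z :=
  h.trans (SW.cons h.right ha (SW.refl 0 hz))

lemma SW.symm {T : Set V} {n : ℕ} {x y : V} (h : SW G T n x y) : SW G T n y x :=
  SW.ind (P := fun n x => SW G T n y x) (fun n h => SW.refl n h)
    (fun _ _ _ hx ha _ h => h.snoc ha.symm hx) n x h

lemma SW.RT {T : Set V} {n : ℕ} {x y : V} (h : SW G T n x y) : RT G T x y :=
  SW.ind (P := fun _ x => InducedArboricity.RT G T x y) (fun _ _ => RT.refl _)
    (fun _ _ _ hx ha hs h => (RT.single ha hx hs.left).trans h) n x h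

/-- Balls are self-contained. -/
lemma SW.ball {T : Set V} {R : ℕ} {v x : V} (h : SW G T R v x) :
    SW G {y | SW G T R v y} R v x := by
  have key : ∀ n x, SW G T n x v → n ≤ R → SW G {y | SW G T R v y} n x v := by
    refine SW.ind (P := fun n x => n ≤ R → SW G {y | SW G T R v y} n x v) ?_ ?_
    · intro n hv _
      exact SW.refl n (SW.refl R hv)
    · intro n x z hx ha hz ih hn
      refine SW.cons ?_ ha (ih (by omega))
      exact (SW.cons hx ha hz).symm.mono hn
  exact (key R x h.symm le_rfl).symm

/-- A short walk is supported on a small finite set. -/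
lemma SW.support {T : Set V} {n : ℕ} {x y : V} (h : SW G T n x y) :
    ∃ A : Finset V, (A : Set V) ⊆ T ∧ A.card ≤ n + 1 ∧ SW G (A : Set V) n x y := by
  refine SW.ind (P := fun n x => ∃ A : Finset V, (A : Set V) ⊆ T ∧ A.card ≤ n + 1 ∧
    SW G (A : Set V) n x y) ?_ ?_ n x h
  · intro n hy
    exact ⟨{y}, by simpa using hy, by simp, SW.refl n (by simp)⟩
  · rintro n x z hx ha _ ⟨A, hA, hc, hs⟩
    refine ⟨insert x A, ?_, ?_, SW.cons (by simp) ha (hs.mono_set (by simp))⟩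
    · rw [Finset.coe_insert]; exact Set.insert_subset hx hA
    · exact (Finset.card_insert_le _ _).trans (by omega)

/-- Leaving a set `B` for the last time. -/
lemma SW.last_exit {A B : Set V} {n : ℕ} {x y : V} (h : SW G A n x y) (hy : y ∉ B) :
    x ∈ B → ∃ a ∈ B, ∃ b, G.Adj a b ∧ SW G (A \ B) n b y := by
  have key : ∀ n x, SW G A n x y → (SW G (A \ B) n x y ∨
      ∃ a ∈ B, ∃ b, G.Adj a b ∧ SW G (A \ B) n b y) := by
    refine SW.ind (P := fun n x => SW G (A \ B) n x y ∨
      ∃ a ∈ B, ∃ b, G.Adj a b ∧ SW G (A \ B) n b y) ?_ ?_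
    · intro n hyA
      exact Or.inl (SW.refl n ⟨hyA, hy⟩)
    · rintro n x z hx ha _ (h | ⟨a, haB, b, hab, hb⟩)
      · by_cases hxB : x ∈ B
        · exact Or.inr ⟨x, hxB, z, ha, h.succ⟩
        · exact Or.inl (SW.cons ⟨hx, hxB⟩ ha h)
      · exact Or.inr ⟨a, haB, b, hab, hb.succ⟩
  intro hx
  rcases key n x h with h | h
  · exact absurd hx h.left.2
  · exact h

/-- The last step of a walk, at its first visit of the endpoint. -/
lemma SW.last_step {T : Set V} {n : ℕ} {x w : V} (h : SW G T n x w) :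
    x ≠ w → ∃ a, SW G (T \ {w}) n x a ∧ G.Adj a w := by
  refine SW.ind (P := fun n x => x ≠ w → ∃ a, SW G (T \ {w}) n x a ∧ G.Adj a w) ?_ ?_ n x h
  · intro n _ h; exact absurd rfl h
  · intro n x z hx ha _ ih hxw
    by_cases hz : z = w
    · subst hz
      exact ⟨x, SW.refl _ ⟨hx, hxw⟩, ha⟩
    · obtain ⟨a, h1, h2⟩ := ih hz
      exact ⟨a, SW.cons ⟨hx, hxw⟩ ha h1, h2⟩

/-- First hit of `Z` away from `v`. -/
lemma SW.first_hit {T Z : Set V} {n : ℕ} {x u v : V} (h : SW G T n x u) (hu : u ∈ Z)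
    (huv : u ≠ v) : (x ∈ Zᶜ ∪ {v}) → ∃ w ∈ Z ∩ T, w ≠ v ∧ SW G (Zᶜ ∪ {v, w}) n x w := by
  refine SW.ind (P := fun n x => (x ∈ Zᶜ ∪ {v}) → ∃ w ∈ Z ∩ T, w ≠ v ∧
    SW G (Zᶜ ∪ {v, w}) n x w) ?_ ?_ n x h
  · rintro n _ (h | h)
    · exact absurd hu h
    · exact absurd h huv
  · intro n x z hx ha hz ih hxZ
    by_cases hzZ : z ∈ Zᶜ ∪ {v}
    · obtain ⟨w, hw, hwv, hs⟩ := ih hzZ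
      refine ⟨w, hw, hwv, SW.cons ?_ ha hs⟩
      rcases hxZ with h | h
      · exact Or.inl h
      · exact Or.inr (Or.inl h)
    · simp only [Set.mem_union, Set.mem_compl_iff, Set.mem_singleton_iff, not_or, not_not] at hzZ
      refine ⟨z, ⟨hzZ.1, hz.left⟩, hzZ.2, SW.cons ?_ ha (SW.refl n ?_)⟩
      · rcases hxZ with h | h
        · exact Or.inl h
        · exact Or.inr (Or.inl h)
      · exact Or.inr (Or.inr rfl)

/-- A walk either avoids `H` or hits it. -/
lemma SW.avoid_or_hit {T H : Set V} {n : ℕ} {x u : V} (h : SW G T n x u) : x ∉ H →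
    (SW G (T ∩ Hᶜ) n x u ∨ ∃ y ∈ H, ∃ m, m + 1 ≤ n ∧ SW G T m y u) := by
  refine SW.ind (P := fun n x => x ∉ H →
    (SW G (T ∩ Hᶜ) n x u ∨ ∃ y ∈ H, ∃ m, m + 1 ≤ n ∧ SW G T m y u)) ?_ ?_ n x h
  · intro n hu huH; exact Or.inl (SW.refl n ⟨hu, huH⟩)
  · intro n x z hx ha hz ih hxH
    by_cases hzH : z ∈ H
    · exact Or.inr ⟨z, hzH, n, le_rfl, hz⟩
    · rcases ih hzH with h | ⟨y, hy, m, hm, hs⟩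
      · exact Or.inl (SW.cons ⟨hx, hxH⟩ ha h)
      · exact Or.inr ⟨y, hy, m, by omega, hs⟩

lemma SW.walk {T : Set V} {n : ℕ} {x y : V} (h : SW G T n x y) (hy : y ∈ T) :
    ∃ hx : x ∈ T, ∃ w : (G.induce T).Walk ⟨x, hx⟩ ⟨y, hy⟩, w.length ≤ n := by
  refine SW.ind (P := fun n x => ∃ hx : x ∈ T,
    ∃ w : (G.induce T).Walk ⟨x, hx⟩ ⟨y, hy⟩, w.length ≤ n) ?_ ?_ n x h
  · intro n _; exact ⟨hy, SimpleGraph.Walk.nil, by simp⟩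
  · rintro n x z hx ha _ ⟨hz, w, hw⟩
    have hadj : (G.induce T).Adj ⟨x, hx⟩ ⟨z, hz⟩ := ha
    exact ⟨hx, SimpleGraph.Walk.cons hadj w, by simpa using hw⟩

end ShortWalks

/-! ### Density of shallow minors -/

/-- Every depth-`d` minor of `G` has at most `a` times as many edges as vertices,
phrased with finite sets of vertices of `G`. -/
def Sparse {V : Type*} (G : SimpleGraph V) (d a : ℕ) : Prop :=
  ∀ (W : Finset V) (B : V → Set V) (E : Finset (Sym2 V)),
    (∀ u ∈ W, ∀ v ∈ W, u ≠ v → Disjoint (B u) (B v)) →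
    (∀ v ∈ W, v ∈ B v ∧ ∀ y ∈ B v, SW G (B v) d v y) →
    (∀ e ∈ E, ∃ u ∈ W, ∃ v ∈ W, u ≠ v ∧ e = s(u, v) ∧ ∃ x ∈ B u, ∃ y ∈ B v, G.Adj x y) →
    E.card ≤ a * W.card

lemma sparse_of {C : GraphClass} (hC : BoundedExpansion C) (d : ℕ) :
    ∃ a, ∀ n, ∀ G ∈ C n, Sparse G d a := by
  obtain ⟨a, ha⟩ := hC d
  refine ⟨a, fun n G hG W B E hdisj hrad hE => ?_⟩
  let ε : Fin W.card ≃ W := W.equivFin.symm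
  let Γ : SimpleGraph (Fin W.card) :=
    { Adj := fun i j => i ≠ j ∧ s((ε i : Fin n), (ε j : Fin n)) ∈ E
      symm := ⟨fun i j h => ⟨h.1.symm, by rw [Sym2.eq_swap]; exact h.2⟩⟩
      loopless := ⟨fun i h => h.1 rfl⟩ }
  have h1 : Γ.edgeSet.ncard ≤ a * W.card := by
    apply ha
    refine ⟨n, G, hG, fun i => B (ε i), ?_, ?_, ?_⟩
    · intro i j hij
      refine hdisj _ (ε i).2 _ (ε j).2 (fun h => hij ?_)
      exact ε.injective (Subtype.ext h)
    · intro i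
      refine ⟨⟨ε i, (hrad _ (ε i).2).1⟩, fun y => ?_⟩
      obtain ⟨_, w, hw⟩ := ((hrad _ (ε i).2).2 y y.2).walk y.2
      exact ⟨⟨w⟩, (SimpleGraph.dist_le w).trans hw⟩
    · rintro i j ⟨_, hij⟩
      obtain ⟨u, _, v, _, _, he, x, hx, y, hy, hxy⟩ := hE _ hij
      rcases Sym2.eq_iff.1 he with ⟨h1, h2⟩ | ⟨h1, h2⟩
      · exact ⟨x, by beta_reduce; rw [h1]; exact hx, y, by beta_reduce; rw [h2]; exact hy, hxy⟩
      · exact ⟨y, by beta_reduce; rw [h1]; exact hy, x, by beta_reduce; rw [h2]; exact hx, hxy.symm⟩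
  refine le_trans ?_ h1
  have hsub : (E : Set (Sym2 (Fin n))) ⊆ (Sym2.map (fun i => (ε i : Fin n))) '' Γ.edgeSet := by
    intro e he
    obtain ⟨u, hu, v, hv, huv, rfl, _⟩ := hE e he
    refine ⟨s(ε.symm ⟨u, hu⟩, ε.symm ⟨v, hv⟩), ?_, by simp⟩
    rw [SimpleGraph.mem_edgeSet]
    refine ⟨?_, by simpa using he⟩
    intro h
    have := ε.symm.injective h
    exact huv (by simpa using this)
  rw [← Set.ncard_coe_finset]
  exact (Set.ncard_le_ncard hsub (Set.toFinite _)).trans (Set.ncard_image_le (Set.toFinite _))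

/-! ### Sets that are hard to reach -/

section Density

variable {V : Type*} {G : SimpleGraph V}

/-- Splitting a walk of length at most `2R` into two touching balls of radius `R`. -/
lemma touch {A : Set V} {R : ℕ} {v v' : V} (hne : v ≠ v') (h : SW G A (2 * R) v v') :
    ∃ x, SW G (A \ {v'}) R v x ∧
      ∃ y, SW G (A \ {x | SW G (A \ {v'}) R v x}) R v' y ∧ G.Adj x y := by
  have hv'A : v' ∈ A := h.right
  have hv'B : v' ∉ {x | SW G (A \ {v'}) R v x} := fun h => h.right.2 rfl
  have key : ∀ j i x, i + j = R → SW G (A \ {v'}) i v x → SW G A (R + j) x v' →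
      ∃ x, SW G (A \ {v'}) R v x ∧
      ∃ y, SW G (A \ {x | SW G (A \ {v'}) R v x}) R v' y ∧ G.Adj x y := by
    intro j
    induction j with
    | zero =>
      intro i x hi h1 h2
      have hi' : i = R := by omega
      subst hi'
      obtain ⟨a, ha, b, hab, hb⟩ := SW.last_exit h2 hv'B h1
      exact ⟨a, ha, b, hb.symm, hab⟩
    | succ j ih =>
      rintro i x hi h1 ⟨_, h2 | ⟨z, ha, hz⟩⟩
      · subst h2; exact absurd rfl h1.right.2
      · by_cases hzv : z = v'
        · subst hzv
          exact ⟨x, h1.mono (by omega), z, SW.refl _ ⟨hv'A, hv'B⟩, ha⟩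
        · exact ih (i + 1) z (by omega) (h1.snoc ha ⟨hz.left, hzv⟩) hz
  exact key R 0 v (by omega) (SW.refl 0 ⟨h.left, hne⟩) (h.mono (by omega))

/-- A partial depth-`R` minor of `G` rooted at the vertices of `S`. -/
structure MState (G : SimpleGraph V) (R : ℕ) (S : Finset V) (B : V → Set V)
    (E : Finset (Sym2 V)) (Z : Finset V) : Prop where
  sub : S ⊆ Z
  bz : ∀ v ∈ S, B v ⊆ (Z : Set V)
  self : ∀ v ∈ S, v ∈ B v ∧ ∀ y ∈ B v, SW G (B v) R v y
  disj : ∀ u ∈ S, ∀ v ∈ S, u ≠ v → Disjoint (B u) (B v)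
  edges : ∀ e ∈ E, ∃ u ∈ S, ∃ v ∈ S, u ≠ v ∧ e = s(u, v) ∧ ∃ x ∈ B u, ∃ y ∈ B v, G.Adj x y
  card : Z.card ≤ S.card + (2 * R + 1) * E.card

lemma mstate_init (R : ℕ) (S : Finset V) : MState G R S (fun v => {v}) ∅ S where
  sub := subset_rfl
  bz := by intro v hv; simpa using hv
  self := by
    intro v _
    refine ⟨rfl, ?_⟩
    rintro y rfl
    exact SW.refl _ rfl
  disj := by intro u _ v _ h; simpa using h
  edges := by simp
  card := by simp

lemma mstate_extend {R : ℕ} {S : Finset V} {B : V → Set V} {E : Finset (Sym2 V)} {Z : Finset V}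
    (hM : MState G R S B E Z) {v v' : V} (hv : v ∈ S) (hv' : v' ∈ S) (hne : v ≠ v')
    (hE : s(v, v') ∉ E) (h : SW G ((Z : Set V)ᶜ ∪ {v, v'}) (2 * R) v v') :
    ∃ B' Z', MState G R S B' (insert s(v, v') E) Z' := by
  obtain ⟨A, hA, hcard, hs⟩ := h.support
  obtain ⟨x, hx, y, hy, hxy⟩ := touch hne hs
  set B1 : Set V := {x | SW G ((A : Set V) \ {v'}) R v x} with hB1
  set B2 : Set V := {y | SW G ((A : Set V) \ B1) R v' y} with hB2
  have hvB1 : v ∈ B1 := SW.refl R ⟨hs.left, hne⟩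
  have hv'B1 : v' ∉ B1 := fun h => h.right.2 rfl
  have hv'B2 : v' ∈ B2 := SW.refl R ⟨hs.right, hv'B1⟩
  have h1A : B1 ⊆ (A : Set V) := fun z hz => hz.right.1
  have h2A : B2 ⊆ (A : Set V) := fun z hz => hz.right.1
  have h12 : ∀ z ∈ B1, z ∉ B2 := fun z hz hz' => hz'.right.2 hz
  have h1Z : ∀ z ∈ B1, z ∈ Z → z = v := by
    intro z hz hzZ
    rcases hA (h1A hz) with h | h | h
    · exact absurd hzZ h
    · exact h
    · rw [h] at hz; exact absurd hz hv'B1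
  have h2Z : ∀ z ∈ B2, z ∈ Z → z = v' := by
    intro z hz hzZ
    rcases hA (h2A hz) with h | h | h
    · exact absurd hzZ h
    · rw [h] at hz; exact absurd hz (h12 _ hvB1)
    · exact h
  let B' : V → Set V := fun u => if u = v then B v ∪ B1 else if u = v' then B v' ∪ B2 else B u
  have hB'v : B' v = B v ∪ B1 := by simp [B']
  have hB'v' : B' v' = B v' ∪ B2 := by simp [B', hne.symm]
  have hB'o : ∀ u, u ≠ v → u ≠ v' → B' u = B u := by
    intro u h1 h2; simp [B', h1, h2]
  have hsub : ∀ u, B u ⊆ B' u := by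
    intro u
    by_cases h1 : u = v
    · subst h1; rw [hB'v]; exact Set.subset_union_left
    · by_cases h2 : u = v'
      · subst h2; rw [hB'v']; exact Set.subset_union_left
      · rw [hB'o u h1 h2]
  have hnot : ∀ u ∈ S, ∀ w ∈ S, u ≠ w → w ∉ B u := by
    intro u hu w hw huw hwu
    exact Set.disjoint_left.1 (hM.disj u hu w hw huw) hwu (hM.self w hw).1
  have d1 : ∀ u ∈ S, u ≠ v → Disjoint (B u) B1 := by
    intro u hu huv
    refine Set.disjoint_left.2 (fun z hz hz1 => ?_)
    have := h1Z z hz1 (hM.bz u hu hz)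
    subst this
    exact hnot u hu z hv huv hz
  have d2 : ∀ u ∈ S, u ≠ v' → Disjoint (B u) B2 := by
    intro u hu huv
    refine Set.disjoint_left.2 (fun z hz hz1 => ?_)
    have := h2Z z hz1 (hM.bz u hu hz)
    subst this
    exact hnot u hu z hv' huv hz
  have d12 : Disjoint B1 B2 := Set.disjoint_left.2 h12
  have dvv' : Disjoint (B' v) (B' v') := by
    rw [hB'v, hB'v']
    rw [Set.disjoint_union_left, Set.disjoint_union_right, Set.disjoint_union_right]
    exact ⟨⟨hM.disj v hv v' hv' hne, d2 v hv hne⟩, (d1 v' hv' hne.symm).symm, d12⟩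
  have dv : ∀ u ∈ S, u ≠ v → Disjoint (B' v) (B' u) := by
    intro u hu huv
    by_cases h2 : u = v'
    · rw [h2]; exact dvv'
    · rw [hB'v, hB'o u huv h2, Set.disjoint_union_left]
      exact ⟨hM.disj v hv u hu huv.symm, (d1 u hu huv).symm⟩
  have dv' : ∀ u ∈ S, u ≠ v' → Disjoint (B' v') (B' u) := by
    intro u hu huv
    by_cases h2 : u = v
    · rw [h2]; exact dvv'.symm
    · rw [hB'v', hB'o u h2 huv, Set.disjoint_union_left]
      exact ⟨hM.disj v' hv' u hu huv.symm, (d2 u hu huv).symm⟩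
  refine ⟨B', Z ∪ A, ?_, ?_, ?_, ?_, ?_, ?_⟩
  · exact hM.sub.trans Finset.subset_union_left
  · intro u hu
    rw [Finset.coe_union]
    by_cases h1 : u = v
    · subst h1; rw [hB'v]; exact Set.union_subset_union (hM.bz u hu) h1A
    · by_cases h2 : u = v'
      · subst h2; rw [hB'v']; exact Set.union_subset_union (hM.bz u hu) h2A
      · rw [hB'o u h1 h2]; exact (hM.bz u hu).trans Set.subset_union_left
  · intro u hu
    refine ⟨hsub u (hM.self u hu).1, ?_⟩
    by_cases h1 : u = v
    · subst h1
      rw [hB'v]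
      rintro z (hz | hz)
      · exact ((hM.self u hu).2 z hz).mono_set Set.subset_union_left
      · exact (SW.ball hz).mono_set Set.subset_union_right
    · by_cases h2 : u = v'
      · subst h2
        rw [hB'v']
        rintro z (hz | hz)
        · exact ((hM.self u hu).2 z hz).mono_set Set.subset_union_left
        · exact (SW.ball hz).mono_set Set.subset_union_right
      · rw [hB'o u h1 h2]; exact (hM.self u hu).2
  · intro u hu w hw huw
    by_cases h1 : u = v
    · subst h1; exact dv w hw huw.symm
    by_cases h2 : u = v'
    · subst h2; exact dv' w hw huw.symm
    by_cases h3 : w = v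
    · subst h3; exact (dv u hu huw).symm
    by_cases h4 : w = v'
    · subst h4; exact (dv' u hu huw).symm
    rw [hB'o u h1 h2, hB'o w h3 h4]
    exact hM.disj u hu w hw huw
  · intro e he
    rcases Finset.mem_insert.1 he with rfl | he
    · refine ⟨v, hv, v', hv', hne, rfl, x, ?_, y, ?_, hxy⟩
      · rw [hB'v]; exact Or.inr hx
      · rw [hB'v']; exact Or.inr hy
    · obtain ⟨u, hu, w, hw, huw, he, a, ha, b, hb, hab⟩ := hM.edges e he
      exact ⟨u, hu, w, hw, huw, he, a, hsub u ha, b, hsub w hb, hab⟩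
  · rw [Finset.card_insert_of_notMem hE]
    have := Finset.card_union_le Z A
    have := hM.card
    rw [mul_add]
    omega

/-- A sparse graph has a large independent set of vertices. -/
lemma exists_indep (S : Finset V) (E : Finset (Sym2 V)) (a : ℕ) (hE : E.card ≤ a * S.card) :
    ∃ I ⊆ S, (∀ u ∈ I, ∀ v ∈ I, u ≠ v → s(u, v) ∉ E) ∧ S.card ≤ 2 * (4 * a + 1) * I.card := by
  set deg : V → ℕ := fun v => (E.filter (fun e => v ∈ e)).card with hdeg
  set L := S.filter (fun v => deg v ≤ 4 * a) with hL
  have hsum : ∑ v ∈ S, deg v ≤ 2 * E.card := by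
    have := Finset.sum_card_bipartiteAbove_eq_sum_card_bipartiteBelow (s := S) (t := E)
      (fun (v : V) (e : Sym2 V) => v ∈ e)
    simp only [Finset.bipartiteAbove, Finset.bipartiteBelow] at this
    rw [hdeg, this, mul_comm]
    apply Finset.sum_le_card_nsmul
    intro e _
    induction e with
    | _ x y =>
      have : S.filter (fun v => v ∈ s(x, y)) ⊆ {x, y} := by
        intro z hz
        simpa using (Finset.mem_filter.1 hz).2
      exact (Finset.card_le_card this).trans Finset.card_le_two
  have hhigh : (S \ L).card * (4 * a + 1) ≤ 2 * E.card := by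
    refine le_trans ?_ hsum
    refine le_trans ?_ (Finset.sum_le_sum_of_subset (Finset.sdiff_subset : S \ L ⊆ S))
    rw [← smul_eq_mul]
    apply Finset.card_nsmul_le_sum
    intro v hv
    rw [Finset.mem_sdiff, hL, Finset.mem_filter, not_and] at hv
    have := hv.2 hv.1
    omega
  have hLS : L ⊆ S := Finset.filter_subset _ _
  have hcS : (S \ L).card + L.card = S.card := Finset.card_sdiff_add_card_eq_card hLS
  have hhalf : S.card ≤ 2 * L.card := by
    by_contra hcon
    push Not at hcon
    have h2 : S.card + 1 ≤ 2 * (S \ L).card := by omega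
    have h3 : (S \ L).card * (4 * a + 1) ≤ 2 * (a * S.card) := hhigh.trans (by omega)
    have h4 : 2 * (a * S.card) ≤ 2 * (a * (2 * (S \ L).card)) := by gcongr; omega
    have h5 : (S \ L).card * (4 * a + 1) = 4 * (a * (S \ L).card) + (S \ L).card := by ring
    have h6 : 2 * (a * (2 * (S \ L).card)) = 4 * (a * (S \ L).card) := by ring
    omega
  let Ind := L.powerset.filter (fun I => ∀ u ∈ I, ∀ v ∈ I, u ≠ v → s(u, v) ∉ E)
  have hne : Ind.Nonempty := ⟨∅, by simp [Ind]⟩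
  obtain ⟨I, hI, hmax⟩ := Finset.exists_max_image Ind Finset.card hne
  simp only [Ind, Finset.mem_filter, Finset.mem_powerset] at hI hmax
  refine ⟨I, hI.1.trans hLS, hI.2, ?_⟩
  have hcov : L ⊆ I.biUnion (fun v => insert v (L.filter (fun u => s(v, u) ∈ E))) := by
    intro u hu
    rw [Finset.mem_biUnion]
    by_contra hcon
    push Not at hcon
    have huI : u ∉ I := fun h => hcon u h (Finset.mem_insert_self _ _)
    have hadj : ∀ v ∈ I, s(v, u) ∉ E := by
      intro v hv h
      exact hcon v hv (Finset.mem_insert_of_mem (Finset.mem_filter.2 ⟨hu, h⟩))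
    have := hmax (insert u I) ⟨Finset.insert_subset hu hI.1, ?_⟩
    · rw [Finset.card_insert_of_notMem huI] at this; omega
    · intro x hx y hy hxy
      rcases Finset.mem_insert.1 hx with rfl | hx1 <;> rcases Finset.mem_insert.1 hy with rfl | hy1
      · exact absurd rfl hxy
      · rw [Sym2.eq_swap]; exact hadj y hy1
      · exact hadj x hx1
      · exact hI.2 x hx1 y hy1 hxy
  have hLc : L.card ≤ I.card * (4 * a + 1) := by
    refine (Finset.card_le_card hcov).trans (Finset.card_biUnion_le_card_mul _ _ _ ?_)
    intro v hv
    refine (Finset.card_insert_le _ _).trans ?_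
    have h1 : deg v ≤ 4 * a := (Finset.mem_filter.1 (hI.1 hv)).2
    have h2 : (L.filter (fun u => s(v, u) ∈ E)).card ≤ deg v := by
      apply Finset.card_le_card_of_injOn (fun u => s(v, u))
      · intro u hu
        have := (Finset.mem_filter.1 hu).2
        simp only [Finset.coe_filter, Set.mem_ofPred_eq]
        exact ⟨this, by simp⟩
      · intro u _ u' _ h
        exact Sym2.congr_right.1 h
    omega
  calc S.card ≤ 2 * L.card := hhalf
    _ ≤ 2 * (I.card * (4 * a + 1)) := by gcongr
    _ = _ := by ring

/-- The constant in the density lemma. -/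
def hBound (R a : ℕ) : ℕ := a * (1 + (2 * R + 1) * a) * (2 * (4 * a + 1))

lemma exists_hard [Finite V] {R a : ℕ} (hG : Sparse G R a) (S : Finset V) (hS : S.Nonempty) :
    ∃ v ∈ S, ∃ H : Finset V, H.card ≤ hBound R a ∧ v ∉ H ∧
      ∀ u ∈ S, u ≠ v → ¬ SW G (H : Set V)ᶜ R v u := by
  have : Fintype V := Fintype.ofFinite V
  let Es : Finset (Finset (Sym2 V)) := Finset.univ.filter (fun E => ∃ B Z, MState G R S B E Z)
  have hne : Es.Nonempty := ⟨∅, by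
    simp only [Es, Finset.mem_filter, Finset.mem_univ, true_and]
    exact ⟨_, _, mstate_init R S⟩⟩
  obtain ⟨E, hE, hmax⟩ := Finset.exists_max_image Es Finset.card hne
  simp only [Es, Finset.mem_filter, Finset.mem_univ, true_and] at hE hmax
  obtain ⟨B, Z, hM⟩ := hE
  have hEc : E.card ≤ a * S.card := hG S B E hM.disj hM.self hM.edges
  obtain ⟨I, hIS, hI, hIc⟩ := exists_indep S E a hEc
  have claim : ∀ v ∈ I, ∀ v' ∈ I, v ≠ v' → ¬ SW G ((Z : Set V)ᶜ ∪ {v, v'}) (2 * R) v v' := by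
    intro v hv v' hv' hne hs
    obtain ⟨B', Z', hM'⟩ := mstate_extend hM (hIS hv) (hIS hv') hne (hI v hv v' hv' hne) hs
    have := hmax _ ⟨B', Z', hM'⟩
    rw [Finset.card_insert_of_notMem (hI v hv v' hv' hne)] at this
    omega
  let X : V → Finset V := fun v =>
    Z.filter (fun w => w ≠ v ∧ SW G ((Z : Set V)ᶜ ∪ {v, w}) R v w)
  have hXI : ∀ v ∈ I, ∀ w ∈ X v, w ∉ I := by
    intro v hv w hw hwI
    have h := (Finset.mem_filter.1 hw).2
    exact claim v hv w hwI h.1.symm (h.2.mono (by omega))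
  let B' : V → Set V := fun v => if v ∈ I then {x | SW G ((Z : Set V)ᶜ ∪ {v}) R v x} else {v}
  have hB'I : ∀ v ∈ I, B' v = {x | SW G ((Z : Set V)ᶜ ∪ {v}) R v x} := by
    intro v hv; simp only [B', if_pos hv]
  have hB'n : ∀ v, v ∉ I → B' v = {v} := by
    intro v hv; simp only [B', if_neg hv]
  have dmix : ∀ u ∈ I, ∀ w ∈ Z, w ∉ I → Disjoint (B' u) (B' w) := by
    intro u hu w hw hwI
    rw [hB'I u hu, hB'n w hwI, Set.disjoint_singleton_right]
    intro h
    rcases SW.right h with h | h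
    · exact h hw
    · rw [h] at hwI; exact hwI hu
  have hdisj : ∀ u ∈ Z, ∀ v ∈ Z, u ≠ v → Disjoint (B' u) (B' v) := by
    intro u hu v hv huv
    by_cases hu' : u ∈ I <;> by_cases hv' : v ∈ I
    · rw [hB'I u hu', hB'I v hv']
      refine Set.disjoint_left.2 (fun x hx hx' => ?_)
      apply claim u hu' v hv' huv
      have h1 : SW G ((Z : Set V)ᶜ ∪ {u, v}) R u x :=
        hx.mono_set (Set.union_subset_union_right _ (by simp))
      have h2 : SW G ((Z : Set V)ᶜ ∪ {u, v}) R v x :=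
        hx'.mono_set (Set.union_subset_union_right _ (by simp))
      exact (h1.trans h2.symm).mono (by omega)
    · exact dmix u hu' v hv hv'
    · exact (dmix v hv' u hu hu').symm
    · rw [hB'n u hu', hB'n v hv']; simpa using huv
  have hself : ∀ v ∈ Z, v ∈ B' v ∧ ∀ y ∈ B' v, SW G (B' v) R v y := by
    intro v _
    by_cases hv : v ∈ I
    · rw [hB'I v hv]
      exact ⟨SW.refl R (Or.inr rfl), fun y hy => SW.ball hy⟩
    · rw [hB'n v hv]
      refine ⟨rfl, ?_⟩
      rintro y rfl
      exact SW.refl R rfl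
  let E' : Finset (Sym2 V) := I.biUnion (fun v => (X v).image (fun w => s(v, w)))
  have hE' : E'.card ≤ a * Z.card := by
    apply hG Z B' E' hdisj hself
    intro e he
    obtain ⟨v, hv, he⟩ := Finset.mem_biUnion.1 he
    obtain ⟨w, hw, rfl⟩ := Finset.mem_image.1 he
    have h := Finset.mem_filter.1 hw
    obtain ⟨x, hx, hxw⟩ := h.2.2.last_step h.2.1.symm
    refine ⟨v, hM.sub (hIS hv), w, h.1, h.2.1.symm, rfl, x, ?_, w, (hself w h.1).1, hxw⟩
    rw [hB'I v hv]
    refine SW.mono_set ?_ hx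
    rintro z ⟨hz | hz | hz, hzw⟩
    · exact Or.inl hz
    · exact Or.inr hz
    · exact absurd hz hzw
  have hE'c : E'.card = ∑ v ∈ I, (X v).card := by
    rw [Finset.card_biUnion]
    · apply Finset.sum_congr rfl
      intro v _
      apply Finset.card_image_of_injective
      intro w w' h
      exact Sym2.congr_right.1 h
    · intro v hv v' hv' hne
      refine Finset.disjoint_left.2 ?_
      intro e he he'
      obtain ⟨w, hw, rfl⟩ := Finset.mem_image.1 he
      obtain ⟨w', hw', h⟩ := Finset.mem_image.1 he'
      rcases Sym2.eq_iff.1 h with ⟨h1, _⟩ | ⟨h1, h2⟩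
      · exact hne h1.symm
      · exact hXI v hv w hw (h1 ▸ hv')
  have hIne : I.Nonempty := by
    rw [← Finset.card_pos]
    have := Finset.card_pos.2 hS
    by_contra h
    have h0 : I.card = 0 := by omega
    rw [h0] at hIc
    omega
  have htot : ∑ v ∈ I, (X v).card ≤ ∑ v ∈ I, hBound R a := by
    rw [← hE'c, Finset.sum_const, smul_eq_mul]
    calc E'.card ≤ a * Z.card := hE'
      _ ≤ a * (S.card + (2 * R + 1) * (a * S.card)) := by
        gcongr
        refine hM.card.trans ?_
        gcongr
      _ = a * (1 + (2 * R + 1) * a) * S.card := by ring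
      _ ≤ a * (1 + (2 * R + 1) * a) * (2 * (4 * a + 1) * I.card) := by gcongr
      _ = I.card * hBound R a := by unfold hBound; ring
  obtain ⟨v, hv, hvX⟩ := Finset.exists_le_of_sum_le hIne htot
  refine ⟨v, hIS hv, X v, hvX, ?_, ?_⟩
  · intro h; exact (Finset.mem_filter.1 h).2.1 rfl
  · intro u hu huv hs
    obtain ⟨w, hw, hwv, h⟩ := hs.first_hit (Z := (Z : Set V)) (hM.sub hu) huv (Or.inr rfl)
    exact hw.2 (Finset.mem_filter.2 ⟨hw.1, hwv, h⟩)

end Density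

/-! ### Weak coloring orders -/

section WeakColoring

variable {V : Type*} {G : SimpleGraph V}

lemma exists_order [Finite V] {R h : ℕ}
    (hG : ∀ S : Finset V, S.Nonempty → ∃ v ∈ S, ∃ H : Finset V, H.card ≤ h ∧ v ∉ H ∧
      ∀ u ∈ S, u ≠ v → ¬ SW G (H : Set V)ᶜ R v u) :
    ∃ f : V → ℕ, Function.Injective f ∧ ∀ v, ∃ H : Finset V, H.card ≤ h ∧ v ∉ H ∧
      ∀ u, f u < f v → ¬ SW G (H : Set V)ᶜ R v u := by
  have : Fintype V := Fintype.ofFinite V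
  have key : ∀ m, ∀ S : Finset V, S.card = m → ∃ f : V → ℕ, Set.InjOn f (S : Set V) ∧
      (∀ v ∈ S, f v < m) ∧ ∀ v ∈ S, ∃ H : Finset V, H.card ≤ h ∧ v ∉ H ∧
      ∀ u ∈ S, f u < f v → ¬ SW G (H : Set V)ᶜ R v u := by
    intro m
    induction m with
    | zero =>
      intro S hS
      rw [Finset.card_eq_zero] at hS
      subst hS
      exact ⟨fun _ => 0, by simp, by simp, by simp⟩
    | succ m ih =>
      intro S hS
      obtain ⟨v, hv, H, hH, hvH, hs⟩ := hG S (Finset.card_pos.1 (by omega))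
      obtain ⟨f, hf1, hf2, hf3⟩ := ih (S.erase v) (by rw [Finset.card_erase_of_mem hv]; omega)
      have hfv : Function.update f v m v = m := by simp
      have hfo : ∀ u, u ≠ v → Function.update f v m u = f u := by
        intro u hu; simp [hu]
      refine ⟨Function.update f v m, ?_, ?_, ?_⟩
      · intro x hx y hy hxy
        by_cases hxv : x = v <;> by_cases hyv : y = v
        · rw [hxv, hyv]
        · rw [hxv, hfv, hfo y hyv] at hxy
          have := hf2 y (Finset.mem_erase.2 ⟨hyv, hy⟩)
          omega
        · rw [hyv, hfv, hfo x hxv] at hxy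
          have := hf2 x (Finset.mem_erase.2 ⟨hxv, hx⟩)
          omega
        · rw [hfo x hxv, hfo y hyv] at hxy
          exact hf1 (Finset.mem_coe.2 (Finset.mem_erase.2 ⟨hxv, hx⟩))
            (Finset.mem_coe.2 (Finset.mem_erase.2 ⟨hyv, hy⟩)) hxy
      · intro x hx
        by_cases hxv : x = v
        · rw [hxv, hfv]; omega
        · rw [hfo x hxv]
          have := hf2 x (Finset.mem_erase.2 ⟨hxv, hx⟩)
          omega
      · intro x hx
        by_cases hxv : x = v
        · subst hxv
          refine ⟨H, hH, hvH, fun u hu hlt => hs u hu ?_⟩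
          rintro rfl; omega
        · have hx' := Finset.mem_erase.2 ⟨hxv, hx⟩
          obtain ⟨H', h1, h2, h3⟩ := hf3 x hx'
          refine ⟨H', h1, h2, fun u hu hlt => ?_⟩
          have hxm := hf2 x hx'
          rw [hfo x hxv] at hlt
          by_cases huv : u = v
          · rw [huv, hfv] at hlt; omega
          · rw [hfo u huv] at hlt
            exact h3 u (Finset.mem_erase.2 ⟨huv, hu⟩) hlt
  obtain ⟨f, h1, _, h3⟩ := key _ Finset.univ rfl
  refine ⟨f, fun x y hxy => h1 (by simp) (by simp) hxy, fun v => ?_⟩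
  obtain ⟨H, a, b, c⟩ := h3 v (Finset.mem_univ _)
  exact ⟨H, a, b, fun u => c u (Finset.mem_univ _)⟩

/-- Weak reachability. -/
def WR (G : SimpleGraph V) (f : V → ℕ) (n : ℕ) (v u : V) : Prop := SW G {x | f u ≤ f x} n v u

lemma wr_le {f : V → ℕ} {n : ℕ} {v u : V} (h : WR G f n v u) : f u ≤ f v := by
  have h1 : v ∈ {x | f u ≤ f x} := SW.left h
  exact h1

/-- Bound on the number of weakly reachable vertices. -/
def wBound (h : ℕ) : ℕ → ℕ
  | 0 => 1
  | n + 1 => 1 + h * wBound h n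

lemma wr_card [Fintype V] {R h : ℕ} {f : V → ℕ} (hf : Function.Injective f)
    (hH : ∀ v, ∃ H : Finset V, H.card ≤ h ∧ v ∉ H ∧
      ∀ u, f u < f v → ¬ SW G (H : Set V)ᶜ R v u) (n : ℕ) :
    n ≤ R → ∀ v, (Finset.univ.filter (fun u => WR G f n v u)).card ≤ wBound h n := by
  induction n with
  | zero =>
    intro _ v
    have : Finset.univ.filter (fun u => WR G f 0 v u) ⊆ {v} := by
      intro u hu
      have := (Finset.mem_filter.1 hu).2.2
      simp [this]
    exact (Finset.card_le_card this).trans (by simp [wBound])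
  | succ n ih =>
    intro hn v
    obtain ⟨H, hHc, hvH, hs⟩ := hH v
    have hsub : Finset.univ.filter (fun u => WR G f (n + 1) v u) ⊆
        {v} ∪ H.biUnion (fun y => Finset.univ.filter (fun u => WR G f n y u)) := by
      intro u hu
      have hw : WR G f (n + 1) v u := (Finset.mem_filter.1 hu).2
      by_cases huv : u = v
      · simp [huv]
      · have hlt : f u < f v := lt_of_le_of_ne (wr_le hw) (fun h => huv (hf h))
        rcases SW.avoid_or_hit (H := (H : Set V)) hw (by simpa using hvH) with h1 | h1
        · exact absurd ((h1.mono hn).mono_set Set.inter_subset_right) (hs u hlt)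
        · obtain ⟨y, hy, m, hm, h2⟩ := h1
          apply Finset.mem_union_right
          refine Finset.mem_biUnion.2 ⟨y, hy, ?_⟩
          simp only [Finset.mem_filter, Finset.mem_univ, true_and]
          exact h2.mono (by omega)
    refine (Finset.card_le_card hsub).trans ((Finset.card_union_le _ _).trans ?_)
    rw [Finset.card_singleton, wBound]
    gcongr
    refine (Finset.card_biUnion_le_card_mul _ _ (wBound h n) ?_).trans ?_
    · intro y _; exact ih (by omega) y
    · gcongr

lemma exists_coloring [Fintype V] {R b : ℕ} {f : V → ℕ} (hf : Function.Injective f)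
    (hb : ∀ v, (Finset.univ.filter (fun u => WR G f R v u)).card ≤ b) :
    ∃ φ : V → Fin (b + 1), ∀ v u, WR G f R v u → u ≠ v → φ u ≠ φ v := by
  have key : ∀ m, ∃ φ : V → Fin (b + 1), ∀ v u, f v < m → WR G f R v u → u ≠ v → φ u ≠ φ v := by
    intro m
    induction m with
    | zero => exact ⟨fun _ => 0, by simp⟩
    | succ m ih =>
      obtain ⟨φ, hφ⟩ := ih
      by_cases hex : ∃ v, f v = m
      · obtain ⟨v, hv⟩ := hex
        have : ∃ c : Fin (b + 1), c ∉ (Finset.univ.filter (fun u => WR G f R v u)).image φ := by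
          by_contra hcon
          push Not at hcon
          have h1 : (Finset.univ : Finset (Fin (b + 1))) ⊆
            (Finset.univ.filter (fun u => WR G f R v u)).image φ := fun c _ => hcon c
          have h2 := (Finset.card_le_card h1).trans (Finset.card_image_le.trans (hb v))
          simp at h2
        obtain ⟨c, hc⟩ := this
        refine ⟨Function.update φ v c, ?_⟩
        intro x u hx hw hux
        have hle : f u ≤ f x := wr_le hw
        have hne : f u ≠ f x := fun h => hux (hf h)
        have huv : u ≠ v := by rintro rfl; omega
        rw [Function.update_of_ne huv]
        by_cases hxv : x = v
        · subst hxv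
          rw [Function.update_self]
          intro h
          exact hc (Finset.mem_image.2 ⟨u, by simpa using hw, h⟩)
        · rw [Function.update_of_ne hxv]
          have : f x ≠ m := fun h => hxv (hf (h.trans hv.symm))
          exact hφ x u (by omega) hw hux
      · refine ⟨φ, fun x u hx hw hux => hφ x u ?_ hw hux⟩
        have : f x ≠ m := fun h => hex ⟨x, h⟩
        omega
  obtain ⟨φ, hφ⟩ := key (Finset.univ.sup f + 1)
  refine ⟨φ, fun v u => hφ v u ?_⟩
  have := Finset.le_sup (f := f) (Finset.mem_univ v)
  omega

/-- Diameter bounds. -/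
def gB : ℕ → ℕ
  | 0 => 0
  | p + 1 => 2 * gB p + 2

lemma gB_mono {p P : ℕ} (h : p ≤ P) : gB p ≤ gB P := by
  induction P, h using Nat.le_induction with
  | base => exact le_rfl
  | succ P _ ih => simp only [gB]; omega

lemma conn_small [Finite V] {q P : ℕ} {f : V → ℕ} {φ : V → Fin q}
    (hφ : ∀ v u, WR G f (gB P) v u → u ≠ v → φ u ≠ φ v) (p : ℕ) :
    p ≤ P → ∀ (X : Set V) (C : Finset (Fin q)), Conn G X → (∀ x ∈ X, φ x ∈ C) → C.card ≤ p →
      (∀ a ∈ X, ∀ b ∈ X, SW G X (gB p) a b) ∧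
      (∀ m ∈ X, (∀ x ∈ X, f m ≤ f x) → ∀ x ∈ X, x = m ∨ φ x ≠ φ m) := by
  induction p with
  | zero =>
    intro _ X C _ hC hc
    have hC0 : C = ∅ := Finset.card_eq_zero.1 (by omega)
    have hX : ∀ x, x ∉ X := by
      intro x hx
      have := hC x hx
      rw [hC0] at this
      simp at this
    exact ⟨fun a ha => absurd ha (hX a), fun a ha => absurd ha (hX a)⟩
  | succ p ih =>
    intro hp X C hX hC hc
    have main : ∀ m ∈ X, (∀ x ∈ X, f m ≤ f x) →
        ∀ x ∈ X, SW G X (gB p + 1) m x ∧ (x = m ∨ φ x ≠ φ m) := by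
      intro m hm hmin
      set Y : Set V := {x | x ∈ X ∧ φ x ≠ φ m} with hY
      have hYX : Y ⊆ X := fun x hx => hx.1
      have hD : ∀ n ∈ Y, G.Adj m n → ∀ z, RT G Y n z → SW G X (gB p + 1) m z := by
        intro n hn ha z hz
        have hsub : {z | RT G Y n z} ⊆ Y := fun z hz => RT.mem hz hn
        have h1 := (ih (by omega) {z | RT G Y n z} (C.erase (φ m)) (conn_comp Y n) ?_ ?_).1
          n (RT.refl n) z hz
        · exact SW.cons hm ha (h1.mono_set (hsub.trans hYX))
        · intro x hx
          exact Finset.mem_erase.2 ⟨(hsub hx).2, hC x (hsub hx).1⟩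
        · rw [Finset.card_erase_of_mem (hC m hm)]; omega
      have key : ∀ x, RT G X m x →
          x = m ∨ (φ x ≠ φ m ∧ ∃ n ∈ Y, G.Adj m n ∧ RT G Y n x) := by
        intro x hx
        induction hx with
        | refl => exact Or.inl rfl
        | @tail b c hmb hbc ih2 =>
          by_cases hcm : c = m
          · exact Or.inl hcm
          have hbS : SW G X (gB p + 1) m b := by
            rcases ih2 with h | ⟨_, n, hn, ha, hz⟩
            · rw [h]; exact SW.refl _ hm
            · exact hD n hn ha b hz
          have hcφ : φ c ≠ φ m := by
            have h1 : SW G X (gB p + 2) m c := hbS.snoc hbc.1 hbc.2.2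
            have h2 : WR G f (gB P) c m := by
              refine (h1.symm.mono_set (fun x hx => hmin x hx)).mono ?_
              have h3 := gB_mono hp
              simp only [gB] at h3
              omega
            exact (hφ c m h2 (Ne.symm hcm)).symm
          refine Or.inr ⟨hcφ, ?_⟩
          have hcY : c ∈ Y := ⟨hbc.2.2, hcφ⟩
          rcases ih2 with h | ⟨hb, n, hn, ha, hz⟩
          · exact ⟨c, hcY, h ▸ hbc.1, RT.refl c⟩
          · exact ⟨n, hn, ha, hz.trans (RT.single hbc.1 ⟨hbc.2.1, hb⟩ hcY)⟩
      intro x hx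
      rcases key x (hX m hm x hx) with h | ⟨h, n, hn, ha, hz⟩
      · exact ⟨by rw [h]; exact SW.refl _ hm, Or.inl h⟩
      · exact ⟨hD n hn ha x hz, Or.inr h⟩
    refine ⟨fun a ha b hb => ?_, fun m hm hmin x hx => (main m hm hmin x hx).2⟩
    obtain ⟨m, hm, hmin⟩ := Set.exists_min_image X f (Set.toFinite _) ⟨a, ha⟩
    have h1 := (main m hm hmin a ha).1.symm.trans (main m hm hmin b hb).1
    refine h1.mono ?_
    simp only [gB]
    omega

lemma treeOrd_of [Finite V] {q P : ℕ} {f : V → ℕ} (hf : Function.Injective f) {φ : V → Fin q}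
    (hφ : ∀ v u, WR G f (gB P) v u → u ≠ v → φ u ≠ φ v) (I : Finset (Fin q)) (hI : I.card ≤ P) :
    TreeOrd G {x | φ x ∈ I} q φ (fun u v => RT G {x | φ x ∈ I ∧ f u ≤ f x} u v) := by
  have hle : ∀ u v, RT G {x | φ x ∈ I ∧ f u ≤ f x} u v → f u ≤ f v := by
    intro u v h
    rcases h.eq_or_mem with h | h
    · rw [h]
    · exact h.2.2
  have hmono : ∀ {x y a b : V}, f x ≤ f y → RT G {w | φ w ∈ I ∧ f y ≤ f w} a b →
      RT G {w | φ w ∈ I ∧ f x ≤ f w} a b := by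
    intro x y a b h h'
    refine RT.mono ?_ h'
    intro w hw
    exact ⟨hw.1, h.trans hw.2⟩
  have hch : ∀ x y z, RT G {w | φ w ∈ I ∧ f x ≤ f w} x z → RT G {w | φ w ∈ I ∧ f y ≤ f w} y z →
      RT G {w | φ w ∈ I ∧ f x ≤ f w} x y ∨ RT G {w | φ w ∈ I ∧ f y ≤ f w} y x := by
    intro x y z hx hy
    rcases le_total (f x) (f y) with h | h
    · exact Or.inl (hx.trans (hmono h hy).symm)
    · exact Or.inr (hy.trans (hmono h hx).symm)
  have hci : ∀ x y, RT G {w | φ w ∈ I ∧ f x ≤ f w} x y → φ x = φ y → x = y := by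
    intro x y h hc
    by_contra hne
    rcases h.eq_or_mem with h' | ⟨hx, _⟩
    · exact hne h'
    have hsub : ∀ z, RT G {w | φ w ∈ I ∧ f x ≤ f w} x z → φ z ∈ I ∧ f x ≤ f z := by
      intro z hz
      have h1 : z ∈ {w | φ w ∈ I ∧ f x ≤ f w} := RT.mem hz hx
      exact h1
    have := (conn_small hφ I.card hI {z | RT G {w | φ w ∈ I ∧ f x ≤ f w} x z} I
      (conn_comp _ x) (fun z hz => (hsub z hz).1) le_rfl).2 x (RT.refl x)
      (fun z hz => (hsub z hz).2) y h
    rcases this with h | h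
    · exact hne h.symm
    · exact h hc.symm
  refine ⟨fun x => RT.refl x, ?_, ?_, hch, ?_, ?_, ?_⟩
  · intro x y z hxy hyz
    exact hxy.trans (hmono (hle _ _ hxy) hyz)
  · intro x y hxy hyx
    exact hf (le_antisymm (hle _ _ hxy) (hle _ _ hyx))
  · intro x hx y hy ha
    rcases le_total (f x) (f y) with h | h
    · exact Or.inl (RT.single ha ⟨hx, le_rfl⟩ ⟨hy, h⟩)
    · exact Or.inr (RT.single ha.symm ⟨hy, le_rfl⟩ ⟨hx, h⟩)
  · intro x y z hx hy hc
    rcases hch x y z hx hy with h | h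
    · exact hci x y h hc
    · exact (hci y x h hc.symm).symm
  · intro T hT hTc hTn
    obtain ⟨r, hr, hmin⟩ := Set.exists_min_image T f (Set.toFinite _) hTn
    refine ⟨r, hr, fun x hx => RT.mono ?_ (hTc r hr x hx)⟩
    intro w hw
    exact ⟨hT hw, hmin w hw⟩

end WeakColoring

/-- For every class `C` of finite simple graphs of bounded expansion and
every positive integer `k` there is a constant `c` (depending only on `k` and `C`)
such that every graph `G` in `C` satisfies `f_k(G) ≤ c`. -/
theorem fStrong_bounded_of_boundedExpansion (C : GraphClass) (hC : BoundedExpansion C)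
    (k : ℕ) (hk : 1 ≤ k) :
    ∃ c : ℕ, ∀ (n : ℕ), ∀ G ∈ C n, fStrong G k ≤ c := by
  obtain ⟨a, ha⟩ := sparse_of hC (gB (k + 1))
  set q : ℕ := wBound (hBound (gB (k + 1)) a) (gB (k + 1)) + 1 with hq
  refine ⟨Fintype.card (Finset (Fin q) × IdxA q k), fun n G hG => ?_⟩
  obtain ⟨f, hf, hH⟩ := exists_order (fun S hS => exists_hard (ha n G hG) S hS)
  obtain ⟨φ, hφ⟩ := exists_coloring hf (fun v => wr_card hf hH _ le_rfl v)
  have hF : ∀ I : Finset (Fin q), ∃ F : IdxA q k → Set (Fin n),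
      (∀ i, IsStrongForest G k (F i)) ∧ (I.card ≤ k + 1 →
      ∀ (u v : Fin n) (T : Set (Fin n)), G.Adj u v → u ∈ T → v ∈ T → T ⊆ {x | φ x ∈ I} →
        Conn G T → (G.induce T).IsAcyclic → k + 1 ≤ T.ncard → ∃ i, u ∈ F i ∧ v ∈ F i) := by
    intro I
    by_cases hI : I.card ≤ k + 1
    · obtain ⟨F, h1, h2⟩ := treeOrd_cover (k := k) (treeOrd_of hf hφ I hI)
      exact ⟨F, h1, fun _ => h2⟩
    · refine ⟨fun _ => ∅, fun _ => ⟨SimpleGraph.IsAcyclic.of_subsingleton, fun v => ?_⟩,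
        fun h => absurd h hI⟩
      exact absurd v.2 (Set.notMem_empty _)
  choose F hF1 hF2 using hF
  refine fStrong_le (fun x : Finset (Fin q) × IdxA q k => F x.1 x.2) (fun x => hF1 x.1 x.2) ?_
  intro e he
  obtain ⟨u, v, rfl, huv, T, hu, hv, hT, hac, hcard⟩ := kvalid_tree hk he
  have hTf := Set.toFinite T
  have hIc : (hTf.toFinset.image φ).card ≤ k + 1 := by
    refine Finset.card_image_le.trans ?_
    rw [← Set.ncard_eq_toFinset_card T hTf, hcard]
  obtain ⟨i, h1, h2⟩ := hF2 (hTf.toFinset.image φ) hIc u v T huv hu hv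
    (fun x hx => Finset.mem_image.2 ⟨x, by simpa using hx, rfl⟩) hT hac hcard.ge
  refine ⟨(hTf.toFinset.image φ, i), huv, ?_⟩
  intro x hx
  rcases Sym2.mem_iff.1 hx with rfl | rfl
  · exact h1
  · exact h2

end InducedArboricity
end

section
/- For every class C of finite simple graphs of bounded expansion there is an absolute constant c such that every graph G in C has adjacent closed vertex-distinguishing number dis[G] ≤ c. In particular such a constant exists for the class of all planar graphs. -/
open scoped Classical
open scoped Function

namespace InducedArboricity

section Aux

theorem mem_closedNbr' {V : Type*} (G : SimpleGraph V) (x v : V) :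
    x ∈ closedNbr G v ↔ x = v ∨ G.Adj v x := by
  simp [closedNbr]

/-- closed neighbourhood sum with values in `ZMod q` -/
noncomputable def nsum {V : Type*} [Fintype V] (G : SimpleGraph V) {q : ℕ}
    (f : V → ZMod q) (v : V) : ZMod q :=
  ∑ x : V, if x ∈ closedNbr G v then f x else 0

/-- Linear greedy lemma. -/
theorem linear_greedy {V : Type*} [Fintype V] {q : ℕ} [Fact q.Prime] (T : Finset V) (κ : V → ℕ)
    (hκ : ∀ x ∈ T, ∀ y ∈ T, κ x = κ y → x = y)
    (E : Finset (V → ZMod q)) (hE : ∀ a ∈ E, ∃ t ∈ T, a t ≠ 0)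
    (hcnt : ∀ t ∈ T, (E.filter (fun a => a t ≠ 0 ∧ ∀ x ∈ T, a x ≠ 0 → κ x ≤ κ t)).card < q) :
    ∃ f : V → ZMod q, (∀ x, x ∉ T → f x = 0) ∧ ∀ a ∈ E, ∑ x ∈ T, a x * f x ≠ 0 := by
  have key : ∀ m : ℕ, ∃ f : V → ZMod q, (∀ x, x ∉ T → f x = 0) ∧
      ∀ a ∈ E, (∀ x ∈ T, a x ≠ 0 → κ x < m) → ∑ x ∈ T, a x * f x ≠ 0 := by
    intro m
    induction m with
    | zero =>
      refine ⟨fun _ => 0, fun _ _ => rfl, fun a ha h => ?_⟩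
      obtain ⟨t, ht, hat⟩ := hE a ha
      exact absurd (h t ht hat) (by omega)
    | succ m ih =>
      obtain ⟨f, hf0, hf⟩ := ih
      by_cases ht : ∃ t ∈ T, κ t = m
      · obtain ⟨t, htT, htm⟩ := ht
        set F := E.filter (fun a => a t ≠ 0 ∧ ∀ x ∈ T, a x ≠ 0 → κ x ≤ κ t) with hF
        have hlt : (F.image (fun a => -(∑ x ∈ T.erase t, a x * f x) / a t)).card <
            (Finset.univ : Finset (ZMod q)).card := by
          refine lt_of_le_of_lt Finset.card_image_le ?_
          rw [Finset.card_univ, ZMod.card]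
          exact hcnt t htT
        obtain ⟨y, -, hy⟩ := Finset.exists_mem_notMem_of_card_lt_card hlt
        refine ⟨Function.update f t y, ?_, ?_⟩
        · intro x hx
          rw [Function.update_of_ne (by rintro rfl; exact hx htT)]
          exact hf0 x hx
        · intro a ha h
          have hsum : ∑ x ∈ T.erase t, a x * Function.update f t y x =
              ∑ x ∈ T.erase t, a x * f x := by
            refine Finset.sum_congr rfl fun x hx => ?_
            rw [Function.update_of_ne (Finset.ne_of_mem_erase hx)]
          by_cases hat : a t = 0
          · have h1 := hf a ha (by
              intro x hx hax
              have h2 := h x hx hax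
              have h3 : κ x ≠ m := by
                intro h3
                have := hκ x hx t htT (by omega)
                subst this
                exact hax hat
              omega)
            rw [← Finset.add_sum_erase _ _ htT] at h1 ⊢
            rw [hsum, hat]
            rw [hat] at h1
            simpa using h1
          · rw [← Finset.add_sum_erase _ _ htT, hsum, Function.update_self]
            intro h0
            apply hy
            rw [Finset.mem_image]
            refine ⟨a, ?_, ?_⟩
            · rw [hF, Finset.mem_filter]
              refine ⟨ha, hat, fun x hx hax => ?_⟩
              have := h x hx hax
              omega
            · rw [div_eq_iff hat]
              linear_combination -h0
      · refine ⟨f, hf0, fun a ha h => hf a ha fun x hx hax => ?_⟩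
        have h2 := h x hx hax
        have h3 : κ x ≠ m := fun h3 => ht ⟨x, hx, h3⟩
        omega
  obtain ⟨f, hf0, hf⟩ := key (T.sup κ + 1)
  exact ⟨f, hf0, fun a ha => hf a ha fun x hx _ => Nat.lt_succ_of_le (Finset.le_sup hx)⟩

/-- difference form of an edge, restricted to `T` -/
noncomputable def form {V : Type*} (G : SimpleGraph V) (q : ℕ) (T : Finset V) (e : V × V) :
    V → ZMod q :=
  fun x => if x ∈ T then (if x ∈ closedNbr G e.1 then 1 else 0) -
    (if x ∈ closedNbr G e.2 then 1 else 0) else 0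

theorem form_ne {V : Type*} (G : SimpleGraph V) {q : ℕ} [Fact q.Prime] {T : Finset V}
    {e : V × V} {x : V} (hx : x ∈ T) :
    form G q T e x ≠ 0 ↔ ¬ (x ∈ closedNbr G e.1 ↔ x ∈ closedNbr G e.2) := by
  unfold form
  rw [if_pos hx]
  by_cases h1 : x ∈ closedNbr G e.1 <;> by_cases h2 : x ∈ closedNbr G e.2 <;> simp [h1, h2]

theorem master {V : Type*} [Fintype V] (G : SimpleGraph V) {q : ℕ} [Fact q.Prime] (T : Finset V)
    (κ : V → ℕ) (hκ : ∀ x ∈ T, ∀ y ∈ T, κ x = κ y → x = y) (E : Finset (V × V))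
    (hE : ∀ e ∈ E, ∃ t ∈ T, ¬ (t ∈ closedNbr G e.1 ↔ t ∈ closedNbr G e.2))
    (hcnt : ∀ t ∈ T, ∃ F : Finset (V → ZMod q), F.card < q ∧ ∀ e ∈ E,
      ¬ (t ∈ closedNbr G e.1 ↔ t ∈ closedNbr G e.2) →
      (∀ x ∈ T, ¬ (x ∈ closedNbr G e.1 ↔ x ∈ closedNbr G e.2) → κ x ≤ κ t) → form G q T e ∈ F) :
    ∃ f : V → ZMod q, ∀ e ∈ E, nsum G f e.1 ≠ nsum G f e.2 := by
  obtain ⟨f, hf0, hf⟩ := linear_greedy (q := q) T κ hκ (E.image (form G q T))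
    (by
      intro a ha
      obtain ⟨e, he, rfl⟩ := Finset.mem_image.1 ha
      obtain ⟨t, ht, h⟩ := hE e he
      exact ⟨t, ht, (form_ne G ht).2 h⟩)
    (by
      intro t ht
      obtain ⟨F, hF, h⟩ := hcnt t ht
      refine lt_of_le_of_lt (Finset.card_le_card ?_) hF
      intro a ha
      obtain ⟨ha1, ha2, ha3⟩ := Finset.mem_filter.1 ha
      obtain ⟨e, he, rfl⟩ := Finset.mem_image.1 ha1
      exact h e he ((form_ne G ht).1 ha2) fun x hx hx2 => ha3 x hx ((form_ne G hx).2 hx2))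
  refine ⟨f, fun e he h => hf _ (Finset.mem_image_of_mem _ he) ?_⟩
  have h1 : ∑ x ∈ T, form G q T e x * f x = ∑ x, form G q T e x * f x := by
    refine Finset.sum_subset (Finset.subset_univ _) fun x _ hx => ?_
    rw [hf0 x hx, mul_zero]
  rw [h1, ← sub_eq_zero.2 h]
  unfold nsum
  rw [← Finset.sum_sub_distrib]
  refine Finset.sum_congr rfl fun x _ => ?_
  unfold form
  by_cases hx : x ∈ T
  · rw [if_pos hx]
    by_cases h1 : x ∈ closedNbr G e.1 <;> by_cases h2 : x ∈ closedNbr G e.2 <;> simp [h1, h2]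
  · rw [if_neg hx, hf0 x hx]; simp

/-- back-relation: adjacent or having a common later neighbour -/
def R2 {V : Type*} (G : SimpleGraph V) (ρ : V → ℕ) (x y : V) : Prop :=
  ρ x < ρ y ∧ (G.Adj x y ∨ ∃ z, ρ y < ρ z ∧ G.Adj z x ∧ G.Adj z y)

/-- a good order and colouring -/
structure GoodCol {V : Type*} (G : SimpleGraph V) (ρ : V → ℕ) {α : Type*} (c : V → α) : Prop where
  inj : ∀ x y, ρ x = ρ y → x = y
  c1 : ∀ x y, R2 G ρ x y → c x ≠ c y
  c2 : ∀ x y v, R2 G ρ x v → R2 G ρ y v → c x = c y → x = y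
  c3 : ∀ x y z, R2 G ρ x y → R2 G ρ y z → c x ≠ c z

theorem GoodCol.ne {V : Type*} {G : SimpleGraph V} {ρ : V → ℕ} {α : Type*} {c : V → α}
    (h : GoodCol G ρ c) {x y : V} (hxy : G.Adj x y) : c x ≠ c y := by
  rcases lt_trichotomy (ρ x) (ρ y) with h1 | h1 | h1
  · exact h.c1 x y ⟨h1, Or.inl hxy⟩
  · exact absurd (h.inj _ _ h1) hxy.ne
  · exact (h.c1 y x ⟨h1, Or.inl hxy.symm⟩).symm

theorem GoodCol.back {V : Type*} {G : SimpleGraph V} {ρ : V → ℕ} {α : Type*} {c : V → α}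
    (h : GoodCol G ρ c) {x y v : V} (hx : ρ x < ρ v) (hy : ρ y < ρ v) (hxa : G.Adj x v)
    (hya : G.Adj y v) (hc : c x = c y) : x = y :=
  h.c2 x y v ⟨hx, Or.inl hxa⟩ ⟨hy, Or.inl hya⟩ hc

theorem caseA {V : Type*} [Fintype V] {G : SimpleGraph V} {ρ : V → ℕ} {α : Type*} {c : V → α}
    (h : GoodCol G ρ c) (i j l : α) (q : ℕ) [Fact q.Prime] :
    ∃ f : V → ZMod q, ∀ u v w, ρ u < ρ v → G.Adj u v → c u = i → c v = j → c w = l →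
      ρ v < ρ w → G.Adj v w → ¬ G.Adj u w → nsum G f u ≠ nsum G f v := by
  let Q : V → V → V → Prop := fun v u w => ρ u < ρ v ∧ G.Adj u v ∧ c u = i ∧ c v = j ∧ c w = l ∧
      ρ v < ρ w ∧ G.Adj v w ∧ ¬ G.Adj u w
  have hch : ∀ v, ∃ u w, (∃ u w, Q v u w) → Q v u w := by
    intro v
    by_cases hv : ∃ u w, Q v u w
    · obtain ⟨u, w, huw⟩ := hv
      exact ⟨u, w, fun _ => huw⟩
    · exact ⟨v, v, fun h => absurd h hv⟩
  choose U W hUW using hch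
  let R : Finset V := Finset.univ.filter fun v => ∃ u w, Q v u w
  have hR : ∀ v ∈ R, Q v (U v) (W v) := fun v hv => hUW v (Finset.mem_filter.1 hv).2
  have hWinj : ∀ v ∈ R, ∀ v' ∈ R, W v = W v' → v = v' := by
    intro v hv v' hv' hw
    obtain ⟨-, -, -, a4, -, a6, a7, -⟩ := hR v hv
    obtain ⟨-, -, -, b4, -, b6, b7, -⟩ := hR v' hv'
    rw [← hw] at b6 b7
    exact h.back a6 b6 a7 b7 (a4.trans b4.symm)
  have hg : ∀ t, ∃ v, ∀ v' ∈ R, W v' = t → v = v' := by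
    intro t
    by_cases ht : ∃ v ∈ R, W v = t
    · obtain ⟨v, hv, rfl⟩ := ht
      exact ⟨v, fun v' hv' hw => hWinj v hv v' hv' hw.symm⟩
    · exact ⟨t, fun v' hv' hw => absurd ⟨v', hv', hw⟩ ht⟩
  choose g hg using hg
  have hgW : ∀ v ∈ R, g (W v) = v := fun v hv => hg _ v hv rfl
  have claim : ∀ v ∈ R, ∀ v' ∈ R, v' ≠ v →
      ¬ (W v' ∈ closedNbr G (U v) ↔ W v' ∈ closedNbr G v) → ρ v' < ρ v := by
    intro v hv v' hv' hne hw
    obtain ⟨a1, a2, a3, a4, a5, a6, a7, a8⟩ := hR v hv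
    obtain ⟨b1, b2, b3, b4, b5, b6, b7, b8⟩ := hR v' hv'
    have hor : W v' ∈ closedNbr G (U v) ∨ W v' ∈ closedNbr G v := by tauto
    rw [mem_closedNbr', mem_closedNbr'] at hor
    rcases hor with (hx | hx) | (hx | hx)
    · rw [hx] at b6; omega
    · by_contra hlt
      have hlt' : ρ v < ρ v' := by
        have : ρ v ≠ ρ v' := fun hh => hne (h.inj _ _ hh).symm
        omega
      have : U v = U v' := h.c2 _ _ v' ⟨by omega, Or.inr ⟨W v', b6, hx.symm, b7.symm⟩⟩
        ⟨b1, Or.inl b2⟩ (a3.trans b3.symm)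
      rw [← this] at b8
      exact b8 hx
    · rw [hx] at b6; omega
    · by_contra hlt
      exact hne (h.back b6 (by omega) b7 hx (b4.trans a4.symm))
  obtain ⟨f, hf⟩ := master G (q := q) (R.image W) (fun t => ρ (g t))
    (by
      intro x hx y hy hxy
      obtain ⟨v, hv, rfl⟩ := Finset.mem_image.1 hx
      obtain ⟨v', hv', rfl⟩ := Finset.mem_image.1 hy
      simp only [hgW v hv, hgW v' hv'] at hxy
      rw [h.inj _ _ hxy])
    (R.image fun v => (U v, v))
    (by
      intro e he
      obtain ⟨v, hv, rfl⟩ := Finset.mem_image.1 he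
      obtain ⟨a1, a2, a3, a4, a5, a6, a7, a8⟩ := hR v hv
      refine ⟨W v, Finset.mem_image_of_mem _ hv, ?_⟩
      rw [mem_closedNbr', mem_closedNbr']
      have : W v ≠ U v := by intro hh; rw [hh] at a6; omega
      tauto)
    (by
      intro t ht
      obtain ⟨v, hv, rfl⟩ := Finset.mem_image.1 ht
      refine ⟨{form G q (R.image W) (U v, v)}, by simpa using (Fact.out : q.Prime).one_lt, ?_⟩
      intro e he h1 h2
      obtain ⟨v', hv', rfl⟩ := Finset.mem_image.1 he
      by_cases hvv : v = v'
      · subst hvv; simp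
      · exfalso
        have h3 := claim v' hv' v hv hvv h1
        obtain ⟨a1, a2, a3, a4, a5, a6, a7, a8⟩ := hR v' hv'
        have h4 := h2 (W v') (Finset.mem_image_of_mem _ hv') (by
          rw [mem_closedNbr', mem_closedNbr']
          have : W v' ≠ U v' := by intro hh; rw [hh] at a6; omega
          tauto)
        simp only [hgW v hv, hgW v' hv'] at h4
        omega)
  refine ⟨f, ?_⟩
  intro u v w h1 h2 h3 h4 h5 h6 h7 h8
  have hv : v ∈ R := Finset.mem_filter.2 ⟨Finset.mem_univ _, u, w, h1, h2, h3, h4, h5, h6, h7, h8⟩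
  obtain ⟨a1, a2, a3, -⟩ := hR v hv
  have : u = U v := h.back h1 a1 h2 a2 (h3.trans a3.symm)
  rw [this]
  exact hf _ (Finset.mem_image_of_mem (fun v => (U v, v)) hv)

theorem caseC {V : Type*} [Fintype V] {G : SimpleGraph V} {ρ : V → ℕ} {α : Type*} {c : V → α}
    (h : GoodCol G ρ c) (i j l : α) (q : ℕ) [Fact q.Prime] (hq : 5 ≤ q) :
    ∃ f : V → ZMod q, ∀ u v w, ρ u < ρ v → G.Adj u v → c u = i → c v = j → c w = l →
      ρ u < ρ w → G.Adj u w → ¬ G.Adj v w → w ≠ v →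
      (∀ v', ρ u < ρ v' → G.Adj u v' → c v' = j → v' = v) → nsum G f u ≠ nsum G f v := by
  let Q : V → V → V → Prop := fun v u w => ρ u < ρ v ∧ G.Adj u v ∧ c u = i ∧ c v = j ∧ c w = l ∧
      ρ u < ρ w ∧ G.Adj u w ∧ ¬ G.Adj v w ∧ w ≠ v ∧
      (∀ v', ρ u < ρ v' → G.Adj u v' → c v' = j → v' = v)
  have hch : ∀ v, ∃ u w, (∃ u w, Q v u w) → Q v u w := by
    intro v
    by_cases hv : ∃ u w, Q v u w
    · obtain ⟨u, w, huw⟩ := hv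
      exact ⟨u, w, fun _ => huw⟩
    · exact ⟨v, v, fun h => absurd h hv⟩
  choose U W hUW using hch
  let R : Finset V := Finset.univ.filter fun v => ∃ u w, Q v u w
  have hR : ∀ v ∈ R, Q v (U v) (W v) := fun v hv => hUW v (Finset.mem_filter.1 hv).2
  have hUinj : ∀ v ∈ R, ∀ v' ∈ R, U v = U v' → v = v' := by
    intro v hv v' hv' hw
    obtain ⟨a1, a2, a3, a4, a5, a6, a7, a8, a9, a10⟩ := hR v hv
    obtain ⟨b1, b2, b3, b4, b5, b6, b7, b8, b9, b10⟩ := hR v' hv'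
    rw [← hw] at b10
    exact b10 v a1 a2 a4
  have hWinj : ∀ v ∈ R, ∀ v' ∈ R, W v = W v' → v = v' := by
    intro v hv v' hv' hw
    obtain ⟨a1, a2, a3, a4, a5, a6, a7, a8, a9, a10⟩ := hR v hv
    obtain ⟨b1, b2, b3, b4, b5, b6, b7, b8, b9, b10⟩ := hR v' hv'
    rw [← hw] at b6 b7
    exact hUinj v hv v' hv' (h.back a6 b6 a7 b7 (a3.trans b3.symm))
  have hg : ∀ t, ∃ v, ∀ v' ∈ R, W v' = t → v = v' := by
    intro t
    by_cases ht : ∃ v ∈ R, W v = t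
    · obtain ⟨v, hv, rfl⟩ := ht
      exact ⟨v, fun v' hv' hw => hWinj v hv v' hv' hw.symm⟩
    · exact ⟨t, fun v' hv' hw => absurd ⟨v', hv', hw⟩ ht⟩
  choose g hg using hg
  have hgW : ∀ v ∈ R, g (W v) = v := fun v hv => hg _ v hv rfl
  have claim : ∀ v ∈ R, ∀ x ∈ R, x ≠ v → ρ (U v) ≤ ρ (U x) →
      ¬ (W x ∈ closedNbr G (U v) ↔ W x ∈ closedNbr G v) → ρ v < ρ (W x) ∧ G.Adj v (W x) := by
    intro v hv x hx hne hle hw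
    obtain ⟨a1, a2, a3, a4, a5, a6, a7, a8, a9, a10⟩ := hR v hv
    obtain ⟨b1, b2, b3, b4, b5, b6, b7, b8, b9, b10⟩ := hR x hx
    have hUne : U x ≠ U v := fun hh => hne (hUinj x hx v hv hh)
    have hor : W x ∈ closedNbr G (U v) ∨ W x ∈ closedNbr G v := by tauto
    rw [mem_closedNbr', mem_closedNbr'] at hor
    rcases hor with (hx | hx) | (hx | hx)
    · rw [hx] at b6; omega
    · exact absurd (h.back b6 (by omega) b7 hx (b3.trans a3.symm)) hUne
    · rw [hx] at b6 b7
      exact absurd (h.back b6 a1 b7 a2 (b3.trans a3.symm)) hUne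
    · refine ⟨?_, hx⟩
      by_contra hlt
      have hlt' : ρ (W x) < ρ v := by
        have : ρ (W x) ≠ ρ v := fun hh => hx.ne (h.inj _ _ hh).symm
        omega
      exact hUne (h.c2 _ _ (W x) ⟨b6, Or.inl b7⟩
        ⟨by omega, Or.inr ⟨v, hlt', a2.symm, hx⟩⟩ (b3.trans a3.symm))
  have hself : ∀ v ∈ R, ¬ (W v ∈ closedNbr G (U v) ↔ W v ∈ closedNbr G v) := by
    intro v hv
    obtain ⟨a1, a2, a3, a4, a5, a6, a7, a8, a9, a10⟩ := hR v hv
    rw [mem_closedNbr', mem_closedNbr']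
    tauto
  obtain ⟨f, hf⟩ := master G (q := q) (R.image W) (fun t => ρ (U (g t)))
    (by
      intro x hx y hy hxy
      obtain ⟨v, hv, rfl⟩ := Finset.mem_image.1 hx
      obtain ⟨v', hv', rfl⟩ := Finset.mem_image.1 hy
      simp only [hgW v hv, hgW v' hv'] at hxy
      rw [hUinj v hv v' hv' (h.inj _ _ hxy)])
    (R.image fun v => (U v, v))
    (by
      intro e he
      obtain ⟨v, hv, rfl⟩ := Finset.mem_image.1 he
      exact ⟨W v, Finset.mem_image_of_mem _ hv, hself v hv⟩)
    (by
      intro t ht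
      obtain ⟨x, hx, rfl⟩ := Finset.mem_image.1 ht
      have hb : ∃ y, ∀ v, ρ v < ρ (W x) → G.Adj v (W x) → c v = j → v = y := by
        by_cases hy : ∃ y, ρ y < ρ (W x) ∧ G.Adj y (W x) ∧ c y = j
        · obtain ⟨y, h1, h2, h3⟩ := hy
          exact ⟨y, fun v h4 h5 h6 => h.back h4 h1 h5 h2 (h6.trans h3.symm)⟩
        · exact ⟨x, fun v h4 h5 h6 => absurd ⟨v, h4, h5, h6⟩ hy⟩
      obtain ⟨y, hy⟩ := hb
      refine ⟨{form G q (R.image W) (U x, x), form G q (R.image W) (U y, y)},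
        lt_of_le_of_lt Finset.card_le_two (by omega), ?_⟩
      intro e he h1 h2
      obtain ⟨v, hv, rfl⟩ := Finset.mem_image.1 he
      by_cases hvv : x = v
      · subst hvv; simp
      · have h4 := h2 (W v) (Finset.mem_image_of_mem _ hv) (hself v hv)
        simp only [hgW v hv, hgW x hx] at h4
        obtain ⟨h5, h6⟩ := claim v hv x hx hvv h4 h1
        have := hy v h5 h6 (hR v hv).2.2.2.1
        subst this
        simp)
  refine ⟨f, ?_⟩
  intro u v w h1 h2 h3 h4 h5 h6 h7 h8 h9 h10
  have hv : v ∈ R := Finset.mem_filter.2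
    ⟨Finset.mem_univ _, u, w, h1, h2, h3, h4, h5, h6, h7, h8, h9, h10⟩
  obtain ⟨a1, a2, a3, -⟩ := hR v hv
  have : u = U v := h.back h1 a1 h2 a2 (h3.trans a3.symm)
  rw [this]
  exact hf _ (Finset.mem_image_of_mem (fun v => (U v, v)) hv)

theorem caseD {V : Type*} [Fintype V] {G : SimpleGraph V} {ρ : V → ℕ} {α : Type*} {c : V → α}
    (h : GoodCol G ρ c) (i j : α) (q : ℕ) [Fact q.Prime] (hq : 5 ≤ q) :
    ∃ f : V → ZMod q, ∀ u v v', ρ u < ρ v → G.Adj u v → c u = i → c v = j →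
      ρ u < ρ v' → G.Adj u v' → c v' = j → v' ≠ v → nsum G f u ≠ nsum G f v := by
  let Ch : V → V → Prop := fun u v => ρ u < ρ v ∧ G.Adj u v ∧ c u = i ∧ c v = j
  have hch : ∀ u, ∃ s t, (∃ s t, Ch u s ∧ Ch u t ∧ s ≠ t) → Ch u s ∧ Ch u t ∧ s ≠ t := by
    intro u
    by_cases hv : ∃ s t, Ch u s ∧ Ch u t ∧ s ≠ t
    · obtain ⟨s, t, huw⟩ := hv
      exact ⟨s, t, fun _ => huw⟩
    · exact ⟨u, u, fun h => absurd h hv⟩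
  choose s t hst using hch
  let R : Finset V := Finset.univ.filter fun u => ∃ s t, Ch u s ∧ Ch u t ∧ s ≠ t
  have hR : ∀ u ∈ R, Ch u (s u) ∧ Ch u (t u) ∧ s u ≠ t u :=
    fun v hv => hst v (Finset.mem_filter.1 hv).2
  let T : Finset V := R.image s ∪ R.image t
  have hT : ∀ x ∈ T, ∃ u ∈ R, (x = s u ∨ x = t u) ∧ Ch u x := by
    intro x hx
    rcases Finset.mem_union.1 hx with hx | hx
    · obtain ⟨u, hu, rfl⟩ := Finset.mem_image.1 hx
      exact ⟨u, hu, Or.inl rfl, (hR u hu).1⟩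
    · obtain ⟨u, hu, rfl⟩ := Finset.mem_image.1 hx
      exact ⟨u, hu, Or.inr rfl, (hR u hu).2.1⟩
  have hsT : ∀ u ∈ R, s u ∈ T := fun u hu => Finset.mem_union_left _ (Finset.mem_image_of_mem _ hu)
  have htT : ∀ u ∈ R, t u ∈ T := fun u hu => Finset.mem_union_right _ (Finset.mem_image_of_mem _ hu)
  have hpar : ∀ u u' x, Ch u x → Ch u' x → u = u' := fun u u' x h1 h2 =>
    h.back h1.1 h2.1 h1.2.1 h2.2.1 (h1.2.2.1.trans h2.2.2.1.symm)
  have hdiff : ∀ u v x, Ch u v → Ch u x → x ≠ v →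
      ¬ (x ∈ closedNbr G u ↔ x ∈ closedNbr G v) := by
    intro u v x h1 h2 h3
    rw [mem_closedNbr', mem_closedNbr']
    have h4 : ¬ G.Adj v x := fun h4 => h.ne h4 (h1.2.2.2.trans h2.2.2.2.symm)
    have := h2.2.1
    tauto
  have hex : ∀ u ∈ R, ∀ v, Ch u v → ∃ x ∈ T, Ch u x ∧ x ≠ v := by
    intro u hu v hv
    obtain ⟨h1, h2, h3⟩ := hR u hu
    by_cases hsv : s u = v
    · exact ⟨t u, htT u hu, h2, by rw [← hsv]; exact h3.symm⟩
    · exact ⟨s u, hsT u hu, h1, hsv⟩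
  obtain ⟨f, hf⟩ := master G (q := q) T ρ (fun x _ y _ hxy => h.inj _ _ hxy)
    (Finset.univ.filter fun e : V × V => e.1 ∈ R ∧ Ch e.1 e.2)
    (by
      rintro ⟨u, v⟩ he
      obtain ⟨-, hu, hv⟩ := Finset.mem_filter.1 he
      obtain ⟨x, hx, h1, h2⟩ := hex u hu v hv
      exact ⟨x, hx, hdiff u v x hv h1 h2⟩)
    (by
      intro x hx
      obtain ⟨u, hu, hxu, hux⟩ := hT x hx
      refine ⟨{form G q T (u, s u), form G q T (u, t u),
        fun y => if y ∈ T then (if y ∈ closedNbr G u then 1 else 0) else 0},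
        lt_of_le_of_lt Finset.card_le_three (by omega), ?_⟩
      rintro ⟨u', v⟩ he h1 h2
      obtain ⟨-, hu', hv⟩ := Finset.mem_filter.1 he
      simp only at hu' hv h1 h2
      obtain ⟨y, hy, h3, h4⟩ := hex u' hu' v hv
      have h5 := h2 y hy (hdiff u' v y hv h3 h4)
      have h6 : ρ u' < ρ x := lt_of_lt_of_le h3.1 h5
      have hor : x ∈ closedNbr G u' ∨ x ∈ closedNbr G v := by tauto
      have huu : u' = u := by
        rw [mem_closedNbr', mem_closedNbr'] at hor
        rcases hor with (h7 | h7) | (h7 | h7)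
        · rw [h7] at h6; omega
        · exact hpar u' u x ⟨h6, h7, hv.2.2.1, hux.2.2.2⟩ hux
        · rw [h7] at hux
          exact hpar u' u v hv hux
        · exact absurd (hv.2.2.2.trans hux.2.2.2.symm) (h.ne h7)
      subst huu
      by_cases hvs : v = s u'
      · subst hvs; simp
      by_cases hvt : v = t u'
      · subst hvt; simp
      have hvT : v ∉ T := by
        intro hvT
        obtain ⟨u2, hu2, h7, h8⟩ := hT v hvT
        have := hpar u2 u' v h8 hv
        subst this
        tauto
      simp only [Finset.mem_insert, Finset.mem_singleton]
      right; right
      funext y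
      unfold form
      by_cases hyT : y ∈ T
      · obtain ⟨u2, hu2, h7, h8⟩ := hT y hyT
        have : y ∉ closedNbr G v := by
          rw [mem_closedNbr']
          rintro (h9 | h9)
          · exact hvT (h9 ▸ hyT)
          · exact h.ne h9 (hv.2.2.2.trans h8.2.2.2.symm)
        simp [this]
      · simp [hyT])
  refine ⟨f, ?_⟩
  intro u v v' h1 h2 h3 h4 h5 h6 h7 h8
  refine hf (u, v) (Finset.mem_filter.2 ⟨Finset.mem_univ _, Finset.mem_filter.2
    ⟨Finset.mem_univ _, v, v', ⟨h1, h2, h3, h4⟩, ⟨h5, h6, h3, h7⟩, h8.symm⟩, ⟨h1, h2, h3, h4⟩⟩)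

theorem caseB {V : Type*} [Fintype V] {G : SimpleGraph V} {ρ : V → ℕ} {α : Type*} {c : V → α}
    (h : GoodCol G ρ c) (l : α) (q : ℕ) [Fact q.Prime] :
    ∃ f : V → ZMod q, ∀ u v w, ρ u < ρ v → G.Adj u v → c w = l →
      (∀ w, ρ v < ρ w → G.Adj v w → G.Adj u w) →
      (∀ w, ρ u < ρ w → G.Adj u w → w ≠ v → G.Adj v w) →
      ¬ (w ∈ closedNbr G u ↔ w ∈ closedNbr G v) → nsum G f u ≠ nsum G f v := by
  refine ⟨fun x => if c x = l then 1 else 0, ?_⟩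
  intro u v w huv hadj hw hA hC hwd
  have hmem : ∀ x, ¬ (x ∈ closedNbr G u ↔ x ∈ closedNbr G v) →
      (ρ x < ρ u ∧ G.Adj u x ∧ ¬ G.Adj v x) ∨ (ρ x < ρ v ∧ G.Adj v x ∧ ¬ G.Adj u x ∧ x ≠ u) := by
    intro x hx
    rw [mem_closedNbr', mem_closedNbr'] at hx
    have hxu : x ≠ u := by rintro rfl; exact hx (by simp [hadj.symm])
    have hxv : x ≠ v := by rintro rfl; exact hx (by simp [hadj])
    have hxu' : ρ x ≠ ρ u := fun hh => hxu (h.inj _ _ hh)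
    have hxv' : ρ x ≠ ρ v := fun hh => hxv (h.inj _ _ hh)
    by_cases h1 : G.Adj u x
    · have h2 : ¬ G.Adj v x := by tauto
      left
      refine ⟨?_, h1, h2⟩
      by_contra h3
      exact h2 (hC x (by omega) h1 hxv)
    · have h2 : G.Adj v x := by tauto
      right
      refine ⟨?_, h2, h1, hxu⟩
      by_contra h3
      exact h1 (hA x (by omega) h2)
  have hcross : ∀ x y, ρ x < ρ u → G.Adj u x → ρ y < ρ v → G.Adj v y → y ≠ u → c x = c y →
      x = y := by
    intro x y h1 h2 h3 h4 h5 h6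
    have h7 : ρ y ≠ ρ u := fun hh => h5 (h.inj _ _ hh)
    rcases lt_or_gt_of_ne h7 with h8 | h8
    · exact h.c2 x y u ⟨h1, Or.inl h2.symm⟩ ⟨h8, Or.inr ⟨v, huv, h4, hadj.symm⟩⟩ h6
    · exact absurd h6 (h.c3 x u y ⟨h1, Or.inl h2.symm⟩ ⟨h8, Or.inr ⟨v, h3, hadj.symm, h4⟩⟩)
  have huniq : ∀ x, c x = l → ¬ (x ∈ closedNbr G u ↔ x ∈ closedNbr G v) → x = w := by
    intro x hx hxd
    rcases hmem x hxd with ⟨a1, a2, a3⟩ | ⟨a1, a2, a3, a4⟩ <;>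
    rcases hmem w hwd with ⟨b1, b2, b3⟩ | ⟨b1, b2, b3, b4⟩
    · exact h.back a1 b1 a2.symm b2.symm (hx.trans hw.symm)
    · exact hcross x w a1 a2 b1 b2 b4 (hx.trans hw.symm)
    · exact (hcross w x b1 b2 a1 a2 a4 (hw.trans hx.symm)).symm
    · exact h.back a1 b1 a2.symm b2.symm (hx.trans hw.symm)
  intro heq
  rw [← sub_eq_zero] at heq
  unfold nsum at heq
  rw [← Finset.sum_sub_distrib, Finset.sum_eq_single w] at heq
  · by_cases h1 : w ∈ closedNbr G u <;> by_cases h2 : w ∈ closedNbr G v <;>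
      simp [h1, h2, hw] at heq hwd
  · intro x _ hxw
    by_cases hx : c x = l
    · have : (x ∈ closedNbr G u ↔ x ∈ closedNbr G v) := by
        by_contra hh; exact hxw (huniq x hx hh)
      simp [this]
    · simp [hx]
  · simp

/-- Combining the moduli by the Chinese remainder theorem. -/
theorem combine {V : Type*} [Fintype V] (G : SimpleGraph V) {ι : Type*} [Fintype ι] (q : ι → ℕ)
    (hq : ∀ i, (q i).Prime) (hinj : Function.Injective q) (f : ∀ i, V → ZMod (q i))
    (hf : ∀ u v, G.Adj u v → closedNbr G u ≠ closedNbr G v →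
      ∃ i, nsum G (f i) u ≠ nsum G (f i) v) :
    disNumber G ≤ ∏ i, q i := by
  have hcop : ∀ i ∈ (Finset.univ : Finset ι), ∀ j ∈ (Finset.univ : Finset ι), i ≠ j →
      Function.onFun Nat.Coprime q i j := by
    intro i _ j _ hij
    exact (Nat.coprime_primes (hq i) (hq j)).2 fun hh => hij (hinj hh)
  have hpos : 0 < ∏ i, q i := Finset.prod_pos fun i _ => (hq i).pos
  have hk : ∀ v, ∃ k : ℕ, 1 ≤ k ∧ k ≤ ∏ i, q i ∧ ∀ i, (k : ZMod (q i)) = f i v := by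
    intro v
    have : ∀ i, NeZero (q i) := fun i => ⟨(hq i).ne_zero⟩
    obtain ⟨k, hk⟩ := Nat.chineseRemainderOfFinset (fun i => (f i v).val) q Finset.univ
      (fun i _ => (hq i).ne_zero) (fun i hi j hj hij => hcop i (by simp) j (by simp) hij)
    have hk' : ∀ i, (k : ZMod (q i)) = f i v := by
      intro i
      have := (ZMod.natCast_eq_natCast_iff _ _ _).2 (hk i (by simp))
      rw [this, ZMod.natCast_zmod_val]
    refine ⟨(k + (∏ i, q i - 1)) % (∏ i, q i) + 1, by omega, Nat.mod_lt _ hpos, fun i => ?_⟩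
    have hd : ((∏ i, q i : ℕ) : ZMod (q i)) = 0 :=
      (ZMod.natCast_eq_zero_iff _ _).2 (Finset.dvd_prod_of_mem q (Finset.mem_univ i))
    have h1 := Nat.mod_add_div (k + (∏ i, q i - 1)) (∏ i, q i)
    have h2 : ((k + (∏ i, q i - 1)) % (∏ i, q i) + 1) +
        (∏ i, q i) * ((k + (∏ i, q i - 1)) / (∏ i, q i)) = k + ∏ i, q i := by omega
    have h3 := congrArg (Nat.cast : ℕ → ZMod (q i)) h2
    rw [Nat.cast_add, Nat.cast_mul, Nat.cast_add k, hd, zero_mul, add_zero, add_zero] at h3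
    rw [h3, hk']
  choose k hk1 hk2 hk3 using hk
  refine Nat.sInf_le ⟨hpos, k, fun v => ⟨hk1 v, hk2 v⟩, ?_⟩
  intro u v huv hne heq
  obtain ⟨i, hi⟩ := hf u v huv hne
  apply hi
  have hc : ∀ v, ((closedNbrSum G k v : ℕ) : ZMod (q i)) = nsum G (f i) v := by
    intro v
    unfold closedNbrSum nsum
    rw [Nat.cast_sum]
    refine Finset.sum_congr rfl fun x _ => ?_
    split_ifs
    · exact hk3 x i
    · simp
  rw [← hc, ← hc, heq]

/-- the edge types -/
abbrev Ty (K : ℕ) := (Fin K × Fin K × Fin K) ⊕ (Fin K × Fin K × Fin K) ⊕ (Fin K × Fin K) ⊕ Fin K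

theorem exists_primes (ι : Type) [Fintype ι] :
    ∃ q : ι → ℕ, (∀ i, (q i).Prime) ∧ (∀ i, 5 ≤ q i) ∧ Function.Injective q := by
  refine ⟨fun i => Nat.nth Nat.Prime (Fintype.equivFin ι i + 2), fun i => Nat.prime_nth_prime _,
    fun i => ?_, ?_⟩
  · have h := Nat.nth_monotone Nat.infinite_setOfPred_prime
      (show 2 ≤ (Fintype.equivFin ι i : ℕ) + 2 by omega)
    have h5 : Nat.nth Nat.Prime 2 = 5 := by
      exact Nat.nth_count (p := Nat.Prime) (n := 5) (by norm_num) ▸ by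
        simp [Nat.count_succ]; norm_num
    exact h5.symm.le.trans h
  · intro i j hij
    have := Nat.nth_injective Nat.infinite_setOfPred_prime hij
    apply (Fintype.equivFin ι).injective
    ext
    omega

theorem dis_of_goodCol (K : ℕ) : ∃ L : ℕ, ∀ (n : ℕ) (G : SimpleGraph (Fin n)) (ρ : Fin n → ℕ)
    (c : Fin n → Fin K), GoodCol G ρ c → disNumber G ≤ L := by
  obtain ⟨q, hq, hq5, hinj⟩ := exists_primes (Ty K)
  refine ⟨∏ i, q i, fun n G ρ c h => ?_⟩
  have : ∀ i, Fact (q i).Prime := fun i => ⟨hq i⟩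
  choose fA hfA using fun t : Fin K × Fin K × Fin K =>
    caseA h t.1 t.2.1 t.2.2 (q (Sum.inl t))
  choose fC hfC using fun t : Fin K × Fin K × Fin K =>
    caseC h t.1 t.2.1 t.2.2 (q (Sum.inr (Sum.inl t))) (hq5 _)
  choose fD hfD using fun t : Fin K × Fin K =>
    caseD h t.1 t.2 (q (Sum.inr (Sum.inr (Sum.inl t)))) (hq5 _)
  choose fB hfB using fun t : Fin K => caseB h t (q (Sum.inr (Sum.inr (Sum.inr t))))
  let f : ∀ i, Fin n → ZMod (q i) := fun i =>
    match i with
    | Sum.inl t => fA t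
    | Sum.inr (Sum.inl t) => fC t
    | Sum.inr (Sum.inr (Sum.inl t)) => fD t
    | Sum.inr (Sum.inr (Sum.inr t)) => fB t
  have main : ∀ u v, ρ u < ρ v → G.Adj u v → closedNbr G u ≠ closedNbr G v →
      ∃ i, nsum G (f i) u ≠ nsum G (f i) v := by
    intro u v huv hadj hne
    by_cases hA : ∃ w, ρ v < ρ w ∧ G.Adj v w ∧ ¬ G.Adj u w
    · obtain ⟨w, h1, h2, h3⟩ := hA
      exact ⟨Sum.inl (c u, c v, c w), hfA (c u, c v, c w) u v w huv hadj rfl rfl rfl h1 h2 h3⟩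
    by_cases hD : ∃ v', ρ u < ρ v' ∧ G.Adj u v' ∧ c v' = c v ∧ v' ≠ v
    · obtain ⟨v', h1, h2, h3, h4⟩ := hD
      exact ⟨Sum.inr (Sum.inr (Sum.inl (c u, c v))),
        hfD (c u, c v) u v v' huv hadj rfl rfl h1 h2 h3 h4⟩
    by_cases hC : ∃ w, ρ u < ρ w ∧ G.Adj u w ∧ ¬ G.Adj v w ∧ w ≠ v
    · obtain ⟨w, h1, h2, h3, h4⟩ := hC
      refine ⟨Sum.inr (Sum.inl (c u, c v, c w)),
        hfC (c u, c v, c w) u v w huv hadj rfl rfl rfl h1 h2 h3 h4 fun v' h5 h6 h7 => ?_⟩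
      by_contra h8
      exact hD ⟨v', h5, h6, h7, h8⟩
    have hw : ∃ w, ¬ (w ∈ closedNbr G u ↔ w ∈ closedNbr G v) := by
      by_contra hh
      push Not at hh
      exact hne (Set.ext hh)
    obtain ⟨w, hw⟩ := hw
    refine ⟨Sum.inr (Sum.inr (Sum.inr (c w))), hfB (c w) u v w huv hadj rfl ?_ ?_ hw⟩
    · intro w h1 h2
      by_contra h3
      exact hA ⟨w, h1, h2, h3⟩
    · intro w h1 h2 h3
      by_contra h4
      exact hC ⟨w, h1, h2, h4, h3⟩
  refine combine G q hq hinj f fun u v hadj hne => ?_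
  rcases lt_trichotomy (ρ u) (ρ v) with h1 | h1 | h1
  · exact main u v h1 hadj hne
  · exact absurd (h.inj _ _ h1) hadj.ne
  · obtain ⟨i, hi⟩ := main v u h1 hadj.symm hne.symm
    exact ⟨i, hi.symm⟩


noncomputable def adjPairs {V : Type*} [Fintype V] (G : SimpleGraph V) : Finset (V × V) :=
  Finset.univ.filter fun p => G.Adj p.1 p.2

theorem mem_adjPairs {V : Type*} [Fintype V] (G : SimpleGraph V) (p : V × V) :
    p ∈ adjPairs G ↔ G.Adj p.1 p.2 := by
  simp [adjPairs]

noncomputable def relPairs {V : Type*} [Fintype V] (S : Finset V) (A : V → V → Prop) :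
    Finset (V × V) :=
  Finset.univ.filter fun p => p.2 ∈ S ∧ A p.1 p.2

theorem mem_relPairs {V : Type*} [Fintype V] (S : Finset V) (A : V → V → Prop) (p : V × V) :
    p ∈ relPairs S A ↔ p.2 ∈ S ∧ A p.1 p.2 := by
  simp [relPairs]

noncomputable def bk {V : Type*} [Fintype V] (A : V → V → Prop) (v : V) : Finset V :=
  Finset.univ.filter fun x => A x v

theorem mem_bk {V : Type*} [Fintype V] (A : V → V → Prop) (v x : V) : x ∈ bk A v ↔ A x v := by
  simp [bk]


theorem card_adjPairs_eq {V : Type*} [Fintype V] (G : SimpleGraph V) :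
    (adjPairs G).card = ∑ v, (G.neighborFinset v).card := by
  rw [Finset.card_eq_sum_card_fiberwise (f := Prod.fst) (t := Finset.univ) (by simp)]
  refine Finset.sum_congr rfl fun v _ => ?_
  have : (adjPairs G).filter (fun p => p.1 = v) = (G.neighborFinset v).image fun x => (v, x) := by
    ext ⟨x, y⟩
    simp [mem_adjPairs]
    grind
  rw [this, Finset.card_image_of_injective]
  intro x y h
  simpa using h

theorem card_pairs {V : Type*} [Fintype V] (G : SimpleGraph V) :
    (adjPairs G).card = 2 * G.edgeSet.ncard := by
  have h := G.sum_degrees_eq_twice_card_edges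
  rw [Set.ncard_eq_toFinset_card', ← SimpleGraph.edgeFinset, ← h, card_adjPairs_eq]
  rfl

theorem card_relPairs {V : Type*} [Fintype V] (S : Finset V) (A : V → V → Prop) :
    (relPairs S A).card = ∑ v ∈ S, (bk A v).card := by
  rw [Finset.card_eq_sum_card_fiberwise (f := Prod.snd) (t := S)
    (fun p hp => ((mem_relPairs _ _ _).1 hp).1)]
  refine Finset.sum_congr rfl fun v hv => ?_
  have : (relPairs S A).filter (fun p => p.2 = v) = (bk A v).image fun x => (x, v) := by
    ext ⟨x, y⟩
    simp [mem_relPairs, mem_bk]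
    grind
  rw [this, Finset.card_image_of_injective]
  intro x y h
  simpa using h

theorem minor_bound {V : Type*} [Fintype V] (H : SimpleGraph V) (a : ℕ)
    (hs : ∀ (m : ℕ) (G' : SimpleGraph (Fin m)), IsShallowMinor 3 G' H → G'.edgeSet.ncard ≤ a * m)
    (S : Finset V) (M : Finset (V × V)) (I : V × V → Finset V)
    (hM : ∀ p ∈ M, p.1 ∈ S ∧ p.2 ∈ S ∧ p.1 ≠ p.2)
    (hI : ∀ p ∈ M, ∀ t ∈ I p, t ∉ S)
    (hdisj : ∀ p ∈ M, ∀ r ∈ M, ∀ t, t ∈ I p → t ∈ I r → p = r)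
    (hw : ∀ p ∈ M, ∀ t ∈ I p, ∃ W : H.Walk p.1 t, W.length ≤ 3 ∧
      ∀ z ∈ W.support, z = p.1 ∨ z ∈ I p)
    (hadj : ∀ p ∈ M, ∃ t, (t = p.1 ∨ t ∈ I p) ∧ H.Adj t p.2) :
    M.card ≤ 2 * (a * S.card) := by
  let e := S.equivFin
  let G' : SimpleGraph (Fin S.card) :=
    { Adj := fun i j => ((e.symm i : V), (e.symm j : V)) ∈ M ∨ ((e.symm j : V), (e.symm i : V)) ∈ M
      symm := ⟨fun i j h => h.symm⟩
      loopless := ⟨fun i h => by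
        rcases h with h | h <;> exact (hM _ h).2.2 rfl⟩ }
  have hbr : IsShallowMinor 3 G' H := by
    let B : Fin S.card → Set V := fun i => {x | x = (e.symm i : V) ∨
      ∃ p ∈ M, p.1 = (e.symm i : V) ∧ x ∈ I p}
    refine ⟨B, ?_, ?_, ?_⟩
    · intro i j hij
      refine Set.disjoint_left.2 fun x hx hy => hij ?_
      have hinj : ∀ i j, (e.symm i : V) = (e.symm j : V) → i = j := fun i j h =>
        e.symm.injective (Subtype.ext h)
      rcases hx with hx | ⟨p, hp, h1, h2⟩ <;> rcases hy with hy | ⟨r, hr, h3, h4⟩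
      · exact hinj _ _ (hx.symm.trans hy)
      · exact absurd (hx ▸ (e.symm i).2) (hI r hr x h4)
      · exact absurd (hy ▸ (e.symm j).2) (hI p hp x h2)
      · have := hdisj p hp r hr x h2 h4
        subst this
        exact hinj _ _ (h1.symm.trans h3)
    · intro i
      refine ⟨⟨(e.symm i : V), Or.inl rfl⟩, ?_⟩
      rintro ⟨y, hy⟩
      rcases hy with hy | ⟨p, hp, h1, h2⟩
      · subst hy
        exact ⟨SimpleGraph.Reachable.refl _, by simp⟩
      · obtain ⟨W, hl, hsup⟩ := hw p hp y h2
        have key : ∀ (x : V) (hx : x = (e.symm i : V)) (W : H.Walk x y)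
            (hW : ∀ z ∈ W.support, z ∈ B i) (hl : W.length ≤ 3),
            ∃ W' : (H.induce (B i)).Walk ⟨(e.symm i : V), Or.inl rfl⟩
              ⟨y, hW y W.end_mem_support⟩, W'.length ≤ 3 := by
          intro x hx W hW hl
          subst hx
          refine ⟨W.induce (B i) hW, ?_⟩
          rw [← SimpleGraph.Walk.length_map (SimpleGraph.Embedding.induce (B i)).toHom,
            SimpleGraph.Walk.map_induce]
          exact hl
        obtain ⟨W', hW'⟩ := key p.1 h1 W (by
          intro z hz
          rcases hsup z hz with h | h
          · exact Or.inl (h.trans h1)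
          · exact Or.inr ⟨p, hp, h1, h⟩) hl
        exact ⟨⟨W'⟩, (SimpleGraph.dist_le W').trans hW'⟩
    · intro i j hij
      have key : ∀ i j, ((e.symm i : V), (e.symm j : V)) ∈ M →
          ∃ x ∈ B i, ∃ y ∈ B j, H.Adj x y := by
        intro i j hij
        obtain ⟨t, ht, hta⟩ := hadj _ hij
        refine ⟨t, ?_, (e.symm j : V), Or.inl rfl, hta⟩
        rcases ht with ht | ht
        · exact Or.inl ht
        · exact Or.inr ⟨_, hij, rfl, ht⟩
      rcases hij with hij | hij
      · exact key i j hij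
      · obtain ⟨x, hx, y, hy, hxy⟩ := key j i hij
        exact ⟨y, hy, x, hx, hxy.symm⟩
  have h1 := hs _ G' hbr
  have h2 := card_pairs G'
  have h3 : M.card ≤ (adjPairs G').card := by
    have hsub : M ⊆ (adjPairs G').image (fun p => ((e.symm p.1 : V), (e.symm p.2 : V))) := by
      intro p hp
      obtain ⟨h4, h5, -⟩ := hM p hp
      refine Finset.mem_image.2 ⟨(e ⟨p.1, h4⟩, e ⟨p.2, h5⟩), ?_, by simp⟩
      refine (mem_adjPairs _ _).2 (Or.inl ?_)
      simpa using hp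
    exact (Finset.card_le_card hsub).trans Finset.card_image_le
  omega

theorem count_bound {V : Type*} [Fintype V] (H : SimpleGraph V) (a : ℕ)
    (hs : ∀ (m : ℕ) (G' : SimpleGraph (Fin m)), IsShallowMinor 3 G' H → G'.edgeSet.ncard ≤ a * m)
    (S : Finset V) (P : Finset (V × V)) (I : V × V → Finset V) (Q : ℕ)
    (hM : ∀ p ∈ P, p.1 ∈ S ∧ p.2 ∈ S ∧ p.1 ≠ p.2)
    (hI : ∀ p ∈ P, ∀ t ∈ I p, t ∉ S)
    (hI3 : ∀ p ∈ P, (I p).card ≤ 3)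
    (hQ : ∀ t, t ∉ S → (P.filter fun p => t ∈ I p).card ≤ Q)
    (hw : ∀ p ∈ P, ∀ t ∈ I p, ∃ W : H.Walk p.1 t, W.length ≤ 3 ∧
      ∀ z ∈ W.support, z = p.1 ∨ z ∈ I p)
    (hadj : ∀ p ∈ P, ∃ t, (t = p.1 ∨ t ∈ I p) ∧ H.Adj t p.2) :
    P.card ≤ (2 * a * (1 + 3 * Q) + 1) * S.card := by
  let Fam : Finset (Finset (V × V)) := P.powerset.filter fun M =>
    ∀ p ∈ M, ∀ r ∈ M, ∀ t, t ∈ I p → t ∈ I r → p = r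
  obtain ⟨M, hM1, hM2⟩ := Fam.exists_max_image Finset.card
    ⟨∅, Finset.mem_filter.2 ⟨by simp, by simp⟩⟩
  obtain ⟨hMP, hMd⟩ := Finset.mem_filter.1 hM1
  rw [Finset.mem_powerset] at hMP
  have hMc := minor_bound H a hs S M I (fun p hp => hM p (hMP hp)) (fun p hp => hI p (hMP hp))
    hMd (fun p hp => hw p (hMP hp)) (fun p hp => hadj p (hMP hp))
  have hsub : P ⊆ M ∪ M.biUnion fun r => (I r).biUnion fun t => P.filter fun p => t ∈ I p := by
    intro p hp
    by_contra hcon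
    rw [Finset.mem_union, not_or] at hcon
    obtain ⟨hpM, hcon⟩ := hcon
    have hno : ∀ r ∈ M, ∀ t, t ∈ I r → t ∉ I p := by
      intro r hr t htr htp
      apply hcon
      simp only [Finset.mem_biUnion, Finset.mem_filter]
      exact ⟨r, hr, t, htr, hp, htp⟩
    have hF : insert p M ∈ Fam := by
      refine Finset.mem_filter.2 ⟨Finset.mem_powerset.2 (Finset.insert_subset hp hMP), ?_⟩
      intro x hx y hy t htx hty
      rcases Finset.mem_insert.1 hx with hx' | hx' <;>
        rcases Finset.mem_insert.1 hy with hy' | hy'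
      · rw [hx', hy']
      · exact absurd (hx' ▸ htx) (hno y hy' t hty)
      · exact absurd (hy' ▸ hty) (hno x hx' t htx)
      · exact hMd x hx' y hy' t htx hty
    have := hM2 _ hF
    rw [Finset.card_insert_of_notMem hpM] at this
    omega
  have h1 : (M.biUnion fun r => (I r).biUnion fun t => P.filter fun p => t ∈ I p).card ≤
      M.card * (3 * Q) := by
    refine Finset.card_biUnion_le_card_mul _ _ _ fun r hr => ?_
    refine (Finset.card_biUnion_le_card_mul _ _ Q fun t ht => hQ t (hI r (hMP hr) t ht)).trans ?_
    exact Nat.mul_le_mul_right _ (hI3 r (hMP hr))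
  have h2 := (Finset.card_le_card hsub).trans (Finset.card_union_le _ _)
  calc P.card ≤ M.card + M.card * (3 * Q) := by omega
    _ = M.card * (1 + 3 * Q) := by ring
    _ ≤ (2 * (a * S.card)) * (1 + 3 * Q) := Nat.mul_le_mul_right _ hMc
    _ ≤ (2 * a * (1 + 3 * Q) + 1) * S.card := by nlinarith

/-- averaging -/
theorem few_bad {V : Type*} [Fintype V] (S : Finset V) (A : V → V → Prop) (C : ℕ) (hC : 1 ≤ C)
    (h : (relPairs S A).card ≤ C * S.card) :
    4 * (S.filter fun v => 4 * C < (bk A v).card).card ≤ S.card := by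
  set T := S.filter fun v => 4 * C < (bk A v).card with hT
  have h1 : T.card * (4 * C) ≤ ∑ v ∈ S, (bk A v).card := by
    calc T.card * (4 * C) = ∑ v ∈ T, 4 * C := by simp
      _ ≤ ∑ v ∈ T, (bk A v).card :=
        Finset.sum_le_sum fun v hv => (Finset.mem_filter.1 hv).2.le
      _ ≤ _ := Finset.sum_le_sum_of_subset (Finset.filter_subset _ _)
  rw [← card_relPairs] at h1
  nlinarith

/-- fraternal pairs -/
def R3 {V : Type*} (G : SimpleGraph V) (ρ : V → ℕ) (x y : V) : Prop :=
  ρ x < ρ y ∧ ∃ v, ρ y < ρ v ∧ R2 G ρ x v ∧ R2 G ρ y v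

def R1 {V : Type*} (G : SimpleGraph V) (ρ : V → ℕ) (x y : V) : Prop :=
  ρ x < ρ y ∧ G.Adj x y

theorem R2_conn {V : Type*} {G : SimpleGraph V} {ρ : V → ℕ} {x y : V} (h : R2 G ρ x y) :
    ∃ J : Finset V, J.card ≤ 1 ∧ (∀ t ∈ J, ρ y < ρ t ∧ G.Adj t x ∧ G.Adj t y) ∧
      (J = ∅ → G.Adj x y) := by
  obtain ⟨h1, h2 | ⟨z, h3, h4, h5⟩⟩ := h
  · exact ⟨∅, by simp, by simp, fun _ => h2⟩
  · exact ⟨{z}, by simp, by simp [h3, h4, h5], by simp⟩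

/-- one step of the construction of the order -/
theorem order_step {V : Type*} [Fintype V] (G : SimpleGraph V) (a : ℕ)
    (hs : ∀ (m : ℕ) (G' : SimpleGraph (Fin m)), IsShallowMinor 3 G' G → G'.edgeSet.ncard ≤ a * m)
    (K1 K2 K3 : ℕ) (hK1 : K1 = 4 * (2 * a * (1 + 3 * 0) + 1))
    (hK2 : K2 = 4 * (2 * a * (1 + 3 * (K1 * K1)) + 1))
    (hK3 : K3 = 4 * (2 * a * (1 + 3 * ((K1 + 1) * (K2 * K2))) + 1))
    (ρ : V → ℕ) (h1 : ∀ v, 0 < ρ v → (bk (R1 G ρ) v).card ≤ K1)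
    (h2 : ∀ v, 0 < ρ v → (bk (R2 G ρ) v).card ≤ K2)
    (hne : ∃ v, ρ v = 0) :
    ∃ v, ρ v = 0 ∧
      (bk (fun x v => ρ x = 0 ∧ x ≠ v ∧ G.Adj x v) v).card ≤ K1 ∧
      (bk (fun x v => ρ x = 0 ∧ x ≠ v ∧ (G.Adj x v ∨ ∃ z, 0 < ρ z ∧ G.Adj z x ∧ G.Adj z v))
        v).card ≤ K2 ∧
      (bk (fun x v => ρ x = 0 ∧ x ≠ v ∧ ∃ y, 0 < ρ y ∧ R2 G ρ x y ∧ R2 G ρ v y) v).card ≤ K3 := by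
  set S : Finset V := Finset.univ.filter fun v => ρ v = 0 with hS
  have memS : ∀ x, x ∈ S ↔ ρ x = 0 := by intro x; simp [hS]
  have b1 := few_bad S (fun x v => ρ x = 0 ∧ x ≠ v ∧ G.Adj x v) (2 * a * (1 + 3 * 0) + 1) (by omega)
    (by
      refine count_bound G a hs S _ (fun _ => ∅) 0 ?_ ?_ ?_ ?_ ?_ ?_
      · rintro ⟨x, v⟩ hp
        obtain ⟨p1, p2, p3, p4⟩ := (mem_relPairs _ _ _).1 hp
        exact ⟨(memS _).2 p2, p1, p3⟩
      · simp
      · simp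
      · simp
      · simp
      · rintro ⟨x, v⟩ hp
        obtain ⟨p1, p2, p3, p4⟩ := (mem_relPairs _ _ _).1 hp
        exact ⟨x, Or.inl rfl, p4⟩)
  have b2 := few_bad S
    (fun x v => ρ x = 0 ∧ x ≠ v ∧ (G.Adj x v ∨ ∃ z, 0 < ρ z ∧ G.Adj z x ∧ G.Adj z v))
    (2 * a * (1 + 3 * (K1 * K1)) + 1) (by omega)
    (by
      have hJ : ∀ p : V × V, ∃ J : Finset V, (p.2 ∈ S ∧ ρ p.1 = 0 ∧ p.1 ≠ p.2 ∧
          (G.Adj p.1 p.2 ∨ ∃ z, 0 < ρ z ∧ G.Adj z p.1 ∧ G.Adj z p.2)) →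
          J.card ≤ 1 ∧ (∀ t ∈ J, 0 < ρ t ∧ G.Adj t p.1 ∧ G.Adj t p.2) ∧
          (J = ∅ → G.Adj p.1 p.2) := by
        intro p
        by_cases hp : G.Adj p.1 p.2
        · exact ⟨∅, fun _ => by simp [hp]⟩
        by_cases hz : ∃ z, 0 < ρ z ∧ G.Adj z p.1 ∧ G.Adj z p.2
        · obtain ⟨z, hz1, hz2, hz3⟩ := hz
          exact ⟨{z}, fun _ => by simp [hz1, hz2, hz3]⟩
        · exact ⟨∅, fun hh => absurd hh.2.2.2 (by rintro (h | h); exacts [hp h, hz h])⟩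
      choose J hJ using hJ
      have hJ' : ∀ p ∈ relPairs S (fun x v => ρ x = 0 ∧ x ≠ v ∧
          (G.Adj x v ∨ ∃ z, 0 < ρ z ∧ G.Adj z x ∧ G.Adj z v)), _ :=
        fun p hp => hJ p ((mem_relPairs _ _ _).1 hp)
      refine count_bound G a hs S _ J (K1 * K1) ?_ ?_ ?_ ?_ ?_ ?_
      · rintro ⟨x, v⟩ hp
        obtain ⟨p1, p2, p3, p4⟩ := (mem_relPairs _ _ _).1 hp
        exact ⟨(memS _).2 p2, p1, p3⟩
      · intro p hp t ht
        have := ((hJ' p hp).2.1 t ht).1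
        rw [memS]; omega
      · intro p hp
        exact (hJ' p hp).1.trans (by omega)
      · intro t ht
        have ht0 : 0 < ρ t := by rw [memS] at ht; omega
        refine (Finset.card_le_card (t := bk (R1 G ρ) t ×ˢ bk (R1 G ρ) t) ?_).trans ?_
        · intro p hp
          obtain ⟨hp1, hp2⟩ := Finset.mem_filter.1 hp
          obtain ⟨p1, p2, p3, p4⟩ := (mem_relPairs _ _ _).1 hp1
          obtain ⟨q1, q2, q3⟩ := (hJ' p hp1).2.1 t hp2
          rw [memS] at p1
          rw [Finset.mem_product, mem_bk, mem_bk]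
          exact ⟨⟨by omega, q2.symm⟩, ⟨by omega, q3.symm⟩⟩
        · rw [Finset.card_product]
          exact Nat.mul_le_mul (h1 t ht0) (h1 t ht0)
      · intro p hp t ht
        obtain ⟨q1, q2, q3⟩ := (hJ' p hp).2.1 t ht
        refine ⟨SimpleGraph.Walk.cons q2.symm SimpleGraph.Walk.nil, by simp, ?_⟩
        intro z hz
        simp at hz
        rcases hz with rfl | rfl
        · exact Or.inl rfl
        · exact Or.inr ht
      · intro p hp
        rcases Finset.eq_empty_or_nonempty (J p) with he | ⟨t, ht⟩
        · exact ⟨p.1, Or.inl rfl, (hJ' p hp).2.2 he⟩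
        · exact ⟨t, Or.inr ht, ((hJ' p hp).2.1 t ht).2.2⟩)
  have b3 := few_bad S
    (fun x v => ρ x = 0 ∧ x ≠ v ∧ ∃ y, 0 < ρ y ∧ R2 G ρ x y ∧ R2 G ρ v y)
    (2 * a * (1 + 3 * ((K1 + 1) * (K2 * K2))) + 1) (by omega)
    (by
      have hJ : ∀ p : V × V, ∃ (y : V) (J J' : Finset V),
          (∃ y, 0 < ρ y ∧ R2 G ρ p.1 y ∧ R2 G ρ p.2 y) →
          (0 < ρ y ∧ R2 G ρ p.1 y ∧ R2 G ρ p.2 y) ∧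
          (J.card ≤ 1 ∧ (∀ t ∈ J, ρ y < ρ t ∧ G.Adj t p.1 ∧ G.Adj t y) ∧
            (J = ∅ → G.Adj p.1 y)) ∧
          (J'.card ≤ 1 ∧ (∀ t ∈ J', ρ y < ρ t ∧ G.Adj t p.2 ∧ G.Adj t y) ∧
            (J' = ∅ → G.Adj p.2 y)) := by
        intro p
        by_cases hy : ∃ y, 0 < ρ y ∧ R2 G ρ p.1 y ∧ R2 G ρ p.2 y
        · obtain ⟨y, y1, y2, y3⟩ := hy
          obtain ⟨J, hJ⟩ := R2_conn y2
          obtain ⟨J', hJ'⟩ := R2_conn y3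
          exact ⟨y, J, J', fun _ => ⟨⟨y1, y2, y3⟩, hJ, hJ'⟩⟩
        · exact ⟨p.1, ∅, ∅, fun hh => absurd hh hy⟩
      choose y J J' hJ using hJ
      have hJ2 : ∀ p ∈ relPairs S (fun x v => ρ x = 0 ∧ x ≠ v ∧
          ∃ y, 0 < ρ y ∧ R2 G ρ x y ∧ R2 G ρ v y), _ :=
        fun p hp => hJ p ((mem_relPairs _ _ _).1 hp).2.2.2
      refine count_bound G a hs S _ (fun p => insert (y p) (J p ∪ J' p))
        ((K1 + 1) * (K2 * K2)) ?_ ?_ ?_ ?_ ?_ ?_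
      · rintro ⟨x, v⟩ hp
        obtain ⟨p1, p2, p3, p4⟩ := (mem_relPairs _ _ _).1 hp
        exact ⟨(memS _).2 p2, p1, p3⟩
      · intro p hp t ht
        obtain ⟨⟨y1, -, -⟩, ⟨-, a2, -⟩, ⟨-, c2, -⟩⟩ := hJ2 p hp
        rw [memS]
        rcases Finset.mem_insert.1 ht with rfl | ht
        · omega
        rcases Finset.mem_union.1 ht with ht | ht
        · have := (a2 t ht).1; omega
        · have := (c2 t ht).1; omega
      · intro p hp
        obtain ⟨⟨y1, -, -⟩, ⟨a1, a2, -⟩, ⟨c1, c2, -⟩⟩ := hJ2 p hp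
        have e1 := Finset.card_insert_le (y p) (J p ∪ J' p)
        have e2 := Finset.card_union_le (J p) (J' p)
        show (insert (y p) (J p ∪ J' p)).card ≤ 3
        omega
      · intro t ht
        have ht0 : 0 < ρ t := by rw [memS] at ht; omega
        refine (Finset.card_le_card (t := ((insert t (bk (R1 G ρ) t)).filter
          fun y => 0 < ρ y).biUnion fun y => bk (R2 G ρ) y ×ˢ bk (R2 G ρ) y) ?_).trans ?_
        · intro p hp
          obtain ⟨hp1, hp2⟩ := Finset.mem_filter.1 hp
          obtain ⟨⟨y1, y2, y3⟩, ⟨a1, a2, -⟩, ⟨c1, c2, -⟩⟩ := hJ2 p hp1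
          rw [Finset.mem_biUnion]
          refine ⟨y p, Finset.mem_filter.2 ⟨?_, y1⟩, ?_⟩
          · rcases Finset.mem_insert.1 hp2 with rfl | ht
            · simp
            refine Finset.mem_insert_of_mem ?_
            rw [mem_bk]
            rcases Finset.mem_union.1 ht with ht | ht
            · exact ⟨(a2 t ht).1, (a2 t ht).2.2.symm⟩
            · exact ⟨(c2 t ht).1, (c2 t ht).2.2.symm⟩
          · rw [Finset.mem_product, mem_bk, mem_bk]
            exact ⟨y2, y3⟩
        refine (Finset.card_biUnion_le_card_mul _ _ (K2 * K2) ?_).trans ?_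
        · intro w hw
          rw [Finset.card_product]
          have := h2 w (Finset.mem_filter.1 hw).2
          exact Nat.mul_le_mul this this
        · refine Nat.mul_le_mul_right _ ?_
          refine (Finset.card_le_card (Finset.filter_subset _ _)).trans ?_
          refine (Finset.card_insert_le _ _).trans ?_
          have := h1 t ht0
          omega
      · intro p hp t ht
        obtain ⟨⟨y1, y2, y3⟩, ⟨a1, a2, a3⟩, ⟨c1, c2, c3⟩⟩ := hJ2 p hp
        have hWy : ∃ W : G.Walk p.1 (y p), W.length ≤ 2 ∧
            ∀ z ∈ W.support, z = p.1 ∨ z ∈ insert (y p) (J p ∪ J' p) := by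
          rcases Finset.eq_empty_or_nonempty (J p) with he | ⟨s, hs⟩
          · refine ⟨SimpleGraph.Walk.cons (a3 he) SimpleGraph.Walk.nil, by simp, ?_⟩
            intro z hz
            simp at hz
            rcases hz with rfl | rfl <;> simp
          · obtain ⟨s1, s2, s3⟩ := a2 s hs
            refine ⟨SimpleGraph.Walk.cons s2.symm (SimpleGraph.Walk.cons s3 SimpleGraph.Walk.nil),
              by simp, ?_⟩
            intro z hz
            simp at hz
            rcases hz with rfl | rfl | rfl <;> simp [hs]
        rcases Finset.mem_insert.1 ht with rfl | ht2
        · obtain ⟨W, hW1, hW2⟩ := hWy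
          exact ⟨W, by omega, hW2⟩
        rcases Finset.mem_union.1 ht2 with ht3 | ht3
        · obtain ⟨s1, s2, s3⟩ := a2 t ht3
          refine ⟨SimpleGraph.Walk.cons s2.symm SimpleGraph.Walk.nil, by simp, ?_⟩
          intro z hz
          simp at hz
          rcases hz with rfl | rfl
          · exact Or.inl rfl
          · exact Or.inr ht
        · obtain ⟨s1, s2, s3⟩ := c2 t ht3
          obtain ⟨W, hW1, hW2⟩ := hWy
          refine ⟨W.concat s3.symm, by rw [SimpleGraph.Walk.length_concat]; omega, ?_⟩
          intro z hz
          rw [SimpleGraph.Walk.support_concat] at hz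
          simp at hz
          rcases hz with hz | rfl
          · exact hW2 z hz
          · exact Or.inr ht
      · intro p hp
        obtain ⟨⟨y1, y2, y3⟩, ⟨a1, a2, a3⟩, ⟨c1, c2, c3⟩⟩ := hJ2 p hp
        rcases Finset.eq_empty_or_nonempty (J' p) with he | ⟨t, ht⟩
        · exact ⟨y p, Or.inr (by simp), (c3 he).symm⟩
        · exact ⟨t, Or.inr (by simp [ht]), (c2 t ht).2.1⟩)
  rw [← hK1] at b1
  rw [← hK2] at b2
  rw [← hK3] at b3
  by_contra hcon
  push Not at hcon
  have hsub : S ⊆ (S.filter fun v => K1 < (bk (fun x v => ρ x = 0 ∧ x ≠ v ∧ G.Adj x v) v).card) ∪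
      ((S.filter fun v => K2 < (bk (fun x v => ρ x = 0 ∧ x ≠ v ∧
        (G.Adj x v ∨ ∃ z, 0 < ρ z ∧ G.Adj z x ∧ G.Adj z v)) v).card) ∪
      (S.filter fun v => K3 < (bk (fun x v => ρ x = 0 ∧ x ≠ v ∧
        ∃ y, 0 < ρ y ∧ R2 G ρ x y ∧ R2 G ρ v y) v).card)) := by
    intro v hv
    rw [Finset.mem_union, Finset.mem_union]
    by_contra hno
    have e1 : (bk (fun x v => ρ x = 0 ∧ x ≠ v ∧ G.Adj x v) v).card ≤ K1 := by
      by_contra hh; exact hno (Or.inl (Finset.mem_filter.2 ⟨hv, by omega⟩))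
    have e2 : (bk (fun x v => ρ x = 0 ∧ x ≠ v ∧
        (G.Adj x v ∨ ∃ z, 0 < ρ z ∧ G.Adj z x ∧ G.Adj z v)) v).card ≤ K2 := by
      by_contra hh; exact hno (Or.inr (Or.inl (Finset.mem_filter.2 ⟨hv, by omega⟩)))
    have e3 := hcon v ((memS v).1 hv) e1 e2
    exact hno (Or.inr (Or.inr (Finset.mem_filter.2 ⟨hv, e3⟩)))
  have hc := (Finset.card_le_card hsub).trans ((Finset.card_union_le _ _).trans
    (Nat.add_le_add_left (Finset.card_union_le _ _) _))
  have hpos : 0 < S.card := Finset.card_pos.2 (by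
    obtain ⟨v, hv⟩ := hne
    exact ⟨v, (memS v).2 hv⟩)
  omega


theorem R2_upd {V : Type*} (G : SimpleGraph V) (ρ : V → ℕ) (v : V) (m : ℕ)
    (hz : ∀ w, ρ w = 0 ∨ m < ρ w) (hv : ρ v = 0) (x w : V) (hwv : w ≠ v) (hw : 0 < ρ w)
    (h : R2 G (Function.update ρ v m) x w) : R2 G ρ x w := by
  obtain ⟨h1, h2⟩ := h
  rw [Function.update_of_ne hwv] at h1
  refine ⟨?_, ?_⟩
  · by_cases hx : x = v
    · subst hx; omega
    · rwa [Function.update_of_ne hx] at h1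
  · rcases h2 with h2 | ⟨z, z1, z2, z3⟩
    · exact Or.inl h2
    · refine Or.inr ⟨z, ?_, z2, z3⟩
      rw [Function.update_of_ne hwv] at z1
      by_cases hx : z = v
      · subst hx
        rw [Function.update_self] at z1
        have := hz w
        omega
      · rwa [Function.update_of_ne hx] at z1

theorem bk_mono {V : Type*} [Fintype V] {A B : V → V → Prop} {v : V} {K : ℕ}
    (h : ∀ x, A x v → B x v) (hB : (bk B v).card ≤ K) : (bk A v).card ≤ K := by
  refine (Finset.card_le_card fun x hx => ?_).trans hB
  rw [mem_bk] at hx ⊢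
  exact h x hx

theorem order_exists {V : Type*} [Fintype V] (G : SimpleGraph V) (a : ℕ)
    (hs : ∀ (m : ℕ) (G' : SimpleGraph (Fin m)), IsShallowMinor 3 G' G → G'.edgeSet.ncard ≤ a * m)
    (K1 K2 K3 : ℕ) (hK1 : K1 = 4 * (2 * a * (1 + 3 * 0) + 1))
    (hK2 : K2 = 4 * (2 * a * (1 + 3 * (K1 * K1)) + 1))
    (hK3 : K3 = 4 * (2 * a * (1 + 3 * ((K1 + 1) * (K2 * K2))) + 1)) :
    ∃ ρ : V → ℕ, (∀ x y, ρ x = ρ y → x = y) ∧ (∀ v, (bk (R2 G ρ) v).card ≤ K2) ∧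
      (∀ v, (bk (R3 G ρ) v).card ≤ K3) := by
  have main : ∀ (m : ℕ) (ρ : V → ℕ), (∀ v, ρ v = 0 ∨ m < ρ v) →
      (∀ x y, 0 < ρ x → ρ x = ρ y → x = y) →
      (Finset.univ.filter fun v => ρ v = 0).card ≤ m →
      (∀ v, 0 < ρ v → (bk (R1 G ρ) v).card ≤ K1) →
      (∀ v, 0 < ρ v → (bk (R2 G ρ) v).card ≤ K2) →
      (∀ v, 0 < ρ v → (bk (R3 G ρ) v).card ≤ K3) →
      ∃ ρ : V → ℕ, (∀ x y, ρ x = ρ y → x = y) ∧ (∀ v, (bk (R2 G ρ) v).card ≤ K2) ∧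
      (∀ v, (bk (R3 G ρ) v).card ≤ K3) := by
    intro m
    induction m with
    | zero =>
      intro ρ hz hinj hc h1 h2 h3
      have hpos : ∀ v, 0 < ρ v := by
        intro v
        by_contra hv
        have : v ∈ Finset.univ.filter fun v => ρ v = 0 := by simp; omega
        have := Finset.card_pos.2 ⟨v, this⟩
        omega
      exact ⟨ρ, fun x y => hinj x y (hpos x), fun v => h2 v (hpos v), fun v => h3 v (hpos v)⟩
    | succ k ih =>
      intro ρ hz hinj hc h1 h2 h3
      by_cases hne : ∃ v, ρ v = 0
      swap
      · have hpos : ∀ v, 0 < ρ v := by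
          intro v
          by_contra hv
          exact hne ⟨v, by omega⟩
        exact ⟨ρ, fun x y => hinj x y (hpos x), fun v => h2 v (hpos v), fun v => h3 v (hpos v)⟩
      obtain ⟨v, hv, v1, v2, v3⟩ := order_step G a hs K1 K2 K3 hK1 hK2 hK3 ρ h1 h2 hne
      have hup := R2_upd G ρ v (k + 1) hz hv
      have hself : Function.update ρ v (k + 1) v = k + 1 := Function.update_self ..
      have hother : ∀ w, w ≠ v → Function.update ρ v (k + 1) w = ρ w :=
        fun w hw => Function.update_of_ne hw ..
      generalize Function.update ρ v (k + 1) = σ at hup hself hother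
      have hlt : ∀ x w, σ x < σ w → 0 < ρ w → w ≠ v → ρ x < ρ w := by
        intro x w hx hw hwv
        rw [hother w hwv] at hx
        by_cases hxv : x = v
        · subst hxv; omega
        · rwa [hother x hxv] at hx
      have hgt : ∀ y, k + 1 < σ y → y ≠ v ∧ 0 < ρ y := by
        intro y hy
        have : y ≠ v := by rintro rfl; omega
        rw [hother y this] at hy
        exact ⟨this, by omega⟩
      have hsm : ∀ y, σ y < k + 1 → ρ y = 0 ∧ y ≠ v := by
        intro y hy
        have : y ≠ v := by rintro rfl; omega
        rw [hother y this] at hy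
        have := hz y
        exact ⟨by omega, by assumption⟩
      have hw0 : ∀ w, w ≠ v → 0 < σ w → 0 < ρ w := fun w hwv hw => by rwa [hother w hwv] at hw
      refine ih σ ?_ ?_ ?_ ?_ ?_ ?_
      · intro w
        by_cases hw : w = v
        · subst hw; omega
        · rw [hother w hw]; have := hz w; omega
      · intro x y hx hxy
        by_cases hxv : x = v <;> by_cases hyv : y = v
        · rw [hxv, hyv]
        · subst hxv
          rw [hself, hother y hyv] at hxy
          have := hz y; omega
        · subst hyv
          rw [hself, hother x hxv] at hxy
          have := hz x; omega
        · rw [hother x hxv] at hx hxy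
          rw [hother y hyv] at hxy
          exact hinj x y hx hxy
      · have hsub : (Finset.univ.filter fun w => σ w = 0) ⊆
            (Finset.univ.filter fun w => ρ w = 0).erase v := by
          intro w hw
          have hw' := (Finset.mem_filter.1 hw).2
          have := hsm w (by omega)
          simp [this]
        have h4 := Finset.card_le_card hsub
        rw [Finset.card_erase_of_mem (by simp [hv])] at h4
        omega
      · intro w hw
        by_cases hwv : w = v
        · subst hwv
          refine bk_mono ?_ v1
          rintro x ⟨x1, x2⟩
          rw [hself] at x1
          exact ⟨(hsm x x1).1, (hsm x x1).2, x2⟩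
        · have hw' := hw0 w hwv hw
          refine bk_mono ?_ (h1 w hw')
          rintro x ⟨x1, x2⟩
          exact ⟨hlt x w x1 hw' hwv, x2⟩
      · intro w hw
        by_cases hwv : w = v
        · subst hwv
          refine bk_mono ?_ v2
          rintro x ⟨x1, x2⟩
          rw [hself] at x1 x2
          refine ⟨(hsm x x1).1, (hsm x x1).2, ?_⟩
          rcases x2 with x2 | ⟨z, z1, z2⟩
          · exact Or.inl x2
          · exact Or.inr ⟨z, (hgt z z1).2, z2⟩
        · have hw' := hw0 w hwv hw
          exact bk_mono (fun x hx => hup x w hwv hw' hx) (h2 w hw')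
      · intro w hw
        by_cases hwv : w = v
        · subst hwv
          refine bk_mono ?_ v3
          rintro x ⟨x1, y, y1, y2, y3⟩
          rw [hself] at x1 y1
          obtain ⟨e1, e2⟩ := hgt y y1
          exact ⟨(hsm x x1).1, (hsm x x1).2, y, e2, hup x y e1 e2 y2, hup w y e1 e2 y3⟩
        · have hw' := hw0 w hwv hw
          refine bk_mono ?_ (h3 w hw')
          rintro x ⟨x1, y, y1, y2, y3⟩
          have hyv : y ≠ v := by
            rintro rfl
            rw [hself, hother w hwv] at y1
            have := hz w
            omega
          have hy0 : 0 < ρ y := by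
            rw [← hother y hyv]; omega
          exact ⟨hlt x w x1 hw' hwv, y, hlt w y y1 hy0 hyv, hup x y hyv hy0 y2,
            hup w y hyv hy0 y3⟩
  refine main (Fintype.card V) (fun _ => 0) (by simp) (by simp) (by simp) (by simp) (by simp)
    (by simp)

theorem greedy_col {V : Type*} [Fintype V] (ρ : V → ℕ) (E : V → V → Prop) (K : ℕ)
    (hE : ∀ x y, E x y → ρ x < ρ y) (hK : ∀ v, (bk E v).card ≤ K) :
    ∃ c : V → Fin (K + 1), ∀ x y, E x y → c x ≠ c y := by
  have main : ∀ m, ∃ c : V → Fin (K + 1), ∀ x y, ρ y < m → E x y → c x ≠ c y := by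
    intro m
    induction m with
    | zero => exact ⟨fun _ => 0, by simp⟩
    | succ m ih =>
      obtain ⟨c, hc⟩ := ih
      have hfree : ∀ y, ∃ k : Fin (K + 1), ∀ x, E x y → c x ≠ k := by
        intro y
        have hcard : ((bk E y).image c).card < (Finset.univ : Finset (Fin (K + 1))).card := by
          have := Finset.card_image_le (s := bk E y) (f := c)
          have := hK y
          simp
          omega
        obtain ⟨k, -, hk⟩ := Finset.exists_mem_notMem_of_card_lt_card hcard
        refine ⟨k, fun x hx hxk => hk ?_⟩
        exact Finset.mem_image.2 ⟨x, (mem_bk _ _ _).2 hx, hxk⟩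
      choose k hk using hfree
      refine ⟨fun y => if ρ y = m then k y else c y, ?_⟩
      intro x y hy hxy
      have hlt := hE x y hxy
      have hx : ρ x ≠ m := by omega
      simp only [hx, if_false]
      split_ifs with h
      · exact hk y x hxy
      · exact hc x y (by omega) hxy
  obtain ⟨c, hc⟩ := main (Finset.univ.sup ρ + 1)
  refine ⟨c, fun x y => hc x y ?_⟩
  have := Finset.le_sup (f := ρ) (Finset.mem_univ y)
  omega

theorem goodCol_exists {V : Type*} [Fintype V] (G : SimpleGraph V) (ρ : V → ℕ) (K2 K3 : ℕ)
    (hinj : ∀ x y, ρ x = ρ y → x = y) (h2 : ∀ v, (bk (R2 G ρ) v).card ≤ K2)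
    (h3 : ∀ v, (bk (R3 G ρ) v).card ≤ K3) :
    ∃ c : V → Fin (K2 + K3 + K2 * K2 + 1), GoodCol G ρ c := by
  obtain ⟨c, hc⟩ := greedy_col ρ
    (fun x y => R2 G ρ x y ∨ R3 G ρ x y ∨ ∃ w, R2 G ρ x w ∧ R2 G ρ w y) (K2 + K3 + K2 * K2)
    (by
      rintro x y (h | h | ⟨w, h, h'⟩)
      · exact h.1
      · exact h.1
      · exact h.1.trans h'.1)
    (by
      intro v
      have hsub : bk (fun x y => R2 G ρ x y ∨ R3 G ρ x y ∨ ∃ w, R2 G ρ x w ∧ R2 G ρ w y) v ⊆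
          (bk (R2 G ρ) v ∪ bk (R3 G ρ) v) ∪ (bk (R2 G ρ) v).biUnion fun w => bk (R2 G ρ) w := by
        intro x hx
        rw [mem_bk] at hx
        simp only [Finset.mem_union, Finset.mem_biUnion, mem_bk]
        rcases hx with h | h | ⟨w, h, h'⟩
        · exact Or.inl (Or.inl h)
        · exact Or.inl (Or.inr h)
        · exact Or.inr ⟨w, h', h⟩
      refine (Finset.card_le_card hsub).trans ?_
      have e1 := Finset.card_union_le (bk (R2 G ρ) v ∪ bk (R3 G ρ) v)
        ((bk (R2 G ρ) v).biUnion fun w => bk (R2 G ρ) w)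
      have e2 := Finset.card_union_le (bk (R2 G ρ) v) (bk (R3 G ρ) v)
      have e3 := Finset.card_biUnion_le_card_mul (bk (R2 G ρ) v) (fun w => bk (R2 G ρ) w) K2
        (fun w _ => h2 w)
      have e4 := Nat.mul_le_mul_right K2 (h2 v)
      have := h2 v
      have := h3 v
      omega)
  refine ⟨c, ⟨hinj, fun x y h => hc x y (Or.inl h), ?_,
    fun x y z h h' => hc x z (Or.inr (Or.inr ⟨y, h, h'⟩))⟩⟩
  intro x y v hx hy hxy
  rcases lt_trichotomy (ρ x) (ρ y) with h | h | h
  · exact absurd hxy (hc x y (Or.inr (Or.inl ⟨h, v, hy.1, hx, hy⟩)))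
  · exact hinj x y h
  · exact absurd hxy.symm (hc y x (Or.inr (Or.inl ⟨h, v, hx.1, hy, hx⟩)))

theorem part_one (C : GraphClass) (hC : BoundedExpansion C) :
    ∃ c : ℕ, ∀ (n : ℕ), ∀ G ∈ C n, disNumber G ≤ c := by
  obtain ⟨a, ha⟩ := hC 3
  obtain ⟨K1, hK1⟩ : ∃ K1, K1 = 4 * (2 * a * (1 + 3 * 0) + 1) := ⟨_, rfl⟩
  obtain ⟨K2, hK2⟩ : ∃ K2, K2 = 4 * (2 * a * (1 + 3 * (K1 * K1)) + 1) := ⟨_, rfl⟩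
  obtain ⟨K3, hK3⟩ : ∃ K3, K3 = 4 * (2 * a * (1 + 3 * ((K1 + 1) * (K2 * K2))) + 1) := ⟨_, rfl⟩
  obtain ⟨L, hL⟩ := dis_of_goodCol (K2 + K3 + K2 * K2 + 1)
  refine ⟨L, fun n G hG => ?_⟩
  obtain ⟨ρ, hinj, h2, h3⟩ := order_exists G a (fun m G' hm => ha m G' ⟨n, G, hG, hm⟩) K1 K2 K3
    hK1 hK2 hK3
  obtain ⟨c, hc⟩ := goodCol_exists G ρ K2 K3 hinj h2 h3
  exact hL n G ρ c hc

theorem conn_biUnion {V W : Type*} (H : SimpleGraph V) (K : SimpleGraph W) (S : Set V)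
    (B : V → Set W) (hS : (H.induce S).Connected) (hB : ∀ v, (K.induce (B v)).Connected)
    (hadj : ∀ u v, H.Adj u v → ∃ x ∈ B u, ∃ y ∈ B v, K.Adj x y) :
    (K.induce (⋃ v ∈ S, B v)).Connected := by
  have hin : ∀ s : S, B s ⊆ ⋃ v ∈ S, B v := fun s => Set.subset_biUnion_of_mem s.2
  have hloc : ∀ (s : S) (x y : W) (hx : x ∈ B s) (hy : y ∈ B s),
      (K.induce (⋃ v ∈ S, B v)).Reachable ⟨x, hin s hx⟩ ⟨y, hin s hy⟩ := by
    intro s x y hx hy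
    have := (hB s).preconnected ⟨x, hx⟩ ⟨y, hy⟩
    exact this.map (K.induceHomOfLE (hin s)).toHom
  obtain ⟨s0⟩ := hS.nonempty
  obtain ⟨x0⟩ := (hB s0).nonempty
  have hwalk : ∀ (s t : S) (p : (H.induce S).Walk s t) (x y : W) (hx : x ∈ B s) (hy : y ∈ B t),
      (K.induce (⋃ v ∈ S, B v)).Reachable ⟨x, hin s hx⟩ ⟨y, hin t hy⟩ := by
    intro s t p
    induction p with
    | nil => exact hloc _
    | cons h p ih =>
      intro x y hx hy
      obtain ⟨x', hx', y', hy', hxy⟩ := hadj _ _ h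
      refine (hloc _ x x' hx hx').trans (SimpleGraph.Reachable.trans ?_ (ih y' y hy' hy))
      exact SimpleGraph.Adj.reachable (by exact hxy)
  rw [SimpleGraph.connected_iff_exists_forall_reachable]
  refine ⟨⟨x0, hin s0 x0.2⟩, ?_⟩
  rintro ⟨y, hy⟩
  obtain ⟨t, ht, hyt⟩ := Set.mem_iUnion₂.1 hy
  obtain ⟨p⟩ := hS.preconnected s0 ⟨t, ht⟩
  exact hwalk s0 ⟨t, ht⟩ p x0 y x0.2 hyt

theorem minor_trans {U V W : Type*} {G : SimpleGraph U} {H : SimpleGraph V} {K : SimpleGraph W}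
    (h1 : IsMinorOf G H) (h2 : IsMinorOf H K) : IsMinorOf G K := by
  obtain ⟨B, b1, b2, b3, b4⟩ := h1
  obtain ⟨D, d1, d2, d3, d4⟩ := h2
  refine ⟨fun u => ⋃ v ∈ B u, D v, ?_, ?_, ?_, ?_⟩
  · intro u u' huu
    refine Set.disjoint_left.2 fun x hx hx' => ?_
    obtain ⟨v, hv, hxv⟩ := Set.mem_iUnion₂.1 hx
    obtain ⟨v', hv', hxv'⟩ := Set.mem_iUnion₂.1 hx'
    by_cases hvv : v = v'
    · subst hvv
      exact Set.disjoint_left.1 (b1 huu) hv hv'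
    · exact Set.disjoint_left.1 (d1 hvv) hxv hxv'
  · intro u
    obtain ⟨v, hv⟩ := b2 u
    obtain ⟨x, hx⟩ := d2 v
    exact ⟨x, Set.mem_iUnion₂.2 ⟨v, hv, hx⟩⟩
  · intro u
    exact conn_biUnion H K (B u) D (b3 u) d3 d4
  · intro u u' huu
    obtain ⟨x, hx, y, hy, hxy⟩ := b4 u u' huu
    obtain ⟨x', hx', y', hy', hxy'⟩ := d4 x y hxy
    exact ⟨x', Set.mem_iUnion₂.2 ⟨x, hx, hx'⟩, y', Set.mem_iUnion₂.2 ⟨y, hy, hy'⟩, hxy'⟩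

theorem minor_of_shallow {V W : Type*} {d : ℕ} {G : SimpleGraph V} {H : SimpleGraph W}
    (h : IsShallowMinor d G H) : IsMinorOf G H := by
  obtain ⟨B, b1, b2, b3⟩ := h
  refine ⟨B, b1, ?_, ?_, b3⟩
  · intro v
    obtain ⟨c, -⟩ := b2 v
    exact ⟨c, c.2⟩
  · intro v
    obtain ⟨c, hc⟩ := b2 v
    rw [SimpleGraph.connected_iff_exists_forall_reachable]
    exact ⟨c, fun y => (hc y).1⟩

noncomputable def proj {V : Type*} (u v : V) (huv : u ≠ v) (x : V) : {x : V // x ≠ v} :=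
  if h : x = v then ⟨u, huv⟩ else ⟨x, h⟩

theorem proj_val {V : Type*} (u v : V) (huv : u ≠ v) (x : V) :
    (proj u v huv x : V) = if x = v then u else x := by
  unfold proj; split_ifs <;> rfl

def contr {V : Type*} (G : SimpleGraph V) (u v : V) (huv : u ≠ v) :
    SimpleGraph {x : V // x ≠ v} where
  Adj a b := a ≠ b ∧ ∃ x y, proj u v huv x = a ∧ proj u v huv y = b ∧ G.Adj x y
  symm := ⟨fun a b ⟨h, x, y, hx, hy, hxy⟩ => ⟨h.symm, y, x, hy, hx, hxy.symm⟩⟩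
  loopless := ⟨fun a h => h.1 rfl⟩

theorem contr_minor {V : Type*} (G : SimpleGraph V) (u v : V) (huv : u ≠ v) (h : G.Adj u v) :
    IsMinorOf (contr G u v huv) G := by
  refine ⟨fun a => {x | proj u v huv x = a}, ?_, ?_, ?_, ?_⟩
  · intro a b hab
    refine Set.disjoint_left.2 fun x hx hx' => hab ?_
    exact (hx : proj u v huv x = a).symm.trans hx'
  · intro a
    exact ⟨a, Subtype.ext (by rw [proj_val, if_neg a.2])⟩
  · intro a
    by_cases ha : (a : V) = u
    · have : {x | proj u v huv x = a} = {u, v} := by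
        ext x
        simp only [Set.mem_ofPred_eq, Subtype.ext_iff, proj_val, ha]
        simp only [Set.mem_insert_iff, Set.mem_singleton_iff]
        grind
      show (G.induce {x | proj u v huv x = a}).Connected
      rw [this]
      exact SimpleGraph.induce_pair_connected_of_adj h
    · have : {x | proj u v huv x = a} = {(a : V)} := by
        ext x
        have := a.2
        simp only [Set.mem_ofPred_eq, Subtype.ext_iff, proj_val, Set.mem_singleton_iff]
        grind
      show (G.induce {x | proj u v huv x = a}).Connected
      rw [this]
      rw [SimpleGraph.connected_iff_exists_forall_reachable]
      refine ⟨⟨a, rfl⟩, ?_⟩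
      rintro ⟨y, rfl⟩
      exact SimpleGraph.Reachable.refl _
  · rintro a b ⟨-, x, y, hx, hy, hxy⟩
    exact ⟨x, hx, y, hy, hxy⟩

noncomputable def commonNbr {V : Type*} [Fintype V] (G : SimpleGraph V) (u v : V) : Finset V :=
  Finset.univ.filter fun y => G.Adj u y ∧ G.Adj v y

theorem mem_commonNbr {V : Type*} [Fintype V] (G : SimpleGraph V) (u v y : V) :
    y ∈ commonNbr G u v ↔ G.Adj u y ∧ G.Adj v y := by
  simp [commonNbr]

theorem contr_pairs {V : Type*} [Fintype V] (G : SimpleGraph V) (u v : V) (huv : u ≠ v) :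
    (adjPairs G).card ≤ (adjPairs (contr G u v huv)).card + 2 + 2 * (commonNbr G u v).card := by
  set Y : Finset (V × V) := {(v, u), (u, v)} ∪ ((commonNbr G u v).image (fun y => (v, y)) ∪
    (commonNbr G u v).image (fun y => (y, v))) with hY
  have hYc : Y.card ≤ 2 + 2 * (commonNbr G u v).card := by
    have e1 := Finset.card_union_le {(v, u), (u, v)} ((commonNbr G u v).image (fun y => (v, y)) ∪
      (commonNbr G u v).image (fun y => (y, v)))
    have e2 := Finset.card_union_le ((commonNbr G u v).image (fun y => (v, y)))
      ((commonNbr G u v).image (fun y => (y, v)))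
    have e3 := Finset.card_image_le (s := commonNbr G u v) (f := fun y => (v, y))
    have e4 := Finset.card_image_le (s := commonNbr G u v) (f := fun y => (y, v))
    have e5 : ({(v, u), (u, v)} : Finset (V × V)).card ≤ 2 := Finset.card_le_two
    rw [← hY] at e1
    omega
  have hmemY : ∀ x y, (x, y) ∉ Y → ¬ (x = v ∧ y = u) ∧ ¬ (x = u ∧ y = v) ∧
      ¬ (x = v ∧ G.Adj u y ∧ G.Adj v y) ∧ ¬ (y = v ∧ G.Adj u x ∧ G.Adj v x) := by
    intro x y hxy
    refine ⟨?_, ?_, ?_, ?_⟩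
    · rintro ⟨rfl, rfl⟩; exact hxy (by simp [hY])
    · rintro ⟨rfl, rfl⟩; exact hxy (by simp [hY])
    · rintro ⟨rfl, h⟩; exact hxy (by simp [hY, mem_commonNbr, h])
    · rintro ⟨rfl, h⟩; exact hxy (by simp [hY, mem_commonNbr, h])
  have hX : (adjPairs G \ Y).card ≤ (adjPairs (contr G u v huv)).card := by
    refine Finset.card_le_card_of_injOn (fun p => (proj u v huv p.1, proj u v huv p.2)) ?_ ?_
    · rintro ⟨x, y⟩ hp
      have hp := Finset.mem_sdiff.1 (Finset.mem_coe.1 hp)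
      have h1 := (mem_adjPairs _ _).1 hp.1
      have h2 := hmemY x y hp.2
      refine Finset.mem_coe.2 ((mem_adjPairs _ _).2 ⟨?_, x, y, rfl, rfl, h1⟩)
      intro heq
      have heq := congrArg Subtype.val heq
      simp only [proj_val] at heq
      have := h1.ne
      grind
    · rintro ⟨x, y⟩ hp ⟨x', y'⟩ hq heq
      have hp := Finset.mem_sdiff.1 (Finset.mem_coe.1 hp)
      have hq := Finset.mem_sdiff.1 (Finset.mem_coe.1 hq)
      have h1 := (mem_adjPairs _ _).1 hp.1
      have h2 := hmemY x y hp.2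
      have h3 := (mem_adjPairs _ _).1 hq.1
      have h4 := hmemY x' y' hq.2
      simp only [Prod.mk.injEq, Subtype.ext_iff, proj_val] at heq h1 h3
      have h1' := h1.symm
      have h3' := h3.symm
      have := h1.ne
      have := h3.ne
      rw [Prod.mk.injEq]
      grind
  have := Finset.card_le_card_sdiff_add_card (s := adjPairs G) (t := Y)
  omega

theorem cone_minor {V : Type*} (G : SimpleGraph V) (v : V) (t : ℕ)
    (h : IsMinorOf (SimpleGraph.completeGraph (Fin t)) (G.induce (G.neighborSet v))) :
    IsMinorOf (SimpleGraph.completeGraph (Fin (t + 1))) G := by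
  obtain ⟨B, b1, b2, b3, b4⟩ := h
  have hv : ∀ i, v ∉ Subtype.val '' B i := by
    rintro i ⟨x, hx, hxv⟩
    have := x.2
    rw [hxv] at this
    exact G.loopless.irrefl v this
  have hd : ∀ i j, i ≠ j → Disjoint (Subtype.val '' B i) (Subtype.val '' B j) := by
    intro i j hij
    exact (Set.disjoint_image_iff Subtype.val_injective).2 (b1 hij)
  refine ⟨Fin.cons {v} (fun i => Subtype.val '' B i), ?_, ?_, ?_, ?_⟩
  · intro i j hij
    show Disjoint _ _
    induction i using Fin.cases with
    | zero =>
      induction j using Fin.cases with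
      | zero => exact absurd rfl hij
      | succ j => simpa using hv j
    | succ i =>
      induction j using Fin.cases with
      | zero => simpa using hv i
      | succ j =>
        simp only [Fin.cons_succ]
        exact hd i j (fun h => hij (by rw [h]))
  · intro i
    induction i using Fin.cases with
    | zero => simp
    | succ i => simpa using b2 i
  · intro i
    induction i using Fin.cases with
    | zero =>
      rw [Fin.cons_zero, SimpleGraph.connected_iff_exists_forall_reachable]
      refine ⟨⟨v, rfl⟩, ?_⟩
      rintro ⟨y, rfl⟩
      exact SimpleGraph.Reachable.refl _
    | succ i =>
      rw [Fin.cons_succ]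
      have := b3 i
      rw [SimpleGraph.connected_iff_exists_forall_reachable] at this ⊢
      obtain ⟨c, hc⟩ := this
      refine ⟨⟨c.1.1, ⟨c.1, c.2, rfl⟩⟩, ?_⟩
      rintro ⟨y, ⟨y', hy', rfl⟩⟩
      let f : ((G.induce (G.neighborSet v)).induce (B i)) →g (G.induce (Subtype.val '' B i)) :=
        { toFun := fun x => ⟨x.1.1, ⟨x.1, x.2, rfl⟩⟩
          map_rel' := fun h => h }
      exact (hc ⟨y', hy'⟩).map f
  · intro i j hij
    have key : ∀ j, ∃ x ∈ Subtype.val '' B j, G.Adj v x := by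
      intro j
      obtain ⟨x, hx⟩ := b2 j
      exact ⟨x, ⟨x, hx, rfl⟩, x.2⟩
    induction i using Fin.cases with
    | zero =>
      induction j using Fin.cases with
      | zero => exact absurd rfl hij
      | succ j =>
        obtain ⟨x, hx, hxv⟩ := key j
        exact ⟨v, rfl, x, hx, hxv⟩
    | succ i =>
      induction j using Fin.cases with
      | zero =>
        obtain ⟨x, hx, hxv⟩ := key i
        exact ⟨x, hx, v, rfl, hxv.symm⟩
      | succ j =>
        obtain ⟨x, hx, y, hy, hxy⟩ := b4 i j (fun h => hij (by rw [h]))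
        exact ⟨x, ⟨x, hx, rfl⟩, y, ⟨y, hy, rfl⟩, hxy⟩

theorem mader (t : ℕ) : ∀ (V : Type) [Fintype V] [Nonempty V] (G : SimpleGraph V),
    2 ^ (t + 1) * Fintype.card V ≤ (adjPairs G).card →
    IsMinorOf (SimpleGraph.completeGraph (Fin t)) G := by
  induction t with
  | zero =>
    intro V _ _ G _
    exact ⟨fun i => i.elim0, fun i => i.elim0, fun i => i.elim0, fun i => i.elim0,
      fun i => i.elim0⟩
  | succ t ih =>
    have main : ∀ (n : ℕ) (V : Type) [Fintype V] [Nonempty V] (G : SimpleGraph V),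
        Fintype.card V = n → 2 ^ (t + 1 + 1) * Fintype.card V ≤ (adjPairs G).card →
        IsMinorOf (SimpleGraph.completeGraph (Fin (t + 1))) G := by
      intro n
      induction n with
      | zero =>
        intro V _ _ G hn _
        have := Fintype.card_pos (α := V)
        omega
      | succ n ihn =>
        intro V _ _ G hn hG
        by_cases hex : ∃ u v, G.Adj u v ∧ (commonNbr G u v).card + 1 ≤ 2 ^ (t + 1)
        · obtain ⟨u, v, huv, hc⟩ := hex
          refine minor_trans ?_ (contr_minor G u v huv.ne huv)
          have hcard : Fintype.card {x : V // x ≠ v} = n := by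
            rw [Fintype.card_subtype_compl, Fintype.card_subtype_eq]
            omega
          have : Nonempty {x : V // x ≠ v} := ⟨⟨u, huv.ne⟩⟩
          refine ihn _ _ hcard ?_
          have := contr_pairs G u v huv.ne
          rw [hcard]
          rw [hn] at hG
          rw [pow_succ 2 (t + 1)] at hG ⊢
          nlinarith
        · push Not at hex
          have hpos : 0 < (adjPairs G).card := by
            refine lt_of_lt_of_le ?_ hG
            rw [hn]; positivity
          obtain ⟨⟨v, w⟩, hvw⟩ := Finset.card_pos.1 hpos
          have hvw : G.Adj v w := (mem_adjPairs _ _).1 hvw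
          refine cone_minor G v t ?_
          have : Nonempty (G.neighborSet v) := ⟨⟨w, hvw⟩⟩
          refine ih _ _ ?_
          rw [card_adjPairs_eq]
          have hdeg : ∀ x : G.neighborSet v,
              2 ^ (t + 1) ≤ ((G.induce (G.neighborSet v)).neighborFinset x).card := by
            intro x
            have h1 := hex v x x.2
            have h2 : commonNbr G v x ⊆
                ((G.induce (G.neighborSet v)).neighborFinset x).image Subtype.val := by
              intro y hy
              obtain ⟨y1, y2⟩ := (mem_commonNbr _ _ _ _).1 hy
              refine Finset.mem_image.2 ⟨⟨y, y1⟩, ?_, rfl⟩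
              rw [SimpleGraph.mem_neighborFinset]
              exact y2
            have h3 := (Finset.card_le_card h2).trans Finset.card_image_le
            omega
          calc 2 ^ (t + 1) * Fintype.card (G.neighborSet v)
              = ∑ x : G.neighborSet v, 2 ^ (t + 1) := by simp [mul_comm]
            _ ≤ _ := Finset.sum_le_sum fun x _ => hdeg x
    intro V _ _ G h
    exact main _ V G rfl h

theorem planar_boundedExpansion :
    BoundedExpansion (fun n => {G : SimpleGraph (Fin n) | IsPlanar G}) := by
  intro d
  refine ⟨32, ?_⟩
  rintro m G ⟨n, H, hH, hGH⟩
  by_contra hcon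
  rcases Nat.eq_zero_or_pos m with rfl | hm
  · apply hcon
    have he : G.edgeSet = ∅ := by
      rw [Set.eq_empty_iff_forall_notMem]
      intro e
      induction e with
      | _ x y => exact x.elim0
    rw [he]
    simp
  · have : Nonempty (Fin m) := ⟨⟨0, hm⟩⟩
    refine hH.1 (minor_trans (mader 5 (Fin m) G ?_) (minor_of_shallow hGH))
    rw [card_pairs, Fintype.card_fin]
    omega

end Aux

/-- For every class `C` of finite simple graphs of bounded expansion there is
an absolute constant `c` with `dis[G] ≤ c` for all `G ∈ C`; in particular such a constant
exists for the class of all planar graphs. -/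
theorem disNumber_bounded_of_boundedExpansion :
    (∀ C : GraphClass, BoundedExpansion C →
      ∃ c : ℕ, ∀ (n : ℕ), ∀ G ∈ C n, disNumber G ≤ c) ∧
    (∃ c : ℕ, ∀ (n : ℕ) (G : SimpleGraph (Fin n)), IsPlanar G → disNumber G ≤ c) := by
  refine ⟨part_one, ?_⟩
  obtain ⟨c, hc⟩ := part_one _ planar_boundedExpansion
  exact ⟨c, fun n G hG => hc n G hG⟩

end InducedArboricity
end
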